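/- arXiv:0712.3847 — 5 statements merged into one kernel-verified Lean document; each statement's English description precedes it below -/
import Mathlib

section
/- For every ε > 0, lim_{n→∞} (1/n!)·#{π ∈ S_n : |L(π)/(2√n) − 1| < ε} = 1; that is, under the uniform measure on permutations of {1,…,n}, L(π_n)/(2√n) converges to 1 in probability as n → ∞. -/
/-!
The longest increasing subsequence is studied through last-passage percolation on a lattice: each
site of an `N × N` square carries a point independently with probability `x ^ 2`, and `lpp` is the
largest number of points in a chain that strictly increases in both coordinates. With `t = N * x`
large and `x` small, `lpp` is close to `2 * t` (`lattice_bound`).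

This is the probabilistic argument of Aldous–Diaconis and Cator–Groeneboom in its lattice form. Add
points on the bottom and left sides of the square, independent with odds `u` and `v`, and consider
the last-passage time `G` that may also collect points along one of these sides. Its increments
along edges are 0 or 1. If `u * v = x ^ 2`, a single site preserves the product Bernoulli law of its
incoming increments (`Ex_cell`), hence so does the whole square (`Ex_sys`). So `G` is the sum of the
number of bottom points and the number of increments on the right side, both binomial
(`G_ext`), and it concentrates near `N * (u + v)`.

* Upper bound: take `u = v = x`; then `lpp ≤ G ≈ 2 * t`.
* Lower bound: an optimal path for `u = v = x` leaves the boundary somewhere (`G_exit`). If it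
  does so beyond a fraction `δ` of the side, the same path in a process with odds `lam * x` on that
  side and `x / lam` on the other one, coupled to have more points on that side, gains about
  `(lam - 1) * δ * t`. But `G` itself changes only by `(lam + 1 / lam - 2) * t`, which is of second
  order in `lam - 1`: impossible for `lam = 1 + δ / 2` (`exit_alternative`, `arith_main`). Hence
  the path collects about `δ * t` boundary points at most, and `lpp ≥ (2 - 2 * δ) * t`.

All the concentration needed comes from Chebyshev's inequality for sums of independent bits.

To pass to permutations, take `N = n ^ 3` and `t = c * √n` with `c = 1 - δ` or `c = 1 + δ`. Two
points rarely share a row or a column, and the number of points, about `c ^ 2 * n`, is on the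
expected side of `n`. The points are then part of the graph of a permutation (`exists_perm`), and
since the law of the array is invariant under permutations of the columns, their relative order is
uniform (`sum_lis`). Removing or adding points changes the longest increasing subsequence
monotonically, so its law for size `n` is bounded from below by the sparser lattice and from above
by the denser one (`frac_le_lattice`, `frac_le`). The resulting bound on the probability of a
deviation is `O(1 / √n)`.
-/

open scoped BigOperators

/-- Length of the longest (strictly) increasing subsequence of a permutation of `{1,…,n}`. -/
noncomputable def permLIS (n : ℕ) (π : Equiv.Perm (Fin n)) : ℕ :=
  sSup {k : ℕ | ∃ s : Finset (Fin n), s.card = k ∧ StrictMonoOn (fun i => π i) (s : Set (Fin n))}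

namespace Ulam

/-! ### Last-passage percolation with boundary -/

/-- Number of ones among the first `n` bits of `s`. -/
def cnt (s : ℕ → Bool) (n : ℕ) : ℕ := ∑ k ∈ Finset.range n, (s k).toNat

/-- Last-passage time to height `j` and abscissa `i`: the largest number of points collected by an
up-right lattice path from the origin. The points `s` on the bottom boundary are collected by
horizontal steps, the points `w` on the left boundary by vertical steps, and the interior point
in row `j` and column `i`, present when `ω j i` holds, by a diagonal step. The interior points
collected by a path thus strictly increase in both coordinates. -/
def G (s w : ℕ → Bool) (ω : ℕ → ℕ → Bool) : ℕ → ℕ → ℕ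
  | 0, 0 => 0
  | 0, i + 1 => G s w ω 0 i + (s i).toNat
  | j + 1, 0 => G s w ω j 0 + (w j).toNat
  | j + 1, i + 1 =>
      max (max (G s w ω j (i + 1)) (G s w ω (j + 1) i)) (G s w ω j i + (ω j i).toNat)

/-- The empty boundary. -/
def noB : ℕ → Bool := fun _ => false

lemma cnt_zero (s : ℕ → Bool) : cnt s 0 = 0 := rfl

lemma cnt_succ (s : ℕ → Bool) (n : ℕ) : cnt s (n + 1) = cnt s n + (s n).toNat :=
  Finset.sum_range_succ _ _

lemma cnt_mono (s : ℕ → Bool) : Monotone (cnt s) :=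
  monotone_nat_of_le_succ fun n => by rw [cnt_succ]; omega

lemma cnt_noB (n : ℕ) : cnt noB n = 0 := by simp [cnt, noB]

lemma G_zero_left (s w : ℕ → Bool) (ω : ℕ → ℕ → Bool) (i : ℕ) : G s w ω 0 i = cnt s i := by
  induction i with
  | zero => simp [G, cnt]
  | succ i ih => rw [G, ih, cnt_succ]

lemma G_zero_right (s w : ℕ → Bool) (ω : ℕ → ℕ → Bool) (j : ℕ) : G s w ω j 0 = cnt w j := by
  induction j with
  | zero => simp [G, cnt]
  | succ i ih => rw [G, ih, cnt_succ]

lemma G_succ (s w : ℕ → Bool) (ω : ℕ → ℕ → Bool) (j i : ℕ) : G s w ω (j + 1) (i + 1) =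
    max (max (G s w ω j (i + 1)) (G s w ω (j + 1) i)) (G s w ω j i + (ω j i).toNat) := by
  rw [G]

lemma G_transpose (s w : ℕ → Bool) (ω : ℕ → ℕ → Bool) (j i : ℕ) :
    G w s (fun a b => ω b a) i j = G s w ω j i := by
  induction j generalizing i with
  | zero => rw [G_zero_left, G_zero_right]
  | succ j ihj =>
    induction i with
    | zero => rw [G_zero_left, G_zero_right]
    | succ i ihi => rw [G_succ, G_succ, ihj, ihj, ihi, max_comm (G s w ω (j + 1) i)]

lemma G_le_right (s w : ℕ → Bool) (ω : ℕ → ℕ → Bool) (j i : ℕ) :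
    G s w ω j i ≤ G s w ω j (i + 1) := by
  cases j with
  | zero => rw [G_zero_left, G_zero_left, cnt_succ]; omega
  | succ j => rw [G_succ]; omega

lemma G_le_up (s w : ℕ → Bool) (ω : ℕ → ℕ → Bool) (j i : ℕ) :
    G s w ω j i ≤ G s w ω (j + 1) i := by
  cases i with
  | zero => rw [G_zero_right, G_zero_right, cnt_succ]; omega
  | succ j => rw [G_succ]; omega

lemma G_mono {s w s' w' : ℕ → Bool} {ω ω' : ℕ → ℕ → Bool} (hs : ∀ i, s i ≤ s' i)
    (hw : ∀ i, w i ≤ w' i) (hω : ∀ j i, ω j i ≤ ω' j i) (j i : ℕ) :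
    G s w ω j i ≤ G s' w' ω' j i := by
  induction j generalizing i with
  | zero =>
    rw [G_zero_left, G_zero_left]
    exact Finset.sum_le_sum fun k _ => Bool.toNat_le_toNat (hs k)
  | succ j ihj =>
    induction i with
    | zero =>
      rw [G_zero_right, G_zero_right]
      exact Finset.sum_le_sum fun k _ => Bool.toNat_le_toNat (hw k)
    | succ i ihi =>
      rw [G_succ, G_succ]
      exact max_le_max (max_le_max (ihj _) ihi)
        (add_le_add (ihj _) (Bool.toNat_le_toNat (hω _ _)))

/-! ### The exit point -/

/-- Removes the points in columns `< z`. -/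
def colcut (z : ℕ) (ω : ℕ → ℕ → Bool) : ℕ → ℕ → Bool := fun j i => ω j i && decide (z ≤ i)

/-- Removes the points in rows `< z`. -/
def rowcut (z : ℕ) (ω : ℕ → ℕ → Bool) : ℕ → ℕ → Bool := fun j i => ω j i && decide (z ≤ j)

lemma G_colcut_le (z : ℕ) (ω : ℕ → ℕ → Bool) (j i : ℕ) :
    G noB noB (colcut z ω) j i ≤ G noB noB ω j i :=
  G_mono (fun _ => le_rfl) (fun _ => le_rfl)
    (fun j i => by unfold colcut; cases ω j i <;> simp) j i

lemma G_rowcut (z : ℕ) (ω : ℕ → ℕ → Bool) (j i : ℕ) :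
    G noB noB (rowcut z ω) j i = G noB noB (colcut z (fun a b => ω b a)) i j :=
  (G_transpose _ _ _ _ _).symm

lemma G_rowcut_le (z : ℕ) (ω : ℕ → ℕ → Bool) (j i : ℕ) :
    G noB noB (rowcut z ω) j i ≤ G noB noB ω j i := by
  rw [G_rowcut, ← G_transpose noB noB ω]
  exact G_colcut_le _ _ _ _

lemma G_colcut_eq_zero (z : ℕ) (ω : ℕ → ℕ → Bool) (j i : ℕ) (h : i ≤ z) :
    G noB noB (colcut z ω) j i = 0 := by
  induction j generalizing i with
  | zero => rw [G_zero_left, cnt_noB]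
  | succ j ihj =>
    induction i with
    | zero => rw [G_zero_right, cnt_noB]
    | succ i ihi =>
      rw [G_succ, ihj _ h, ihi (by omega), ihj _ (by omega)]
      have : ¬ z ≤ i := by omega
      simp [colcut, this]

/-- Leaving the bottom boundary at `z` is one admissible strategy. -/
lemma le_G_of_source (s w : ℕ → Bool) (ω : ℕ → ℕ → Bool) (z j i : ℕ) :
    cnt s (min z i) + G noB noB (colcut z ω) j i ≤ G s w ω j i := by
  induction j generalizing i with
  | zero =>
    rw [G_zero_left, G_zero_left, cnt_noB]
    exact cnt_mono s (min_le_right _ _)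
  | succ j ihj =>
    induction i with
    | zero => rw [G_zero_right, cnt_noB]; simp [cnt]
    | succ i ihi =>
      by_cases h : i + 1 ≤ z
      · rw [G_colcut_eq_zero _ _ _ _ h, add_zero]
        have := ihj (i + 1)
        have := G_le_up s w ω j (i + 1)
        omega
      · have h1 := ihj (i + 1)
        have h2 := ihj i
        rw [min_eq_left (by omega)] at h1 h2 ihi ⊢
        have hc : (colcut z ω j i).toNat ≤ (ω j i).toNat := by
          unfold colcut; cases ω j i <;> simp [Bool.toNat_le]
        rw [G_succ, G_succ s]
        omega

/-- Leaving the left boundary at `z` is one admissible strategy. -/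
lemma le_G_of_sink (s w : ℕ → Bool) (ω : ℕ → ℕ → Bool) (z j i : ℕ) :
    cnt w (min z j) + G noB noB (rowcut z ω) j i ≤ G s w ω j i := by
  rw [← G_transpose s w ω, G_rowcut]
  exact le_G_of_source _ _ _ _ _ _

/-- An optimal path leaves the boundary somewhere, on the bottom or on the left side. -/
lemma G_exit (s w : ℕ → Bool) (ω : ℕ → ℕ → Bool) (j i : ℕ) :
    (∃ z ≤ i, G s w ω j i ≤ cnt s z + G noB noB (colcut z ω) j i) ∨
    (∃ z ≤ j, G s w ω j i ≤ cnt w z + G noB noB (rowcut z ω) j i) := by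
  induction j generalizing i with
  | zero => exact Or.inl ⟨i, le_rfl, by rw [G_zero_left]; omega⟩
  | succ j ihj =>
    induction i with
    | zero => exact Or.inr ⟨j + 1, le_rfl, by rw [G_zero_right]; omega⟩
    | succ i ihi =>
      rcases le_total (G s w ω j i + (ω j i).toNat)
        (max (G s w ω j (i + 1)) (G s w ω (j + 1) i)) with h | h
      · rcases le_total (G s w ω (j + 1) i) (G s w ω j (i + 1)) with h' | h'
        · have e : G s w ω (j + 1) (i + 1) = G s w ω j (i + 1) := by rw [G_succ]; omega
          rcases ihj (i + 1) with ⟨z, hz, h3⟩ | ⟨z, hz, h3⟩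
          · have := G_le_up noB noB (colcut z ω) j (i + 1)
            exact Or.inl ⟨z, hz, by omega⟩
          · have := G_le_up noB noB (rowcut z ω) j (i + 1)
            exact Or.inr ⟨z, by omega, by omega⟩
        · have e : G s w ω (j + 1) (i + 1) = G s w ω (j + 1) i := by rw [G_succ]; omega
          rcases ihi with ⟨z, hz, h3⟩ | ⟨z, hz, h3⟩
          · have := G_le_right noB noB (colcut z ω) (j + 1) i
            exact Or.inl ⟨z, by omega, by omega⟩
          · have := G_le_right noB noB (rowcut z ω) (j + 1) i
            exact Or.inr ⟨z, by omega, by omega⟩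
      · have e : G s w ω (j + 1) (i + 1) = G s w ω j i + (ω j i).toNat := by
          rw [G_succ]; omega
        rcases ihj i with ⟨z, hz, h3⟩ | ⟨z, hz, h3⟩
        · have e2 : colcut z ω j i = ω j i := by simp [colcut, hz]
          have := G_succ noB noB (colcut z ω) j i
          rw [e2] at this
          exact Or.inl ⟨z, by omega, by omega⟩
        · have e2 : rowcut z ω j i = ω j i := by simp [rowcut, hz]
          have := G_succ noB noB (rowcut z ω) j i
          rw [e2] at this
          exact Or.inr ⟨z, by omega, by omega⟩

/-- The surplus of a denser boundary over the first `z` sites is at least its surplus over the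
first `K`. -/
lemma cnt_sub_le {s s' : ℕ → Bool} (h : ∀ i, s i ≤ s' i) {K z : ℕ} (hz : K ≤ z) :
    cnt s z + cnt s' K ≤ cnt s' z + cnt s K := by
  induction z, hz using Nat.le_induction with
  | base => omega
  | succ z _ ih =>
    rw [cnt_succ, cnt_succ]
    have := Bool.toNat_le_toNat (h z)
    omega

/-- The coupling argument locating the exit point, for three processes with the same interior
points. The optimal path of the first process either leaves the boundary before `K`, in which case
the boundary contributes at most the first `K` boundary points; or it leaves one side of the
boundary beyond `K`, and then the same path is admissible for a process that is denser on that
side, where it collects all the extra points of the first `K` sites. -/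
lemma exit_alternative {s₁ s₂ w₁ w₃ : ℕ → Bool} (s₃ w₂ : ℕ → Bool) (hs : ∀ i, s₁ i ≤ s₂ i)
    (hw : ∀ i, w₁ i ≤ w₃ i) (ω : ℕ → ℕ → Bool) (K N : ℕ) :
    G s₁ w₁ ω N N ≤ cnt s₁ K + G noB noB ω N N ∨
    G s₁ w₁ ω N N ≤ cnt w₁ K + G noB noB ω N N ∨
    G s₁ w₁ ω N N + cnt s₂ K ≤ G s₂ w₂ ω N N + cnt s₁ K ∨
    G s₁ w₁ ω N N + cnt w₃ K ≤ G s₃ w₃ ω N N + cnt w₁ K := by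
  rcases G_exit s₁ w₁ ω N N with ⟨z, hz, h⟩ | ⟨z, hz, h⟩
  · have h1 := G_colcut_le z ω N N
    rcases le_total z K with hK | hK
    · have := cnt_mono s₁ hK
      left; omega
    · have h2 := le_G_of_source s₂ w₂ ω z N N
      rw [min_eq_left hz] at h2
      have := cnt_sub_le hs hK
      right; right; left; omega
  · have h1 := G_rowcut_le z ω N N
    rcases le_total z K with hK | hK
    · have := cnt_mono w₁ hK
      right; left; omega
    · have h2 := le_G_of_sink s₃ w₃ ω z N N
      rw [min_eq_left hz] at h2
      have := cnt_sub_le hw hK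
      right; right; right; omega

lemma G_noB_le (s w : ℕ → Bool) (ω : ℕ → ℕ → Bool) (j i : ℕ) :
    G noB noB ω j i ≤ G s w ω j i :=
  G_mono (fun _ => Bool.false_le _) (fun _ => Bool.false_le _) (fun _ _ => le_rfl) j i

/-! ### Chains of points -/

/-- The size of a strictly increasing chain of points is at most the last-passage time. -/
lemma card_le_G (s w : ℕ → Bool) (ω : ℕ → ℕ → Bool) (f : ℕ → ℕ) (j i : ℕ) (T : Finset ℕ)
    (hf : StrictMonoOn f T) (hT : ∀ t ∈ T, t < j ∧ f t < i ∧ ω t (f t) = true) :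
    T.card ≤ G s w ω j i := by
  induction j generalizing i T with
  | zero =>
    have : T = ∅ := Finset.eq_empty_of_forall_notMem fun t ht => by have := hT t ht; omega
    simp [this]
  | succ j ihj =>
    induction i with
    | zero =>
      have : T = ∅ := Finset.eq_empty_of_forall_notMem fun t ht => by have := hT t ht; omega
      simp [this]
    | succ i ihi =>
      by_cases hj : j ∈ T
      · by_cases hi : f j = i
        · have hc : (T.erase j).card ≤ G s w ω j i := by
            refine ihj i _ (hf.mono (by simp)) fun t ht => ?_
            obtain ⟨h1, h2⟩ := Finset.mem_erase.1 ht
            have h3 := hT t h2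
            have h4 : f t < f j := hf h2 hj (by omega)
            exact ⟨by omega, by omega, h3.2.2⟩
          have hω := (hT j hj).2.2
          rw [hi] at hω
          rw [Finset.card_erase_of_mem hj] at hc
          rw [G_succ, hω]
          simp only [Bool.toNat_true]
          omega
        · refine (ihi fun t ht => ?_).trans (G_le_right _ _ _ _ _)
          have h3 := hT t ht
          have h5 := hT j hj
          have h4 : f t ≤ f j := (hf.le_iff_le ht hj).2 (by omega)
          exact ⟨by omega, by omega, h3.2.2⟩
      · refine (ihj (i + 1) T hf fun t ht => ?_).trans (G_le_up _ _ _ _ _)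
        have h3 := hT t ht
        have : t ≠ j := fun e => hj (e ▸ ht)
        exact ⟨by omega, h3.2⟩

/-- If each row has at most one point, the last-passage time is attained by a chain. -/
lemma exists_card_eq_G (ω : ℕ → ℕ → Bool) (f : ℕ → ℕ) (hω : ∀ j i, ω j i = true → f j = i)
    (j i : ℕ) : ∃ T : Finset ℕ, StrictMonoOn f T ∧
      (∀ t ∈ T, t < j ∧ f t < i ∧ ω t (f t) = true) ∧ T.card = G noB noB ω j i := by
  induction j generalizing i with
  | zero => exact ⟨∅, by simp [StrictMonoOn], by simp, by simp [G_zero_left, cnt_noB]⟩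
  | succ j ihj =>
    induction i with
    | zero => exact ⟨∅, by simp [StrictMonoOn], by simp, by simp [G_zero_right, cnt_noB]⟩
    | succ i ihi =>
      have hup : G noB noB ω (j + 1) (i + 1) = G noB noB ω j (i + 1) ∨
          G noB noB ω (j + 1) (i + 1) = G noB noB ω (j + 1) i ∨
          (G noB noB ω (j + 1) (i + 1) = G noB noB ω j i + 1 ∧ ω j i = true) := by
        have := G_succ noB noB ω j i
        have := G_le_up noB noB ω j i
        have := G_le_right noB noB ω (j + 1) i
        cases h : ω j i <;> simp [h] at * <;> omega
      rcases hup with h | h | ⟨h, h'⟩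
      · obtain ⟨T, h1, h2, h3⟩ := ihj (i + 1)
        exact ⟨T, h1, fun t ht => ⟨by have := h2 t ht; omega, (h2 t ht).2⟩, by omega⟩
      · obtain ⟨T, h1, h2, h3⟩ := ihi
        exact ⟨T, h1, fun t ht => ⟨(h2 t ht).1, by have := h2 t ht; omega, (h2 t ht).2.2⟩,
          by omega⟩
      · obtain ⟨T, h1, h2, h3⟩ := ihj i
        have hfj := hω j i h'
        have hj : j ∉ T := fun hj => by have := h2 j hj; omega
        refine ⟨insert j T, ?_, ?_, by rw [Finset.card_insert_of_notMem hj]; omega⟩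
        · intro a ha b hb hab
          rw [Finset.mem_coe, Finset.mem_insert] at ha hb
          rcases ha with rfl | ha <;> rcases hb with rfl | hb
          · omega
          · have := h2 b hb; omega
          · have := h2 a ha; omega
          · exact h1 ha hb hab
        · intro t ht
          rcases Finset.mem_insert.1 ht with rfl | ht
          · exact ⟨by omega, by omega, by rw [hfj]; exact h'⟩
          · have := h2 t ht
            exact ⟨by omega, by omega, this.2.2⟩

end Ulam

namespace Ulam

/-! ### Finite weighted expectations -/

section Expectation

variable {α β γ : Type*} [Fintype α] [Fintype β] [Fintype γ]

/-- Expectation of `f` with respect to the weights `μ`. -/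
def Ex (μ : α → ℝ) (f : α → ℝ) : ℝ := ∑ x, μ x * f x

/-- The weights `μ` are nonnegative and sum to one. -/
structure IsW (μ : α → ℝ) : Prop where
  nonneg : ∀ x, 0 ≤ μ x
  sum_one : ∑ x, μ x = 1

/-- Product weights of `n` independent copies. -/
def pw (μ : α → ℝ) (n : ℕ) : (Fin n → α) → ℝ := fun v => ∏ i, μ (v i)

lemma Ex_const {μ : α → ℝ} (h : IsW μ) (c : ℝ) : Ex μ (fun _ => c) = c := by
  rw [Ex, ← Finset.sum_mul, h.sum_one, one_mul]

lemma Ex_add (μ : α → ℝ) (f g : α → ℝ) : Ex μ (fun x => f x + g x) = Ex μ f + Ex μ g := by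
  simp [Ex, mul_add, Finset.sum_add_distrib]

lemma Ex_sum {ι : Type*} (μ : α → ℝ) (s : Finset ι) (f : ι → α → ℝ) :
    Ex μ (fun x => ∑ i ∈ s, f i x) = ∑ i ∈ s, Ex μ (f i) := by
  simp only [Ex, Finset.mul_sum]
  exact Finset.sum_comm

lemma Ex_mul_left (μ : α → ℝ) (c : ℝ) (f : α → ℝ) :
    Ex μ (fun x => c * f x) = c * Ex μ f := by
  simp only [Ex, Finset.mul_sum]
  exact Finset.sum_congr rfl fun x _ => by ring

lemma Ex_mono {μ : α → ℝ} (h : IsW μ) {f g : α → ℝ} (hfg : ∀ x, f x ≤ g x) :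
    Ex μ f ≤ Ex μ g :=
  Finset.sum_le_sum fun x _ => mul_le_mul_of_nonneg_left (hfg x) (h.nonneg x)

lemma Ex_comm (μ : α → ℝ) (ν : β → ℝ) (f : α → β → ℝ) :
    Ex μ (fun x => Ex ν (f x)) = Ex ν (fun y => Ex μ (fun x => f x y)) := by
  simp only [Ex, Finset.mul_sum]
  rw [Finset.sum_comm]
  exact Finset.sum_congr rfl fun x _ => Finset.sum_congr rfl fun y _ => by ring

lemma Ex_pw_zero (μ : α → ℝ) (f : (Fin 0 → α) → ℝ) : Ex (pw μ 0) f = f Fin.elim0 := by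
  rw [Ex, Fintype.sum_unique]
  simp only [pw, Finset.univ_eq_empty, Finset.prod_empty, one_mul]
  exact congrArg f (Subsingleton.elim _ _)

lemma Ex_pw_succ (μ : α → ℝ) (n : ℕ) (f : (Fin (n + 1) → α) → ℝ) :
    Ex (pw μ (n + 1)) f = Ex μ (fun x => Ex (pw μ n) fun v => f (Fin.cons x v)) := by
  simp only [Ex, Finset.mul_sum]
  rw [← Fintype.sum_prod_type', ← (Fin.consEquiv fun _ => α).sum_comp]
  refine Finset.sum_congr rfl fun x _ => ?_
  simp [pw, Fin.consEquiv, Fin.prod_univ_succ, mul_assoc]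

lemma isW_pw {μ : α → ℝ} (h : IsW μ) (n : ℕ) : IsW (pw μ n) := by
  refine ⟨fun v => Finset.prod_nonneg fun i _ => h.nonneg _, ?_⟩
  have : ∀ n, Ex (pw μ n) (fun _ => 1) = 1 := by
    intro n
    induction n with
    | zero => rw [Ex_pw_zero]
    | succ n ih => rw [Ex_pw_succ]; simp only [ih]; exact Ex_const h 1
  simpa [Ex] using this n

lemma Ex_pw_map {μ : α → ℝ} {ν : β → ℝ} (φ : α → β)
    (h : ∀ f : β → ℝ, Ex μ (fun x => f (φ x)) = Ex ν f) (n : ℕ) (F : (Fin n → β) → ℝ) :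
    Ex (pw μ n) (fun v => F (fun i => φ (v i))) = Ex (pw ν n) F := by
  induction n with
  | zero => rw [Ex_pw_zero, Ex_pw_zero]; exact congrArg F (Subsingleton.elim _ _)
  | succ n ih =>
    rw [Ex_pw_succ, Ex_pw_succ, ← h]
    congr 1
    funext x
    rw [← ih]
    congr 1
    funext v
    congr 1
    funext i
    refine Fin.cases ?_ (fun i => ?_) i <;> simp

/-- Mean and variance of a sum of independent terms. -/
lemma Ex_pw_sum {μ : α → ℝ} (hμ : IsW μ) (n : ℕ) (g : Fin n → α → ℝ) (m V : Fin n → ℝ)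
    (hm : ∀ i, Ex μ (g i) = m i) (hV : ∀ i, Ex μ (fun x => (g i x - m i) ^ 2) = V i) :
    Ex (pw μ n) (fun v => ∑ i, g i (v i)) = ∑ i, m i ∧
    Ex (pw μ n) (fun v => (∑ i, g i (v i) - ∑ i, m i) ^ 2) = ∑ i, V i := by
  induction n with
  | zero => simp [Ex_pw_zero]
  | succ n ih =>
    obtain ⟨ih1, ih2⟩ := ih (fun i => g i.succ) (fun i => m i.succ) (fun i => V i.succ)
      (fun i => hm _) (fun i => hV _)
    have hw := isW_pw hμ n
    constructor
    · rw [Ex_pw_succ]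
      simp only [Fin.sum_univ_succ, Fin.cons_zero, Fin.cons_succ, Ex_add, ih1, Ex_const hw, hm,
        Ex_const hμ]
    · rw [Ex_pw_succ]
      set R := ∑ i : Fin n, m i.succ with hR
      have e : ∀ x (v : Fin n → α), (∑ i, g i ((Fin.cons x v : Fin (n + 1) → α) i)
          - ∑ i, m i) ^ 2 = (g 0 x - m 0) ^ 2 +
            ((2 * (g 0 x - m 0)) * (∑ i, g (Fin.succ i) (v i)) +
            ((2 * (g 0 x - m 0)) * (-R) + (∑ i, g (Fin.succ i) (v i) - R) ^ 2)) := by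
        intro x v
        simp only [Fin.sum_univ_succ, Fin.cons_zero, Fin.cons_succ, hR]
        ring
      simp only [e, Ex_add, Ex_mul_left, Ex_const hw, ih1, ih2, hV, Ex_const hμ]
      have e2 : ∀ c : ℝ, Ex μ (fun x => 2 * (g 0 x - m 0) * c) = 0 := by
        intro c
        have : ∀ x, 2 * (g 0 x - m 0) * c = (2 * c) * g 0 x + (2 * c) * (-(m 0)) :=
          fun x => by ring
        simp only [this, Ex_add, Ex_mul_left, hm, Ex_const hμ]
        ring
      rw [e2, e2, Fin.sum_univ_succ]
      ring

end Expectation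

/-- Bernoulli weights with success probability `a`. -/
def ber (a : ℝ) : Bool → ℝ := fun b => if b then a else 1 - a

lemma Ex_ber (a : ℝ) (f : Bool → ℝ) : Ex (ber a) f = a * f true + (1 - a) * f false := by
  simp [Ex, ber]

lemma isW_ber {a : ℝ} (h0 : 0 ≤ a) (h1 : a ≤ 1) : IsW (ber a) := by
  refine ⟨fun b => ?_, by simp [ber]⟩
  cases b <;> simp [ber] <;> linarith

/-- Bit value of a Boolean as a real number. -/
def bv (b : Bool) : ℝ := (b.toNat : ℝ)

lemma Ex_ber_bv (a : ℝ) : Ex (ber a) bv = a ∧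
    Ex (ber a) (fun b => (bv b - a) ^ 2) = a * (1 - a) := by
  constructor
  · simp [Ex_ber, bv]
  · simp [Ex_ber, bv]; ring

lemma Ex_ber_sum {a : ℝ} (h0 : 0 ≤ a) (h1 : a ≤ 1) (n : ℕ) :
    Ex (pw (ber a) n) (fun v => ∑ i, bv (v i)) = n * a ∧
    Ex (pw (ber a) n) (fun v => (∑ i, bv (v i) - n * a) ^ 2) = n * (a * (1 - a)) := by
  have := Ex_pw_sum (isW_ber h0 h1) n (fun _ => bv) (fun _ => a) (fun _ => a * (1 - a))
    (fun _ => (Ex_ber_bv a).1) (fun _ => (Ex_ber_bv a).2)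
  simpa using this

/-! ### Stationarity -/

section Run

variable {A B C : Type*}

/-- Feeds the noise `c` and the inputs `b` one at a time through `f`, carrying a state in `A`;
returns the final state and the outputs. -/
def run (f : A → B → C → A × B) : (n : ℕ) → A → (Fin n → B) → (Fin n → C) → A × (Fin n → B)
  | 0, a, b, _ => (a, b)
  | n + 1, a, b, c =>
      ((run f n (f a (b 0) (c 0)).1 (Fin.tail b) (Fin.tail c)).1,
        Fin.cons (f a (b 0) (c 0)).2 (run f n (f a (b 0) (c 0)).1 (Fin.tail b) (Fin.tail c)).2)

/-- A sequence of states and outputs obeying the one-step recursion is the one computed by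
`run`. -/
lemma run_eq (f : A → B → C → A × B) (n : ℕ) (st : ℕ → A) (b o : ℕ → B) (c : ℕ → C)
    (h : ∀ k < n, f (st k) (b k) (c k) = (st (k + 1), o k)) :
    run f n (st 0) (fun i => b i) (fun i => c i) =
      (st n, fun i : Fin n => o i) := by
  induction n generalizing st b o c with
  | zero => exact Prod.ext rfl (Subsingleton.elim _ _)
  | succ n ih =>
    have h0 := h 0 (by omega)
    have := ih (fun k => st (k + 1)) (fun k => b (k + 1)) (fun k => o (k + 1))
      (fun k => c (k + 1)) (fun k hk => h (k + 1) (by omega))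
    simp only [run, Fin.val_zero, h0]
    have e1 : (Fin.tail fun i : Fin (n + 1) => b i) = fun i : Fin n => b (i + 1) := by
      funext i; simp [Fin.tail]
    have e2 : (Fin.tail fun i : Fin (n + 1) => c i) = fun i : Fin n => c (i + 1) := by
      funext i; simp [Fin.tail]
    rw [e1, e2]
    simp only [zero_add] at this ⊢
    rw [this]
    simp only [Prod.mk.injEq, true_and]
    funext i
    refine Fin.cases ?_ (fun i => ?_) i <;> simp

variable [Fintype A] [Fintype B] [Fintype C]

/-- If one step of `f` preserves a product law, so do `n` steps. -/
lemma Ex_run (f : A → B → C → A × B) (μ : A → ℝ) (ν : B → ℝ) (ρ : C → ℝ)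
    (h : ∀ F : A × B → ℝ, Ex μ (fun a => Ex ν fun b => Ex ρ fun c => F (f a b c)) =
      Ex μ (fun a => Ex ν fun b => F (a, b))) (n : ℕ) (F : A × (Fin n → B) → ℝ) :
    Ex μ (fun a => Ex (pw ν n) fun b => Ex (pw ρ n) fun c => F (run f n a b c)) =
      Ex μ (fun a => Ex (pw ν n) fun b => F (a, b)) := by
  induction n with
  | zero => simp [Ex_pw_zero, run]
  | succ n ih =>
    simp only [Ex_pw_succ, run, Fin.cons_zero, Fin.tail_cons]
    have hl : ∀ a b, Ex (pw ν n) (fun bs => Ex ρ fun c => Ex (pw ρ n) fun cs =>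
        F ((run f n (f a b c).1 bs cs).1, Fin.cons (f a b c).2 (run f n (f a b c).1 bs cs).2)) =
        Ex ρ fun c => Ex (pw ν n) (fun bs => Ex (pw ρ n) fun cs =>
        F ((run f n (f a b c).1 bs cs).1,
          Fin.cons (f a b c).2 (run f n (f a b c).1 bs cs).2)) :=
      fun a b => Ex_comm _ _ _
    simp only [hl]
    rw [h (fun p => Ex (pw ν n) (fun bs => Ex (pw ρ n) fun cs =>
        F ((run f n p.1 bs cs).1, Fin.cons p.2 (run f n p.1 bs cs).2))),
      Ex_comm μ ν, Ex_comm μ ν]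
    congr 1
    funext b
    exact ih (fun q => F (q.1, Fin.cons b q.2))

end Run

/-- One lattice site in terms of the 0-1 increments of the last-passage time: `v` and `h` are the
increments on its left and bottom edges, `o` its occupation; the result consists of the increments
on its right and top edges. -/
def cell (v h o : Bool) : Bool × Bool := (!h && (v || o), !v && (h || o))

/-- The Burke property of a site: if the odds of `a` and `b` have product `p`, then independent
Bernoulli increments on the left and bottom edges yield independent Bernoulli increments, with the
same parameters, on the right and top edges. The condition expresses that the incoming pairs
`(false, false)` with a point and `(true, true)`, which are exchanged by the site, are equally
likely. -/
lemma Ex_cell {a b p : ℝ} (hab : a * b = p * (1 - a) * (1 - b)) (F : Bool × Bool → ℝ) :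
    Ex (ber b) (fun v => Ex (ber a) fun h => Ex (ber p) fun o => F (cell v h o)) =
      Ex (ber b) (fun v => Ex (ber a) fun h => F (v, h)) := by
  simp only [Ex_ber, cell, Bool.not_true, Bool.not_false, Bool.false_and, Bool.true_and,
    Bool.or_true, Bool.or_false]
  linear_combination (F (false, false) - F (true, true)) * hab

/-- One row of sites, seen as a map on the horizontal increments below it. -/
def rowMap (M : ℕ) (h : Fin M → Bool) (v : Bool) (r : Fin M → Bool) : (Fin M → Bool) × Bool :=
  (run cell M v h r).swap

lemma Ex_rowMap {a b p : ℝ} (hab : a * b = p * (1 - a) * (1 - b)) (M : ℕ)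
    (F : (Fin M → Bool) × Bool → ℝ) :
    Ex (pw (ber a) M) (fun h => Ex (ber b) fun v => Ex (pw (ber p) M) fun r =>
      F (rowMap M h v r)) = Ex (pw (ber a) M) (fun h => Ex (ber b) fun v => F (h, v)) := by
  rw [Ex_comm, Ex_comm (pw (ber a) M)]
  exact Ex_run cell (ber b) (ber a) (ber p) (Ex_cell hab) M (fun q => F q.swap)

/-- The Burke property of a rectangle: the increments along its top and right sides have the
same law as those along its bottom and left sides. -/
lemma Ex_sys {a b p : ℝ} (hab : a * b = p * (1 - a) * (1 - b)) (M N : ℕ)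
    (F : (Fin M → Bool) × (Fin N → Bool) → ℝ) :
    Ex (pw (ber a) M) (fun h => Ex (pw (ber b) N) fun w => Ex (pw (pw (ber p) M) N) fun ω =>
      F (run (rowMap M) N h w ω)) =
    Ex (pw (ber a) M) (fun h => Ex (pw (ber b) N) fun w => F (h, w)) :=
  Ex_run (rowMap M) _ _ _ (Ex_rowMap hab M) N F

/-- Extension of a finite sequence by `false`. -/
def ext {n : ℕ} (v : Fin n → Bool) : ℕ → Bool := fun i => if h : i < n then v ⟨i, h⟩ else false

/-- Extension of a finite array by `false`. -/
def ext2 {N M : ℕ} (ω : Fin N → Fin M → Bool) : ℕ → ℕ → Bool :=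
  fun j => if h : j < N then ext (ω ⟨j, h⟩) else fun _ => false

lemma ext_val {n : ℕ} (v : Fin n → Bool) (i : Fin n) : ext v i = v i := by simp [ext]

lemma ext2_val {N M : ℕ} (ω : Fin N → Fin M → Bool) (j : Fin N) : ext2 ω j = ext (ω j) := by
  simp [ext2]

lemma cnt_ext {n : ℕ} (v : Fin n → Bool) : (cnt (ext v) n : ℝ) = ∑ i, bv (v i) := by
  rw [cnt, Finset.sum_range]
  simp [ext_val, bv]

/-- The increments of the last-passage time along lattice edges are at most one. -/
lemma G_incr_le (s w : ℕ → Bool) (ω : ℕ → ℕ → Bool) (j i : ℕ) :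
    G s w ω j (i + 1) ≤ G s w ω j i + 1 ∧ G s w ω (j + 1) i ≤ G s w ω j i + 1 := by
  induction j generalizing i with
  | zero =>
    have h0 : ∀ i, G s w ω 0 (i + 1) ≤ G s w ω 0 i + 1 := fun i => by
      rw [G_zero_left, G_zero_left, cnt_succ]; have := Bool.toNat_le (s i); omega
    refine ⟨h0 i, ?_⟩
    induction i with
    | zero => rw [G_zero_right, G_zero_right, cnt_succ]; have := Bool.toNat_le (w 0); omega
    | succ i ih =>
      have := G_succ s w ω 0 i
      have := h0 i
      have := G_le_right s w ω 0 i
      have := Bool.toNat_le (ω 0 i)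
      omega
  | succ j ihj =>
    have h0 : ∀ i, G s w ω (j + 1) (i + 1) ≤ G s w ω (j + 1) i + 1 := fun i => by
      have := G_succ s w ω j i
      have := (ihj i).1
      have := G_le_up s w ω j i
      have := Bool.toNat_le (ω j i)
      omega
    refine ⟨h0 i, ?_⟩
    induction i with
    | zero =>
      rw [G_zero_right, G_zero_right, cnt_succ]; have := Bool.toNat_le (w (j + 1)); omega
    | succ i ih =>
      have := G_succ s w ω (j + 1) i
      have := h0 i
      have := G_le_right s w ω (j + 1) i
      have := Bool.toNat_le (ω (j + 1) i)
      omega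

/-- Increment of the last-passage time from abscissa `i` to `i + 1` at height `j`. -/
def hInc (s w : ℕ → Bool) (ω : ℕ → ℕ → Bool) (j i : ℕ) : Bool :=
  decide (G s w ω j (i + 1) = G s w ω j i + 1)

/-- Increment of the last-passage time from height `j` to `j + 1` at abscissa `i`. -/
def vInc (s w : ℕ → Bool) (ω : ℕ → ℕ → Bool) (j i : ℕ) : Bool :=
  decide (G s w ω (j + 1) i = G s w ω j i + 1)

lemma G_right_eq (s w : ℕ → Bool) (ω : ℕ → ℕ → Bool) (j i : ℕ) :
    G s w ω j (i + 1) = G s w ω j i + (hInc s w ω j i).toNat := by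
  have := (G_incr_le s w ω j i).1
  have := G_le_right s w ω j i
  by_cases h : G s w ω j (i + 1) = G s w ω j i + 1 <;> simp [hInc, h]
  omega

lemma G_up_eq (s w : ℕ → Bool) (ω : ℕ → ℕ → Bool) (j i : ℕ) :
    G s w ω (j + 1) i = G s w ω j i + (vInc s w ω j i).toNat := by
  have := (G_incr_le s w ω j i).2
  have := G_le_up s w ω j i
  by_cases h : G s w ω (j + 1) i = G s w ω j i + 1 <;> simp [vInc, h]
  omega

lemma cell_inc (s w : ℕ → Bool) (ω : ℕ → ℕ → Bool) (j i : ℕ) :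
    cell (vInc s w ω j i) (hInc s w ω j i) (ω j i) =
      (vInc s w ω j (i + 1), hInc s w ω (j + 1) i) := by
  have h1 := G_succ s w ω j i
  have h2 := G_right_eq s w ω j i
  have h3 := G_up_eq s w ω j i
  have h4 := G_right_eq s w ω (j + 1) i
  have h5 := G_up_eq s w ω j (i + 1)
  generalize vInc s w ω j i = a at *
  generalize vInc s w ω j (i + 1) = a' at *
  generalize hInc s w ω j i = b at *
  generalize hInc s w ω (j + 1) i = b' at *
  generalize ω j i = c at *
  cases a <;> cases b <;> cases c <;> cases a' <;> cases b' <;>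
    simp only [Bool.toNat_true, Bool.toNat_false] at h1 h2 h3 h4 h5 <;>
    first | rfl | (exfalso; omega)

lemma hInc_zero (s w : ℕ → Bool) (ω : ℕ → ℕ → Bool) (i : ℕ) : hInc s w ω 0 i = s i := by
  have h := G_right_eq s w ω 0 i
  rw [G_zero_left, G_zero_left, cnt_succ] at h
  cases hs : s i <;> cases hh : hInc s w ω 0 i <;> simp [hs, hh] at h <;> rfl

lemma vInc_zero (s w : ℕ → Bool) (ω : ℕ → ℕ → Bool) (j : ℕ) : vInc s w ω j 0 = w j := by
  have h := G_up_eq s w ω j 0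
  rw [G_zero_right, G_zero_right, cnt_succ] at h
  cases hs : w j <;> cases hh : vInc s w ω j 0 <;> simp [hs, hh] at h <;> rfl

lemma G_eq_cnt_add (s w : ℕ → Bool) (ω : ℕ → ℕ → Bool) (j i : ℕ) :
    G s w ω j i = cnt s i + cnt (fun k => vInc s w ω k i) j := by
  induction j with
  | zero => rw [G_zero_left, cnt_zero, add_zero]
  | succ j ih => rw [G_up_eq, ih, cnt_succ, add_assoc]

/-- Feeding the rows of `ω` one by one through `rowMap` outputs the increments along the right
side of the rectangle. -/
lemma run_rowMap {M N : ℕ} (s : Fin M → Bool) (w : Fin N → Bool) (ω : Fin N → Fin M → Bool) :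
    (run (rowMap M) N s w ω).2 = fun j : Fin N => vInc (ext s) (ext w) (ext2 ω) j M := by
  set h := hInc (ext s) (ext w) (ext2 ω) with hh
  set v := vInc (ext s) (ext w) (ext2 ω) with hv
  have key := run_eq (rowMap M) N (fun j => (fun i : Fin M => h j i)) (ext w)
    (fun j => v j M) (fun j => fun i : Fin M => ext2 ω j i) (by
      intro j hj
      have := run_eq cell M (fun i => v j i) (fun i => h j i) (fun i => h (j + 1) i)
        (fun i => ext2 ω j i) (fun i _ => cell_inc _ _ _ j i)
      simp only [rowMap]
      rw [show ext w j = v j 0 from (vInc_zero _ _ _ _).symm, this]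
      rfl)
  have e1 : (fun i : Fin M => h 0 i) = s := by
    funext i; rw [hh, hInc_zero, ext_val]
  have e2 : (fun j : Fin N => ext w j) = w := by funext i; rw [ext_val]
  have e3 : (fun j : Fin N => fun i : Fin M => ext2 ω j i) = ω := by
    funext j i; rw [ext2_val, ext_val]
  rw [e1, e2, e3] at key
  rw [key]

/-- The last-passage time with boundary is the number of bottom points plus the number of
increments along the right side. -/
lemma G_ext {M N : ℕ} (s : Fin M → Bool) (w : Fin N → Bool) (ω : Fin N → Fin M → Bool) :
    (G (ext s) (ext w) (ext2 ω) N M : ℝ) =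
      ∑ i, bv (s i) + ∑ j, bv ((run (rowMap M) N s w ω).2 j) := by
  rw [G_eq_cnt_add, run_rowMap, Nat.cast_add, cnt_ext]
  congr 1
  rw [cnt, Finset.sum_range]
  simp [bv]

end Ulam

namespace Ulam

/-! ### The lattice estimate -/

lemma cnt_ext_le {n K : ℕ} (hK : K ≤ n) (v : Fin n → Bool) :
    (cnt (ext v) K : ℝ) = ∑ i : Fin n, if (i : ℕ) < K then bv (v i) else 0 := by
  have h1 : (∑ i : Fin n, if (i : ℕ) < K then bv (v i) else 0) =
      ∑ i ∈ Finset.range n, if i < K then bv (ext v i) else 0 := by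
    rw [Finset.sum_range]; simp [ext_val]
  rw [h1, ← Finset.sum_filter, cnt]
  have : Finset.filter (fun i => i < K) (Finset.range n) = Finset.range K := by
    ext i; simp; omega
  rw [this]
  simp [bv]

lemma Ex_ber_cnt {a : ℝ} (h0 : 0 ≤ a) (h1 : a ≤ 1) {n K : ℕ} (hK : K ≤ n) :
    Ex (pw (ber a) n) (fun v => ((cnt (ext v) K : ℝ) - K * a) ^ 2) ≤ n * a := by
  have hc : ∀ c : ℝ, (∑ i : Fin n, if (i : ℕ) < K then c else 0) = K * c := by
    intro c
    rw [Fin.sum_univ_eq_sum_range (fun i => if i < K then c else 0), ← Finset.sum_filter]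
    have : Finset.filter (fun i => i < K) (Finset.range n) = Finset.range K := by
      ext i; simp; omega
    rw [this]; simp
  have := (Ex_pw_sum (isW_ber h0 h1) n (fun i b => if (i : ℕ) < K then bv b else 0)
    (fun i => if (i : ℕ) < K then a else 0) (fun i => if (i : ℕ) < K then a * (1 - a) else 0)
    (fun i => by
      by_cases h : (i : ℕ) < K <;> simp only [h, if_true, if_false]
      · exact (Ex_ber_bv a).1
      · exact Ex_const (isW_ber h0 h1) 0)
    (fun i => by
      by_cases h : (i : ℕ) < K <;> simp only [h, if_true, if_false]
      · exact (Ex_ber_bv a).2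
      · rw [Ex_const (isW_ber h0 h1)]; norm_num)).2
  simp only [hc] at this
  simp only [cnt_ext_le hK]
  rw [this]
  have hKn : (K : ℝ) ≤ n := by exact_mod_cast hK
  have : a * (1 - a) ≤ a := by nlinarith
  have : 0 ≤ a * (1 - a) := mul_nonneg h0 (by linarith)
  calc (K : ℝ) * (a * (1 - a)) ≤ n * (a * (1 - a)) := by gcongr
    _ ≤ n * a := by gcongr

/-- Law of the `N × N` array of independent Bernoulli(`p`) points. -/
def bulk (p : ℝ) (N : ℕ) : (Fin N → Fin N → Bool) → ℝ := pw (pw (ber p) N) N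

/-- A coupling of three Bernoulli variables with parameters `b ≤ a ≤ c`: for a sample `k`, they
are the indicators of `3 ≤ k`, `2 ≤ k`, `1 ≤ k`. -/
def cpl (a b c : ℝ) : Fin 4 → ℝ := ![1 - c, c - a, a - b, b]

/-- Indicator of the level `k` in the coupling `cpl`. -/
def lev (k : Fin 4) (x : Fin 4) : Bool := decide (k ≤ x)

lemma isW_cpl {a b c : ℝ} (hb : 0 ≤ b) (hba : b ≤ a) (hac : a ≤ c) (hc : c ≤ 1) :
    IsW (cpl a b c) := by
  refine ⟨fun k => ?_, by simp [cpl, Fin.sum_univ_four]⟩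
  fin_cases k <;> simp [cpl] <;> linarith

lemma Ex_cpl (a b c : ℝ) (f : Bool → ℝ) :
    Ex (cpl a b c) (fun x => f (lev 1 x)) = Ex (ber c) f ∧
    Ex (cpl a b c) (fun x => f (lev 2 x)) = Ex (ber a) f ∧
    Ex (cpl a b c) (fun x => f (lev 3 x)) = Ex (ber b) f := by
  have h0 : ∀ k : Fin 4, k ≠ 0 → lev k 0 = false := by decide
  have h11 : lev 1 1 = true := by decide
  have h12 : lev 1 2 = true := by decide
  have h13 : lev 1 3 = true := by decide
  have h21 : lev 2 1 = false := by decide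
  have h22 : lev 2 2 = true := by decide
  have h23 : lev 2 3 = true := by decide
  have h31 : lev 3 1 = false := by decide
  have h32 : lev 3 2 = false := by decide
  have h33 : lev 3 3 = true := by decide
  refine ⟨?_, ?_, ?_⟩ <;> rw [Ex_ber, Ex, Fin.sum_univ_four] <;>
    simp only [h0 1 (by decide), h0 2 (by decide), h0 3 (by decide), h11, h12, h13, h21, h22, h23,
      h31, h32, h33, cpl] <;> simp <;> ring

/-- Bits of level `k` along a sampled sequence. -/
def levs (k : Fin 4) {N : ℕ} (v : Fin N → Fin 4) : Fin N → Bool := fun i => lev k (v i)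

lemma ext_levs_le {k l : Fin 4} (h : l ≤ k) {N : ℕ} (v : Fin N → Fin 4) (i : ℕ) :
    ext (levs k v) i ≤ ext (levs l v) i := by
  unfold ext
  split_ifs with hi
  · simp only [levs, lev]
    intro h1
    simp only [decide_eq_true_eq] at *
    exact h.trans h1
  · exact le_rfl

/-- Number of increments of the last-passage time along the right side of the square. -/
def outc {N : ℕ} (s w : Fin N → Bool) (ω : Fin N → Fin N → Bool) : ℝ :=
  ∑ j, bv ((run (rowMap N) N s w ω).2 j)

lemma isW_bulk {p : ℝ} (h0 : 0 ≤ p) (h1 : p ≤ 1) (N : ℕ) : IsW (bulk p N) :=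
  isW_pw (isW_pw (isW_ber h0 h1) N) N

lemma ber_var_le {a : ℝ} (h0 : 0 ≤ a) (h1 : a ≤ 1) (n : ℕ) :
    Ex (pw (ber a) n) (fun v => (∑ i, bv (v i) - n * a) ^ 2) ≤ n * a := by
  rw [(Ex_ber_sum h0 h1 n).2]
  have : a * (1 - a) ≤ a := by nlinarith
  gcongr

/-- Variance of the number of increments on the right side of the stationary process whose
boundary consists of the levels `k` and `l` of two sampled sequences. -/
lemma Ex_outc {κ : Fin 4 → ℝ} {k l : Fin 4} {a b p : ℝ} (hb0 : 0 ≤ b) (hb1 : b ≤ 1)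
    (ha0 : 0 ≤ a) (ha1 : a ≤ 1)
    (hk : ∀ f, Ex κ (fun x => f (lev k x)) = Ex (ber a) f)
    (hl : ∀ f, Ex κ (fun x => f (lev l x)) = Ex (ber b) f)
    (hab : a * b = p * (1 - a) * (1 - b)) (N : ℕ) :
    Ex (pw κ N) (fun σ => Ex (pw κ N) fun τ => Ex (bulk p N) fun ω =>
      (outc (levs k σ) (levs l τ) ω - N * b) ^ 2) ≤ N * b := by
  have h1 := Ex_pw_map (lev k) hk N (fun s => Ex (pw κ N) fun τ => Ex (bulk p N) fun ω =>
      (outc s (levs l τ) ω - N * b) ^ 2)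
  have h2 : ∀ s, (Ex (pw κ N) fun τ => Ex (bulk p N) fun ω =>
      (outc s (levs l τ) ω - N * b) ^ 2) = _ := fun s =>
    Ex_pw_map (lev l) hl N (fun w => Ex (bulk p N) fun ω => (outc s w ω - N * b) ^ 2)
  simp only [h2] at h1
  have h3 := Ex_sys hab N N (fun q => (∑ j, bv (q.2 j) - N * b) ^ 2)
  simp only [Ex_const (isW_pw (isW_ber ha0 ha1) N)] at h3
  simp only [h2]
  refine (h1.trans h3).le.trans ?_
  exact ber_var_le hb0 hb1 N

/-- The probability with odds `x` equals `x` to first order. -/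
lemma odds_facts {x : ℝ} (hx : 0 < x) : 0 ≤ x / (1 + x) ∧ x / (1 + x) ≤ 1 ∧ x / (1 + x) ≤ x ∧
    x - x ^ 2 ≤ x / (1 + x) := by
  have h : 0 < 1 + x := by linarith
  refine ⟨by positivity, ?_, ?_, ?_⟩
  · rw [div_le_one h]; linarith
  · rw [div_le_iff₀ h]; nlinarith
  · rw [le_div_iff₀ h]; nlinarith [pow_pos hx 3]

lemma odds_mono {x y : ℝ} (hx : 0 < x) (h : x ≤ y) : x / (1 + x) ≤ y / (1 + y) := by
  rw [div_le_div_iff₀ (by linarith) (by linarith)]; nlinarith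

/-- The Burke condition for the probabilities with odds `x` and `y`. -/
lemma odds_mul {x y p : ℝ} (hx : 0 < x) (hy : 0 < y) (h : x * y = p) :
    x / (1 + x) * (y / (1 + y)) = p * (1 - x / (1 + x)) * (1 - y / (1 + y)) := by
  have h1 : 1 + x ≠ 0 := by positivity
  have h2 : 1 + y ≠ 0 := by positivity
  subst h
  field_simp
  ring

/-- The arithmetic of the exit-point estimate. The quantities `S` and `W` stand for numbers of
points among the first `K` boundary sites, where `Kx = K * x`, the quantities `g` for last-passage
times with boundary, and `L` for the one without, on the event that every deviation is at most `e`.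
Tilting the boundary by `lam = 1 + δ / 2` adds about `δ * t * (lam - 1) = δ ^ 2 * t / 2` points to
the first `K` sites, but increases the last-passage time only by
`t * (lam + 1 / lam - 2) ≤ δ ^ 2 * t / 4`, so the last two alternatives of `h` cannot occur. -/
lemma arith_main {δ t x e Kx lam il : ℝ} (hδ : 0 < δ) (hδ1 : δ ≤ 1) (ht : 1 ≤ t)
    (hx0 : 0 < x) (hx : x ≤ δ ^ 2 / 1000) (he : e = δ ^ 2 * t / 100) (hlam : lam = 1 + δ / 2)
    (hil : il = 1 / lam) (hK1 : Kx ≤ δ * t) (hK2 : δ * t - x ≤ Kx)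
    {g1 L S1 W1 g2 S2 g3 W3 : ℝ}
    (hg1 : 2 * t - 2 * t * x - 2 * e ≤ g1)
    (hS1 : S1 ≤ Kx + e) (hW1 : W1 ≤ Kx + e)
    (hg2 : g2 ≤ t * lam + t * il + 2 * e) (hg3 : g3 ≤ t * lam + t * il + 2 * e)
    (hS2 : Kx * lam - Kx * x * lam ^ 2 - e ≤ S2) (hW3 : Kx * lam - Kx * x * lam ^ 2 - e ≤ W3)
    (h : g1 ≤ S1 + L ∨ g1 ≤ W1 + L ∨ g1 + S2 ≤ g2 + S1 ∨ g1 + W3 ≤ g3 + W1) :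
    (2 - 2 * δ) * t ≤ L := by
  have hxt : t * x ≤ δ ^ 2 * t / 1000 := by nlinarith
  have hxt' : x ≤ δ ^ 2 * t / 1000 := by nlinarith [sq_nonneg δ]
  have hd2 : δ ^ 2 * t ≤ δ * t := by nlinarith
  have hd0 : 0 < δ ^ 2 * t := by positivity
  have key : ∀ {S g T : ℝ}, S ≤ Kx + e → g ≤ t * lam + t * il + 2 * e →
      Kx * lam - Kx * x * lam ^ 2 - e ≤ T → ¬ (g1 + T ≤ g + S) := by
    intro S g T h1 h2 h3 h4
    have hl : lam + il - 2 ≤ δ ^ 2 / 4 := by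
      have hp : 0 < lam := by linarith
      have : lam + il - 2 = (δ / 2) ^ 2 / lam := by
        rw [hil]; field_simp; rw [hlam]; ring
      rw [this, div_le_iff₀ hp]
      nlinarith [sq_nonneg δ]
    have hl' := mul_le_mul_of_nonneg_left hl (by linarith : (0 : ℝ) ≤ t)
    have hKxx : Kx * x ≤ t * x := by
      apply mul_le_mul_of_nonneg_right _ hx0.le
      nlinarith
    have hll : lam ^ 2 ≤ 9 / 4 := by rw [hlam]; nlinarith
    have hKl : Kx * x * lam ^ 2 ≤ t * x * (9 / 4) := by
      calc Kx * x * lam ^ 2 ≤ t * x * lam ^ 2 := by gcongr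
        _ ≤ t * x * (9 / 4) := by gcongr
    have hK3 : (δ * t - x) * (δ / 2) ≤ Kx * (δ / 2) := by gcongr
    have hlK : Kx * lam = Kx + Kx * (δ / 2) := by rw [hlam]; ring
    have hxd : x * (δ / 2) ≤ x := by nlinarith
    linarith
  rcases h with h | h | h | h
  · linarith
  · linarith
  · exact absurd h (key hS1 hg2 hS2)
  · exact absurd h (key hW1 hg3 hW3)

open Classical in
/-- Indicator of a proposition. -/
noncomputable def ind (P : Prop) : ℝ := if P then 1 else 0

lemma ind_le {P : Prop} {r : ℝ} (h0 : 0 ≤ r) (h : P → 1 ≤ r) : ind P ≤ r := by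
  unfold ind; split_ifs with hP
  · exact h hP
  · exact h0

/-- Last-passage time of the array `ω` without boundary points. -/
def lpp {N : ℕ} (ω : Fin N → Fin N → Bool) : ℕ := G noB noB (ext2 ω) N N

/-- Product weights of two independent variables. -/
def pr {α β : Type*} (μ : α → ℝ) (ν : β → ℝ) : α × β → ℝ := fun q => μ q.1 * ν q.2

lemma Ex_pr {α β : Type*} [Fintype α] [Fintype β] (μ : α → ℝ) (ν : β → ℝ) (f : α × β → ℝ) :
    Ex (pr μ ν) f = Ex μ (fun x => Ex ν fun y => f (x, y)) := by
  simp only [Ex, Finset.mul_sum, Fintype.sum_prod_type, pr, mul_assoc]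

lemma isW_pr {α β : Type*} [Fintype α] [Fintype β] {μ : α → ℝ} {ν : β → ℝ} (hμ : IsW μ)
    (hν : IsW ν) : IsW (pr μ ν) := by
  refine ⟨fun q => mul_nonneg (hμ.nonneg _) (hν.nonneg _), ?_⟩
  have := Ex_pr μ ν (fun _ => 1)
  simp only [Ex_const hν, Ex_const hμ] at this
  simpa [Ex] using this

/-- Chebyshev's inequality together with a union bound. -/
lemma Ex_ind_le {α ι : Type*} [Fintype α] [Fintype ι] {μ : α → ℝ} (hμ : IsW μ)
    (X : ι → α → ℝ) {v e : ℝ} (he : 0 < e) (hv : ∀ k, Ex μ (fun x => X k x ^ 2) ≤ v)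
    (P : α → Prop) (hP : ∀ x, (∀ k, |X k x| ≤ e) → P x) :
    Ex μ (fun x => ind (¬ P x)) ≤ Fintype.card ι * v / e ^ 2 := by
  have h1 : ∀ x, ind (¬ P x) ≤ (1 / e ^ 2) * ∑ k, X k x ^ 2 := by
    intro x
    refine ind_le (by positivity) fun hx => ?_
    have : ∃ k, e < |X k x| := by
      by_contra! h
      exact hx (hP x h)
    obtain ⟨k, hk⟩ := this
    have h2 : e ^ 2 ≤ X k x ^ 2 := by
      rw [← sq_abs (X k x)]; gcongr
    have h3 : X k x ^ 2 ≤ ∑ k, X k x ^ 2 :=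
      Finset.single_le_sum (f := fun k => X k x ^ 2) (fun _ _ => sq_nonneg _)
        (Finset.mem_univ k)
    rw [one_div, ← div_eq_inv_mul, le_div_iff₀ (by positivity)]
    linarith
  refine (Ex_mono hμ h1).trans ?_
  rw [Ex_mul_left, Ex_sum, one_div, ← div_eq_inv_mul]
  gcongr
  refine (Finset.sum_le_sum fun k _ => hv k).trans ?_
  simp

/-- If all boundary counts are within `e` of their means, then the last-passage time without
boundary is close to `2 * t`. -/
lemma lattice_det {δ t x e lam il a b c : ℝ} {K N : ℕ} (hδ : 0 < δ) (hδ1 : δ ≤ 1) (ht : 1 ≤ t)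
    (hx0 : 0 < x) (hx : x ≤ δ ^ 2 / 1000) (htN : t = N * x) (he : e = δ ^ 2 * t / 100)
    (hlam : lam = 1 + δ / 2) (hil : il = 1 / lam) (hK1 : (K : ℝ) ≤ δ * N)
    (hK2 : δ * N < K + 1) (ha : a ≤ x) (ha' : x - x ^ 2 ≤ a) (hc : c ≤ lam * x)
    (hc' : lam * x - (lam * x) ^ 2 ≤ c) (hb : b ≤ il * x)
    (σ τ : Fin N → Fin 4) (ω : Fin N → Fin N → Bool)
    (h0 : |∑ i, bv (levs 2 σ i) - N * a| ≤ e)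
    (h1 : |outc (levs 2 σ) (levs 2 τ) ω - N * a| ≤ e)
    (h2 : |(cnt (ext (levs 2 σ)) K : ℝ) - K * a| ≤ e)
    (h3 : |(cnt (ext (levs 2 τ)) K : ℝ) - K * a| ≤ e)
    (h4 : |∑ i, bv (levs 1 σ i) - N * c| ≤ e)
    (h5 : |outc (levs 1 σ) (levs 3 τ) ω - N * b| ≤ e)
    (h6 : |(cnt (ext (levs 1 σ)) K : ℝ) - K * c| ≤ e)
    (h7 : |(cnt (ext (levs 1 τ)) K : ℝ) - K * c| ≤ e)
    (h8 : |∑ i, bv (levs 3 σ i) - N * b| ≤ e)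
    (h9 : |outc (levs 3 σ) (levs 1 τ) ω - N * c| ≤ e) :
    (2 - 2 * δ) * t ≤ lpp ω ∧ lpp ω ≤ (2 + 2 * δ) * t := by
  rw [abs_le] at *
  have g1 : (G (ext (levs 2 σ)) (ext (levs 2 τ)) (ext2 ω) N N : ℝ) =
      ∑ i, bv (levs 2 σ i) + outc (levs 2 σ) (levs 2 τ) ω := G_ext _ _ _
  have g2 : (G (ext (levs 1 σ)) (ext (levs 3 τ)) (ext2 ω) N N : ℝ) =
      ∑ i, bv (levs 1 σ i) + outc (levs 1 σ) (levs 3 τ) ω := G_ext _ _ _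
  have g3 : (G (ext (levs 3 σ)) (ext (levs 1 τ)) (ext2 ω) N N : ℝ) =
      ∑ i, bv (levs 3 σ i) + outc (levs 3 σ) (levs 1 τ) ω := G_ext _ _ _
  have hN0 : (0 : ℝ) ≤ N := Nat.cast_nonneg N
  have hK0 : (0 : ℝ) ≤ K := Nat.cast_nonneg K
  have hNa := mul_le_mul_of_nonneg_left ha hN0
  have hNa' := mul_le_mul_of_nonneg_left ha' hN0
  have hNb := mul_le_mul_of_nonneg_left hb hN0
  have hNc := mul_le_mul_of_nonneg_left hc hN0
  have hKa := mul_le_mul_of_nonneg_left ha hK0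
  have hKc' := mul_le_mul_of_nonneg_left hc' hK0
  have e1 : (N : ℝ) * (x - x ^ 2) = t - t * x := by rw [htN]; ring
  have e2 : (N : ℝ) * (il * x) = t * il := by rw [htN]; ring
  have e3 : (N : ℝ) * (lam * x) = t * lam := by rw [htN]; ring
  have e4 : (K : ℝ) * (lam * x - (lam * x) ^ 2) = K * x * lam - K * x * x * lam ^ 2 := by ring
  have hal := exit_alternative (ext (levs 3 σ)) (ext (levs 3 τ))
    (ext_levs_le (by decide : (1 : Fin 4) ≤ 2) σ)
    (ext_levs_le (by decide : (1 : Fin 4) ≤ 2) τ) (ext2 ω) K N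
  have hal' : (G (ext (levs 2 σ)) (ext (levs 2 τ)) (ext2 ω) N N : ℝ) ≤
        cnt (ext (levs 2 σ)) K + (lpp ω : ℝ) ∨
      (G (ext (levs 2 σ)) (ext (levs 2 τ)) (ext2 ω) N N : ℝ) ≤
        cnt (ext (levs 2 τ)) K + (lpp ω : ℝ) ∨
      (G (ext (levs 2 σ)) (ext (levs 2 τ)) (ext2 ω) N N : ℝ) + cnt (ext (levs 1 σ)) K ≤
        G (ext (levs 1 σ)) (ext (levs 3 τ)) (ext2 ω) N N + (cnt (ext (levs 2 σ)) K : ℝ) ∨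
      (G (ext (levs 2 σ)) (ext (levs 2 τ)) (ext2 ω) N N : ℝ) + cnt (ext (levs 1 τ)) K ≤
        G (ext (levs 3 σ)) (ext (levs 1 τ)) (ext2 ω) N N + (cnt (ext (levs 2 τ)) K : ℝ) := by
    unfold lpp
    exact_mod_cast hal
  constructor
  · refine arith_main (Kx := K * x) hδ hδ1 ht hx0 hx he hlam hil ?_ ?_
      (g1 := G (ext (levs 2 σ)) (ext (levs 2 τ)) (ext2 ω) N N)
      (g2 := G (ext (levs 1 σ)) (ext (levs 3 τ)) (ext2 ω) N N)
      (g3 := G (ext (levs 3 σ)) (ext (levs 1 τ)) (ext2 ω) N N)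
      ?_ ?_ ?_ ?_ ?_ ?_ ?_ hal'
    · rw [htN, ← mul_assoc]; gcongr
    · rw [htN]
      have := mul_le_mul_of_nonneg_right hK2.le hx0.le
      linarith
    · rw [g1]; linarith [h0.1, h1.1]
    · linarith [h2.2]
    · linarith [h3.2]
    · rw [g2]; linarith [h4.2, h5.2]
    · rw [g3]; linarith [h8.2, h9.2]
    · linarith [h6.1]
    · linarith [h7.1]
  · have hle : (lpp ω : ℝ) ≤ G (ext (levs 2 σ)) (ext (levs 2 τ)) (ext2 ω) N N := by
      exact_mod_cast G_noB_le _ _ _ _ _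
    have hd : δ ^ 2 * t ≤ δ * t := by
      have : δ ^ 2 ≤ δ := by nlinarith
      gcongr
    have hx2 : (N : ℝ) * x = t := htN.symm
    have hdt : 0 ≤ δ * t := by positivity
    linarith [h0.2, h1.2]

/-- In the lattice model with density `x ^ 2`, the last-passage time deviates from `2 * t`, where
`t = N * x`, by a relative error above `δ` with probability `O(1 / t)`. -/
theorem lattice_bound {δ x t : ℝ} {N : ℕ} (hδ : 0 < δ) (hδ1 : δ ≤ 1) (hx0 : 0 < x)
    (hx : x ≤ δ ^ 2 / 1000) (htN : t = N * x) (ht : 1 ≤ t) :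
    Ex (bulk (x ^ 2) N) (fun ω => ind (¬ ((2 - 2 * δ) * t ≤ lpp ω ∧ lpp ω ≤ (2 + 2 * δ) * t)))
      ≤ 200000 / (δ ^ 4 * t) := by
  obtain ⟨K, hK1, hK2⟩ : ∃ K : ℕ, (K : ℝ) ≤ δ * N ∧ δ * N < K + 1 :=
    ⟨⌊δ * N⌋₊, Nat.floor_le (by positivity), Nat.lt_floor_add_one _⟩
  have hN0 : (0 : ℝ) ≤ N := Nat.cast_nonneg N
  have hKN : K ≤ N := by
    have : (K : ℝ) ≤ N := hK1.trans (by nlinarith)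
    exact_mod_cast this
  obtain ⟨lam, hlam⟩ : ∃ lam : ℝ, lam = 1 + δ / 2 := ⟨_, rfl⟩
  have hlam0 : 0 < lam := by linarith
  have hlam2 : lam ≤ 2 := by linarith
  obtain ⟨il, hil⟩ : ∃ il : ℝ, il = 1 / lam := ⟨_, rfl⟩
  have hil0 : 0 < il := by rw [hil]; positivity
  have hil1 : il ≤ 1 := by rw [hil, div_le_one hlam0]; linarith
  have hli : lam * il = 1 := by rw [hil]; field_simp
  obtain ⟨a0, a1, a2, a3⟩ := odds_facts hx0
  obtain ⟨c0, c1, c2, c3⟩ := odds_facts (mul_pos hlam0 hx0)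
  obtain ⟨b0, b1, b2, -⟩ := odds_facts (mul_pos hil0 hx0)
  have hba : il * x / (1 + il * x) ≤ x / (1 + x) :=
    odds_mono (by positivity) (by nlinarith)
  have hac : x / (1 + x) ≤ lam * x / (1 + lam * x) := odds_mono hx0 (by nlinarith)
  -- The boundaries with odds `x, x`, with odds `lam * x, x / lam` and with odds `x / lam, lam * x`
  -- are all stationary for the same interior density `x ^ 2`.
  have m1 := odds_mul hx0 hx0 (sq x).symm
  have m2 := odds_mul (p := x ^ 2) (mul_pos hlam0 hx0) (mul_pos hil0 hx0)
    (by linear_combination x ^ 2 * hli)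
  have m3 := odds_mul (p := x ^ 2) (mul_pos hil0 hx0) (mul_pos hlam0 hx0)
    (by linear_combination x ^ 2 * hli)
  generalize x / (1 + x) = a at *
  generalize il * x / (1 + il * x) = b at *
  generalize lam * x / (1 + lam * x) = c at *
  have hx1 : x ≤ 1 := by nlinarith
  have hκW : IsW (cpl a b c) := isW_cpl b0 hba hac c1
  have lev1 := fun f => (Ex_cpl a b c f).1
  have lev2 := fun f => (Ex_cpl a b c f).2.1
  have lev3 := fun f => (Ex_cpl a b c f).2.2
  generalize cpl a b c = κ at *
  have hκN := isW_pw hκW N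
  have hBW := isW_bulk (sq_nonneg x) (by nlinarith : x ^ 2 ≤ 1) N
  have hNc : N * c ≤ 2 * t := by
    have h1 : N * c ≤ N * (lam * x) := by gcongr
    have h2 : N * (lam * x) = lam * t := by rw [htN]; ring
    have h3 : lam * t ≤ 2 * t := by gcongr
    linarith
  have hNa : N * a ≤ 2 * t := le_trans (by gcongr) hNc
  have hNb : N * b ≤ 2 * t := le_trans (by gcongr) hNa
  have he0 : 0 < δ ^ 2 * t / 100 := by positivity
  have s1 : ∀ {k : Fin 4} {r : ℝ}, 0 ≤ r → r ≤ 1 → N * r ≤ 2 * t →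
      (∀ f, Ex κ (fun x => f (lev k x)) = Ex (ber r) f) →
      Ex (pw κ N) (fun σ => (∑ i, bv (levs k σ i) - N * r) ^ 2) ≤ 2 * t ∧
      Ex (pw κ N) (fun σ => ((cnt (ext (levs k σ)) K : ℝ) - K * r) ^ 2) ≤ 2 * t := by
    intro k r h0 h1 h2 hk
    constructor
    · exact ((Ex_pw_map (lev k) hk N (fun s => (∑ i, bv (s i) - N * r) ^ 2)).le.trans
        (ber_var_le h0 h1 N)).trans h2
    · exact ((Ex_pw_map (lev k) hk N (fun s => ((cnt (ext s) K : ℝ) - K * r) ^ 2)).le.trans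
        (Ex_ber_cnt h0 h1 hKN)).trans h2
  have u1 := s1 c0 c1 hNc lev1
  have u2 := s1 a0 a1 hNa lev2
  have u3 := s1 b0 b1 hNb lev3
  have v1 := (Ex_outc a0 a1 a0 a1 lev2 lev2 m1 N).trans hNa
  have v2 := (Ex_outc b0 b1 c0 c1 lev1 lev3 m2 N).trans hNb
  have v3 := (Ex_outc c0 c1 b0 b1 lev3 lev1 m3 N).trans hNc
  -- The deviations that have to be small: boundary totals, right-side totals and initial boundary
  -- segments of the three processes, which are coupled through common samples and interior points.
  let X : Fin 10 → ((Fin N → Fin 4) × (Fin N → Fin 4) × (Fin N → Fin N → Bool)) → ℝ :=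
    ![fun q => ∑ i, bv (levs 2 q.1 i) - N * a,
      fun q => outc (levs 2 q.1) (levs 2 q.2.1) q.2.2 - N * a,
      fun q => (cnt (ext (levs 2 q.1)) K : ℝ) - K * a,
      fun q => (cnt (ext (levs 2 q.2.1)) K : ℝ) - K * a,
      fun q => ∑ i, bv (levs 1 q.1 i) - N * c,
      fun q => outc (levs 1 q.1) (levs 3 q.2.1) q.2.2 - N * b,
      fun q => (cnt (ext (levs 1 q.1)) K : ℝ) - K * c,
      fun q => (cnt (ext (levs 1 q.2.1)) K : ℝ) - K * c,
      fun q => ∑ i, bv (levs 3 q.1 i) - N * b,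
      fun q => outc (levs 3 q.1) (levs 1 q.2.1) q.2.2 - N * c]
  have w1 : ∀ f : (Fin N → Fin 4) → ℝ, Ex (pw κ N) f ≤ 2 * t →
      Ex (pr (pw κ N) (pr (pw κ N) (bulk (x ^ 2) N))) (fun q => f q.1) ≤ 2 * t := by
    intro f hf
    simp only [Ex_pr, Ex_const hBW, Ex_const hκN]
    exact hf
  have w2 : ∀ f : (Fin N → Fin 4) → ℝ, Ex (pw κ N) f ≤ 2 * t →
      Ex (pr (pw κ N) (pr (pw κ N) (bulk (x ^ 2) N))) (fun q => f q.2.1) ≤ 2 * t := by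
    intro f hf
    simp only [Ex_pr, Ex_const hBW, Ex_const hκN]
    exact hf
  have hX : ∀ k, Ex (pr (pw κ N) (pr (pw κ N) (bulk (x ^ 2) N))) (fun q => X k q ^ 2)
      ≤ 2 * t := by
    intro k
    fin_cases k
    · exact w1 _ u2.1
    · refine le_trans (le_of_eq ?_) v1
      simp only [Ex_pr]; rfl
    · exact w1 _ u2.2
    · exact w2 _ u2.2
    · exact w1 _ u1.1
    · refine le_trans (le_of_eq ?_) v2
      simp only [Ex_pr]; rfl
    · exact w1 _ u1.2
    · exact w2 _ u1.2
    · exact w1 _ u3.1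
    · refine le_trans (le_of_eq ?_) v3
      simp only [Ex_pr]; rfl
  have main := Ex_ind_le (isW_pr hκN (isW_pr hκN hBW)) X he0 hX
    (fun q => (2 - 2 * δ) * t ≤ lpp q.2.2 ∧ lpp q.2.2 ≤ (2 + 2 * δ) * t)
    (fun q h => lattice_det hδ hδ1 ht hx0 hx htN rfl hlam hil hK1 hK2 a2 a3 c2 c3 b2
      q.1 q.2.1 q.2.2 (h 0) (h 1) (h 2) (h 3) (h 4) (h 5) (h 6) (h 7) (h 8) (h 9))
  simp only [Ex_pr, Ex_const hκN] at main
  refine main.trans (le_of_eq ?_)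
  rw [Fintype.card_fin]
  have : δ ≠ 0 := hδ.ne'
  have : t ≠ 0 := by positivity
  field_simp
  norm_num

end Ulam

namespace Ulam

/-! ### From the lattice to permutations -/

open Classical in
/-- The largest size of a subset of `I` on which `σ` is increasing. -/
noncomputable def lis {n : ℕ} (σ : Equiv.Perm (Fin n)) (I : Finset (Fin n)) : ℕ :=
  (I.powerset.filter fun T : Finset (Fin n) => StrictMonoOn σ (T : Set (Fin n))).sup Finset.card

lemma card_le_lis {n : ℕ} {σ : Equiv.Perm (Fin n)} {I T : Finset (Fin n)} (h : T ⊆ I)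
    (hT : StrictMonoOn σ T) : T.card ≤ lis σ I := by
  classical
  unfold lis
  exact Finset.le_sup (f := Finset.card) (by simp [h, hT])

lemma lis_le {n : ℕ} {σ : Equiv.Perm (Fin n)} {I : Finset (Fin n)} {k : ℕ}
    (h : ∀ T ⊆ I, StrictMonoOn σ T → T.card ≤ k) : lis σ I ≤ k := by
  classical
  unfold lis
  refine Finset.sup_le fun T hT => ?_
  simp only [Finset.mem_filter, Finset.mem_powerset] at hT
  exact h T hT.1 hT.2

lemma lis_mono {n : ℕ} (σ : Equiv.Perm (Fin n)) {I J : Finset (Fin n)} (h : I ⊆ J) :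
    lis σ I ≤ lis σ J :=
  lis_le fun _ hT hm => card_le_lis (hT.trans h) hm

lemma permLIS_eq (n : ℕ) (π : Equiv.Perm (Fin n)) : permLIS n π = lis π Finset.univ := by
  unfold permLIS
  refine le_antisymm (csSup_le ⟨0, ∅, by simp [StrictMonoOn]⟩ ?_) (lis_le fun T _ hT => ?_)
  · rintro k ⟨s, rfl, hs⟩
    exact card_le_lis (Finset.subset_univ s) hs
  · refine le_csSup ⟨n, ?_⟩ ⟨T, rfl, hT⟩
    rintro k ⟨s, rfl, -⟩
    simpa using Finset.card_le_univ s

/-- The longest increasing subsequence only depends on the pattern of `σ` on `I`. -/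
lemma lis_pattern {N n : ℕ} (σ : Equiv.Perm (Fin N)) (I : Finset (Fin N)) (π : Equiv.Perm (Fin n))
    (a e : Fin n ↪o Fin N) (ha : ∀ j, j ∈ I ↔ ∃ k, a k = j) (h : ∀ k, σ (a k) = e (π k)) :
    lis σ I = lis π Finset.univ := by
  classical
  apply le_antisymm
  · refine lis_le fun T hT hm => ?_
    have hTm : (Finset.univ.filter fun k => a k ∈ T).map a.toEmbedding = T := by
      ext j
      simp only [Finset.mem_map, Finset.mem_filter, Finset.mem_univ, true_and]
      constructor
      · rintro ⟨k, hk, rfl⟩; exact hk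
      · intro hj
        obtain ⟨k, rfl⟩ := (ha j).1 (hT hj)
        exact ⟨k, hj, rfl⟩
    rw [← hTm, Finset.card_map]
    refine card_le_lis (Finset.subset_univ _) fun k hk l hl hkl => ?_
    have := hm (by simpa using hk : a k ∈ (T : Set _)) (by simpa using hl : a l ∈ (T : Set _))
      (a.lt_iff_lt.2 hkl)
    rw [h, h] at this
    exact e.lt_iff_lt.1 this
  · refine lis_le fun T _ hm => ?_
    rw [← Finset.card_map a.toEmbedding]
    refine card_le_lis (fun j hj => ?_) fun j hj l hl hjl => ?_
    · obtain ⟨k, -, rfl⟩ := Finset.mem_map.1 hj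
      exact (ha _).2 ⟨k, rfl⟩
    · obtain ⟨k, hk, rfl⟩ := Finset.mem_map.1 (Finset.mem_coe.1 hj)
      obtain ⟨l, hl', rfl⟩ := Finset.mem_map.1 (Finset.mem_coe.1 hl)
      change σ (a k) < σ (a l)
      rw [h, h, e.lt_iff_lt]
      exact hm hk hl' (a.lt_iff_lt.1 hjl)

/-- The restriction of a uniform permutation of `Fin N` to a set of size `n` has a uniform
pattern. -/
lemma sum_lis {N n : ℕ} (I : Finset (Fin N)) (hI : I.card = n) (f : ℕ → ℝ) :
    (n.factorial : ℝ) * ∑ τ : Equiv.Perm (Fin N), f (lis τ I) =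
      N.factorial * ∑ π : Equiv.Perm (Fin n), f (lis π Finset.univ) := by
  classical
  have ha : ∀ j, j ∈ I ↔ ∃ k, I.orderEmbOfFin hI k = j := fun j => by
    have := Finset.range_orderEmbOfFin I hI
    rw [← Finset.mem_coe, ← this]; rfl
  set a := I.orderEmbOfFin hI with ha_def
  let u : Equiv.Perm (Fin n) → Equiv.Perm (Fin N) := fun ρ =>
    ρ.extendDomain (I.orderIsoOfFin hI).toEquiv
  have hu : ∀ ρ k, u ρ (a k) = a (ρ k) := fun ρ k =>
    Equiv.Perm.extendDomain_apply_image ρ (I.orderIsoOfFin hI).toEquiv k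
  have hτ : ∀ τ : Equiv.Perm (Fin N), ∃ e : Fin n ↪o Fin N, ∃ π : Equiv.Perm (Fin n),
      ∀ k, τ (a k) = e (π k) := by
    intro τ
    set J : Finset (Fin N) := I.map τ.toEmbedding with hJ
    have hJc : J.card = n := by rw [hJ, Finset.card_map, hI]
    have hmem : ∀ k, τ (a k) ∈ J := fun k => by
      rw [hJ, Finset.mem_map]
      exact ⟨a k, (ha _).2 ⟨k, rfl⟩, rfl⟩
    let g : Fin n → Fin n := fun k => (J.orderIsoOfFin hJc).symm ⟨τ (a k), hmem k⟩
    have hg : Function.Injective g := fun k l hkl => by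
      have := (J.orderIsoOfFin hJc).symm.injective hkl
      simpa using this
    refine ⟨J.orderEmbOfFin hJc, Equiv.ofBijective g (Finite.injective_iff_bijective.1 hg),
      fun k => ?_⟩
    simp [g, ← Finset.coe_orderIsoOfFin_apply]
  have h1 : ∀ ρ, ∑ τ : Equiv.Perm (Fin N), f (lis (τ * u ρ) I) =
      ∑ τ : Equiv.Perm (Fin N), f (lis τ I) := fun ρ =>
    Equiv.sum_comp (Equiv.mulRight (u ρ)) fun τ => f (lis τ I)
  have h2 : ∀ τ : Equiv.Perm (Fin N), ∑ ρ, f (lis (τ * u ρ) I) =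
      ∑ π : Equiv.Perm (Fin n), f (lis π Finset.univ) := by
    intro τ
    obtain ⟨e, π, h⟩ := hτ τ
    rw [← Equiv.sum_comp (Equiv.mulLeft π) fun π => f (lis π Finset.univ)]
    refine Finset.sum_congr rfl fun ρ _ => ?_
    rw [lis_pattern (τ * u ρ) I (π * ρ) a e ha fun k => by
      rw [Equiv.Perm.mul_apply, hu, h]; rfl]
    rfl
  have h3 := Finset.sum_comm (s := (Finset.univ : Finset (Equiv.Perm (Fin n))))
    (t := (Finset.univ : Finset (Equiv.Perm (Fin N)))) (f := fun ρ τ => f (lis (τ * u ρ) I))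
  simp only [h1, h2, Finset.sum_const, Finset.card_univ, Fintype.card_perm, Fintype.card_fin,
    nsmul_eq_mul] at h3
  exact h3

/-- If the points of `ω` form the graph of `σ` over `I`, then the last-passage time is the length
of the longest increasing subsequence. -/
lemma lpp_eq_lis {N : ℕ} (ω : Fin N → Fin N → Bool) (σ : Equiv.Perm (Fin N))
    (I : Finset (Fin N)) (h : ∀ j i, ω j i = true ↔ j ∈ I ∧ σ j = i) : lpp ω = lis σ I := by
  classical
  set f : ℕ → ℕ := fun j => if h : j < N then σ ⟨j, h⟩ else 0 with hf
  have hfv : ∀ j : Fin N, f j = σ j := fun j => by simp [hf]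
  have hv : ∀ j i : Fin N, ext2 ω j i = ω j i := fun j i => by rw [ext2_val, ext_val]
  have hω : ∀ j i, ext2 ω j i = true → ∃ j' i' : Fin N, j = j' ∧ i = i' ∧ ω j' i' = true := by
    intro j i hji
    have hj : j < N := by
      by_contra hj
      simp [ext2, hj] at hji
    have hi : i < N := by
      by_contra hi
      simp [ext2, hj, ext, hi] at hji
    exact ⟨⟨j, hj⟩, ⟨i, hi⟩, rfl, rfl, (hv ⟨j, hj⟩ ⟨i, hi⟩).symm.trans hji⟩
  apply le_antisymm
  · obtain ⟨T, hT, hT', hc⟩ := exists_card_eq_G (ext2 ω) f (by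
      intro j i hji
      obtain ⟨j, i, rfl, rfl, h'⟩ := hω j i hji
      rw [hfv, ((h j i).1 h').2]) N N
    have hmap : (Finset.univ.filter fun j : Fin N => (j : ℕ) ∈ T).map Fin.valEmbedding = T := by
      ext j
      simp only [Finset.mem_map, Finset.mem_filter, Finset.mem_univ, true_and]
      constructor
      · rintro ⟨k, hk, rfl⟩; exact hk
      · intro hj
        exact ⟨⟨j, (hT' j hj).1⟩, hj, rfl⟩
    rw [lpp, ← hc, ← hmap, Finset.card_map]
    refine card_le_lis (fun j hj => ?_) fun j hj k hk hjk => ?_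
    · have h3 := (hT' j (by simpa using hj)).2.2
      rw [hfv, hv] at h3
      exact ((h _ _).1 h3).1
    · have := hT (by simpa using hj : (j : ℕ) ∈ (T : Set ℕ))
        (by simpa using hk : (k : ℕ) ∈ (T : Set ℕ)) hjk
      rwa [hfv, hfv, Fin.val_fin_lt] at this
  · refine lis_le fun T hT hm => ?_
    rw [← Finset.card_map Fin.valEmbedding]
    refine card_le_G _ _ _ f N N _ ?_ ?_
    · intro j hj k hk hjk
      obtain ⟨j, hj', rfl⟩ := Finset.mem_map.1 (Finset.mem_coe.1 hj)
      obtain ⟨k, hk', rfl⟩ := Finset.mem_map.1 (Finset.mem_coe.1 hk)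
      change f j < f k
      rw [hfv, hfv, Fin.val_fin_lt]
      exact hm hj' hk' hjk
    · intro j hj
      obtain ⟨j, hj', rfl⟩ := Finset.mem_map.1 hj
      change (j : ℕ) < N ∧ f j < N ∧ ext2 ω j (f j) = true
      rw [hfv, hv]
      exact ⟨j.2, (σ j).2, (h _ _).2 ⟨hT hj', rfl⟩⟩

/-- A configuration with at most one point in each row and column is part of the graph of a
permutation. -/
lemma exists_perm {N : ℕ} (ω : Fin N → Fin N → Bool)
    (hr : ∀ j i i', ω j i = true → ω j i' = true → i = i')
    (hc : ∀ j j' i, ω j i = true → ω j' i = true → j = j') :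
    ∃ (σ : Equiv.Perm (Fin N)) (I : Finset (Fin N)),
      (∀ j i, ω j i = true ↔ j ∈ I ∧ σ j = i) ∧ (I.card : ℝ) = ∑ j, ∑ i, bv (ω j i) := by
  classical
  set I : Finset (Fin N) := Finset.univ.filter fun j => ∃ i, ω j i = true with hI
  have hmem : ∀ j, j ∈ I ↔ ∃ i, ω j i = true := fun j => by simp [hI]
  choose! g hg using fun j (hj : j ∈ I) => (hmem j).1 hj
  have hinj : Set.InjOn g I := fun j hj k hk hjk =>
    hc j k (g j) (hg j hj) (by rw [hjk]; exact hg k hk)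
  obtain ⟨σ, hσ⟩ := Finset.exists_equiv_extend_of_card_eq (t := (Finset.univ : Finset (Fin N)))
    (by simp) (Finset.subset_univ (I.image g)) hinj
  have key : ∀ j i, ω j i = true ↔ j ∈ I ∧ g j = i := fun j i =>
    ⟨fun h => ⟨(hmem j).2 ⟨i, h⟩, hr j _ _ (hg j ((hmem j).2 ⟨i, h⟩)) h⟩,
      fun h => h.2 ▸ hg j h.1⟩
  refine ⟨σ.trans (Equiv.subtypeUnivEquiv fun _ => Finset.mem_univ _), I, fun j i => ?_, ?_⟩
  · rw [key]
    refine and_congr_right fun hj => ?_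
    rw [Equiv.trans_apply, Equiv.subtypeUnivEquiv_apply, hσ j hj]
  · rw [Finset.card_eq_sum_ones, Nat.cast_sum, ← Finset.sum_subset (Finset.subset_univ I)]
    · refine Finset.sum_congr rfl fun j hj => ?_
      rw [Finset.sum_eq_single (g j)]
      · simp [bv, hg j hj]
      · intro i _ hi
        have : ω j i = false := by
          by_contra hne
          exact hi ((key j i).1 (by simpa using hne)).2.symm
        simp [bv, this]
      · simp
    · intro j _ hj
      refine Finset.sum_eq_zero fun i _ => ?_
      have : ω j i = false := by
        by_contra hne
        exact hj ((key j i).1 (by simpa using hne)).1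
      simp [bv, this]

lemma Ex_pw_comp {α : Type*} [Fintype α] (μ : α → ℝ) {n : ℕ} (τ : Equiv.Perm (Fin n))
    (F : (Fin n → α) → ℝ) : Ex (pw μ n) (fun v => F fun i => v (τ i)) = Ex (pw μ n) F := by
  unfold Ex
  refine Fintype.sum_equiv (Equiv.arrowCongr τ.symm (Equiv.refl α)) _ _ fun v => ?_
  have : (Equiv.arrowCongr τ.symm (Equiv.refl α)) v = fun i => v (τ i) := by
    ext i; simp [Equiv.arrowCongr]
  rw [this]
  congr 1
  exact (Equiv.prod_comp τ fun i => μ (v i)).symm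

lemma Ex_bulk_cols {p : ℝ} {N : ℕ} (τ : Equiv.Perm (Fin N))
    (F : (Fin N → Fin N → Bool) → ℝ) :
    Ex (bulk p N) (fun ω => F fun j i => ω j (τ i)) = Ex (bulk p N) F :=
  Ex_pw_map (fun (v : Fin N → Bool) i => v (τ i)) (Ex_pw_comp (ber p) τ) N F

lemma Ex_bulk_transpose {p : ℝ} {N : ℕ} (F : (Fin N → Fin N → Bool) → ℝ) :
    Ex (bulk p N) (fun ω => F fun j i => ω i j) = Ex (bulk p N) F := by
  unfold Ex
  refine Fintype.sum_equiv (Equiv.piComm fun _ _ => Bool) _ _ fun ω => ?_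
  have : (Equiv.piComm fun _ _ => Bool) ω = fun j i => ω i j := rfl
  rw [this]
  congr 1
  change ∏ j, ∏ i, ber p (ω j i) = ∏ i, ∏ j, ber p (ω j i)
  exact Finset.prod_comm

/-- Expected number of ordered pairs of distinct points in a common row. -/
lemma Ex_rows {p : ℝ} (h0 : 0 ≤ p) (h1 : p ≤ 1) (N : ℕ) :
    Ex (bulk p N) (fun ω => ∑ j, (∑ i, bv (ω j i)) * ((∑ i, bv (ω j i)) - 1)) ≤
      (N : ℝ) ^ 3 * p ^ 2 := by
  have hW := isW_pw (isW_ber h0 h1) N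
  obtain ⟨hm, hV⟩ := Ex_ber_sum h0 h1 N
  have hrow : Ex (pw (ber p) N) (fun v => (∑ i, bv (v i)) * ((∑ i, bv (v i)) - 1)) =
      N ^ 2 * p ^ 2 - N * p ^ 2 := by
    have e : (fun v : Fin N → Bool => (∑ i, bv (v i)) * ((∑ i, bv (v i)) - 1)) = fun v =>
        ((∑ i, bv (v i) - N * p) ^ 2 + (2 * (N * p) - 1) * ∑ i, bv (v i)) + -(N * p) ^ 2 := by
      funext v; ring
    rw [e, Ex_add, Ex_add, Ex_mul_left, hm, hV, Ex_const hW]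
    ring
  have h := (Ex_pw_sum hW N (fun _ v => (∑ i, bv (v i)) * ((∑ i, bv (v i)) - 1))
    (fun _ => N ^ 2 * p ^ 2 - N * p ^ 2) _ (fun _ => hrow) (fun _ => rfl)).1
  rw [bulk, h, Finset.sum_const, Finset.card_univ, Fintype.card_fin, nsmul_eq_mul]
  have : 0 ≤ (N : ℝ) * (N * p ^ 2) := by positivity
  linarith

/-- Variance bound for the total number of points. -/
lemma Ex_total {p : ℝ} (h0 : 0 ≤ p) (h1 : p ≤ 1) (N : ℕ) :
    Ex (bulk p N) (fun ω => (∑ j, ∑ i, bv (ω j i) - N * (N * p)) ^ 2) ≤ N * (N * p) := by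
  have hW := isW_pw (isW_ber h0 h1) N
  obtain ⟨hm, hV⟩ := Ex_ber_sum h0 h1 N
  have h := (Ex_pw_sum hW N (fun _ v => ∑ i, bv (v i))
    (fun _ => N * p) (fun _ => N * (p * (1 - p))) (fun _ => hm) (fun _ => hV)).2
  simp only [Finset.sum_const, Finset.card_univ, Fintype.card_fin, nsmul_eq_mul] at h
  rw [bulk, h]
  have : 0 ≤ (N : ℝ) * (N * p ^ 2) := by positivity
  linarith

/-- Fraction of the permutations of `Fin n` whose longest increasing subsequence has a length
satisfying `P`. -/
noncomputable def frac (n : ℕ) (P : ℕ → Prop) : ℝ :=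
  (∑ π : Equiv.Perm (Fin n), ind (P (permLIS n π))) / n.factorial

lemma ind_nonneg (P : Prop) : 0 ≤ ind P := by unfold ind; split_ifs <;> norm_num

lemma ind_mono {P Q : Prop} (h : P → Q) : ind P ≤ ind Q :=
  ind_le (ind_nonneg Q) fun hP => by simp [ind, h hP]

lemma frac_nonneg (n : ℕ) (P : ℕ → Prop) : 0 ≤ frac n P :=
  div_nonneg (Finset.sum_nonneg fun _ _ => ind_nonneg _) (by positivity)

/-- Consider a configuration with at most one point per row and column, and suppose that `P` is
decreasing and there are at most `n` points, or that `P` is increasing and there are at least `n`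
points. After a uniformly random permutation of the columns, `P` is at least as likely for the
last-passage time as for the longest increasing subsequence of a uniform permutation of size
`n`. -/
lemma frac_le_avg {n N : ℕ} (hn : n ≤ N) {P : ℕ → Prop} (ω : Fin N → Fin N → Bool)
    (hr : ∀ j i i', ω j i = true → ω j i' = true → i = i')
    (hc : ∀ j j' i, ω j i = true → ω j' i = true → j = j')
    (h : (∀ a b, a ≤ b → P b → P a) ∧ ∑ j, ∑ i, bv (ω j i) ≤ (n : ℝ) ∨
      (∀ a b, a ≤ b → P a → P b) ∧ (n : ℝ) ≤ ∑ j, ∑ i, bv (ω j i)) :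
    N.factorial * frac n P ≤ ∑ τ : Equiv.Perm (Fin N), ind (P (lpp fun j i => ω j (τ i))) := by
  classical
  obtain ⟨σ, I, hσ, hI⟩ := exists_perm ω hr hc
  have e : ∀ τ : Equiv.Perm (Fin N), lpp (fun j i => ω j (τ i)) = lis (τ⁻¹ * σ) I := fun τ =>
    lpp_eq_lis _ _ _ fun j i => by
      rw [hσ, Equiv.Perm.mul_apply, Equiv.Perm.inv_eq_iff_eq]
  have e2 : ∑ τ : Equiv.Perm (Fin N), ind (P (lpp fun j i => ω j (τ i))) =
      ∑ τ : Equiv.Perm (Fin N), ind (P (lis τ I)) := by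
    simp only [e]
    exact Equiv.sum_comp ((Equiv.inv _).trans (Equiv.mulRight σ)) fun τ => ind (P (lis τ I))
  have main : ∀ J : Finset (Fin N), J.card = n → (∀ τ : Equiv.Perm (Fin N),
      P (lis τ J) → P (lis τ I)) → N.factorial * frac n P ≤
        ∑ τ : Equiv.Perm (Fin N), ind (P (lis τ I)) := by
    intro J hJ hP
    have h1 := sum_lis J hJ fun k => ind (P k)
    have hn0 : (0 : ℝ) < n.factorial := by exact_mod_cast n.factorial_pos
    have h2 : N.factorial * frac n P = ∑ τ : Equiv.Perm (Fin N), ind (P (lis τ J)) := by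
      rw [frac, mul_div_assoc', div_eq_iff hn0.ne', mul_comm _ (n.factorial : ℝ), h1]
      simp only [permLIS_eq]
    rw [h2]
    exact Finset.sum_le_sum fun τ _ => ind_mono (hP τ)
  rw [e2]
  rw [← hI] at h
  rcases h with ⟨hP, hle⟩ | ⟨hP, hle⟩
  · obtain ⟨J, hIJ, hJ⟩ := Finset.exists_superset_card_eq (s := I) (n := n)
      (by exact_mod_cast hle) (by simpa using hn)
    exact main J hJ fun τ => hP _ _ (lis_mono τ hIJ)
  · obtain ⟨J, hIJ, hJ⟩ := Finset.exists_subset_card_eq (s := I) (n := n)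
      (by exact_mod_cast hle)
    exact main J hJ fun τ => hP _ _ (lis_mono τ hIJ)

/-- The number of ordered pairs of distinct points in a row is nonnegative, and if it is below one
then the row has at most one point. -/
lemma row_bound {N : ℕ} (v : Fin N → Bool) : 0 ≤ (∑ i, bv (v i)) * ((∑ i, bv (v i)) - 1) ∧
    ((∑ i, bv (v i)) * ((∑ i, bv (v i)) - 1) < 1 → ∀ i i', v i = true → v i' = true → i = i') := by
  have hc : ∑ i, bv (v i) = ((∑ i, (v i).toNat : ℕ) : ℝ) := by simp [bv]
  constructor
  · rw [hc]
    rcases Nat.eq_zero_or_pos (∑ i, (v i).toNat) with h | h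
    · simp [h]
    · have : (1 : ℝ) ≤ ((∑ i, (v i).toNat : ℕ) : ℝ) := by exact_mod_cast h
      exact mul_nonneg (by linarith) (by linarith)
  · intro hlt i i' hi hi'
    by_contra hne
    have h2 : ∑ k ∈ {i, i'}, bv (v k) ≤ ∑ k, bv (v k) :=
      Finset.sum_le_sum_of_subset_of_nonneg (Finset.subset_univ _) fun _ _ _ => by simp [bv]
    rw [Finset.sum_pair hne, hi, hi'] at h2
    norm_num [bv] at h2
    change 2 ≤ ∑ k, bv (v k) at h2
    nlinarith

/-- Comparison of a uniform permutation of size `n` with the lattice, where `t ^ 2` is the expected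
number of points. The error term `2 * t ^ 4 / N` accounts for pairs of points in a common row or
column, the other one for the number of points lying on the wrong side of `n`. -/
theorem frac_le_lattice {n N : ℕ} (hn : n ≤ N) (hN : 0 < N) {P : ℕ → Prop} {x t : ℝ}
    (hx1 : x ^ 2 ≤ 1) (ht : t = N * x)
    (h : (∀ a b, a ≤ b → P b → P a) ∧ t ^ 2 < n ∨ (∀ a b, a ≤ b → P a → P b) ∧ (n : ℝ) < t ^ 2) :
    frac n P * (1 - (2 * t ^ 4 / N + t ^ 2 / (n - t ^ 2) ^ 2)) ≤
      Ex (bulk (x ^ 2) N) (fun ω => ind (P (lpp ω))) := by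
  classical
  set p := x ^ 2 with hp
  have hp0 : 0 ≤ p := sq_nonneg x
  have hNp : (N : ℝ) * (N * p) = t ^ 2 := by rw [ht]; ring
  have hNr : (0 : ℝ) < N := by exact_mod_cast hN
  have hne : (n : ℝ) - t ^ 2 ≠ 0 := by
    rcases h with h | h <;> [have := h.2; have := h.2] <;> intro h0 <;> linarith
  have hsq : 0 < ((n : ℝ) - t ^ 2) ^ 2 := by positivity
  have hW := isW_bulk hp0 hx1 N
  have hf : (0 : ℝ) < N.factorial := by exact_mod_cast N.factorial_pos
  set R : (Fin N → Fin N → Bool) → ℝ :=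
    fun ω => ∑ j, (∑ i, bv (ω j i)) * ((∑ i, bv (ω j i)) - 1) with hR
  set S : (Fin N → Fin N → Bool) → ℝ :=
    fun ω => (∑ j, ∑ i, bv (ω j i) - N * (N * p)) ^ 2 with hS
  -- For a bad configuration the left-hand factor is nonpositive; for a good one `frac_le_avg`
  -- applies. Averaging over `ω` removes the column permutation by exchangeability.
  have pt : ∀ ω, frac n P * (1 + -1 * (R ω + R (fun j i => ω i j) +
      (1 / (n - t ^ 2) ^ 2) * S ω)) ≤
        1 / N.factorial * ∑ τ : Equiv.Perm (Fin N), ind (P (lpp fun j i => ω j (τ i))) := by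
    intro ω
    have hRn : ∀ ω, 0 ≤ R ω := fun ω => Finset.sum_nonneg fun j _ => (row_bound (ω j)).1
    have hR1 : ∀ ω, R ω < 1 → ∀ j i i', ω j i = true → ω j i' = true → i = i' := fun ω hlt j =>
      (row_bound (ω j)).2 (lt_of_le_of_lt (Finset.single_le_sum
        (f := fun j => (∑ i, bv (ω j i)) * ((∑ i, bv (ω j i)) - 1))
        (fun j _ => (row_bound (ω j)).1) (Finset.mem_univ j)) hlt)
    have hSn : 0 ≤ (1 / ((n : ℝ) - t ^ 2) ^ 2) * S ω :=
      mul_nonneg (by positivity) (sq_nonneg _)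
    have h1 := hRn ω
    have h2 := hRn (fun j i => ω i j)
    have hf0 := frac_nonneg n P
    have hnn : 0 ≤ ∑ τ : Equiv.Perm (Fin N), ind (P (lpp fun j i => ω j (τ i))) :=
      Finset.sum_nonneg fun _ _ => ind_nonneg _
    by_cases hlt : R ω + R (fun j i => ω i j) + (1 / ((n : ℝ) - t ^ 2) ^ 2) * S ω < 1
    · have h3 : S ω < ((n : ℝ) - t ^ 2) ^ 2 := by
        have : (1 / ((n : ℝ) - t ^ 2) ^ 2) * S ω < 1 := by linarith
        rwa [one_div_mul_eq_div, div_lt_one hsq] at this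
      have h4 := frac_le_avg hn (P := P) ω (hR1 ω (by linarith))
        (fun j j' i => hR1 (fun j i => ω i j) (by linarith) i j j') (by
          rw [hS] at h3
          simp only [hNp] at h3
          have h3 := sq_lt_sq.1 h3
          rcases h with ⟨hP, hlt⟩ | ⟨hP, hlt⟩
          · rw [abs_of_pos (by linarith : 0 < (n : ℝ) - t ^ 2)] at h3
            exact Or.inl ⟨hP, by linarith [(abs_lt.1 h3).2]⟩
          · rw [abs_of_neg (by linarith : (n : ℝ) - t ^ 2 < 0)] at h3
            exact Or.inr ⟨hP, by linarith [(abs_lt.1 h3).1]⟩)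
      calc _ ≤ frac n P := mul_le_of_le_one_right hf0 (by linarith)
        _ ≤ _ := by
          rw [one_div_mul_eq_div, le_div_iff₀ hf]
          linarith
    · refine le_trans (mul_nonpos_of_nonneg_of_nonpos hf0 (by linarith)) ?_
      positivity
  have hE := Ex_mono hW pt
  rw [Ex_mul_left, Ex_add, Ex_const hW, Ex_mul_left, Ex_add, Ex_add, Ex_mul_left,
    Ex_bulk_transpose R, Ex_mul_left,
    Ex_sum (bulk p N) Finset.univ fun (τ : Equiv.Perm (Fin N)) (ω : Fin N → Fin N → Bool) =>
      ind (P (lpp fun j i => ω j (τ i)))] at hE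
  have hcols : ∀ τ : Equiv.Perm (Fin N),
      Ex (bulk p N) (fun ω => ind (P (lpp fun j i => ω j (τ i)))) =
        Ex (bulk p N) (fun ω => ind (P (lpp ω))) := fun τ =>
    Ex_bulk_cols τ fun ω => ind (P (lpp ω))
  simp only [hcols, Finset.sum_const, Finset.card_univ, Fintype.card_perm, Fintype.card_fin,
    nsmul_eq_mul] at hE
  rw [← mul_assoc, one_div_mul_cancel hf.ne', one_mul] at hE
  refine le_trans (mul_le_mul_of_nonneg_left ?_ (frac_nonneg n P)) hE
  have h1 : Ex (bulk p N) R ≤ t ^ 4 / N := by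
    refine (Ex_rows hp0 hx1 N).trans (le_of_eq ?_)
    rw [eq_div_iff hNr.ne', ht, hp]
    ring
  have h2 : (1 / ((n : ℝ) - t ^ 2) ^ 2) * Ex (bulk p N) S ≤ t ^ 2 / (n - t ^ 2) ^ 2 := by
    rw [one_div_mul_eq_div]
    gcongr
    exact (Ex_total hp0 hx1 N).trans hNp.le
  have h3 : 2 * t ^ 4 / N = t ^ 4 / N + t ^ 4 / N := by ring
  linarith

/-! ### Convergence in probability -/

/-- The error of `frac_le_lattice` for a lattice of side `n ^ 3` and `c ^ 2 * n` expected
points. -/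
lemma error_le {δ c n t : ℝ} (hn : 2000 ≤ n * δ ^ 2) (hn1 : 2000 ≤ n)
    (hc4 : c ^ 2 ≤ 4) (ht2 : t ^ 2 = c ^ 2 * n) (h : δ ^ 2 ≤ (1 - c ^ 2) ^ 2) :
    2 * t ^ 4 / n ^ 3 + t ^ 2 / (n - t ^ 2) ^ 2 ≤ 1 / 2 := by
  have hn0 : 0 < n := by linarith
  have h1 : 2 * t ^ 4 / n ^ 3 ≤ 1 / 4 := by
    have h3 : (c ^ 2) ^ 2 ≤ 16 := by nlinarith [sq_nonneg c]
    have h4 : 2 * t ^ 4 / n ^ 3 = 2 * (c ^ 2) ^ 2 / n := by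
      have : t ^ 4 = (c ^ 2 * n) ^ 2 := by rw [← ht2]; ring
      rw [this]
      field_simp
    rw [h4, div_le_iff₀ hn0]
    linarith
  have h2 : t ^ 2 / (n - t ^ 2) ^ 2 ≤ 1 / 4 := by
    have h4 : (n - t ^ 2) ^ 2 = (1 - c ^ 2) ^ 2 * n * n := by rw [ht2]; ring
    have h5 : 2000 ≤ (1 - c ^ 2) ^ 2 * n := by
      have := mul_le_mul_of_nonneg_right h hn0.le
      linarith
    have h6 : 2000 * n ≤ (1 - c ^ 2) ^ 2 * n * n := mul_le_mul_of_nonneg_right h5 hn0.le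
    have h7 : c ^ 2 * n ≤ 4 * n := mul_le_mul_of_nonneg_right hc4 hn0.le
    rw [h4, ht2, div_le_iff₀ (by linarith)]
    linarith
  linarith

/-- An event that forces the last-passage time of a lattice with `(c * √n) ^ 2` expected points to
deviate from its typical value is unlikely for a uniform permutation of size `n`, if `P` is
decreasing and the lattice has fewer points than `n`, or `P` is increasing and it has more. The
lattice of side `n ^ 3` is fine enough for collisions of rows or columns to be negligible. -/
lemma frac_le {δ c : ℝ} {n : ℕ} (hδ : 0 < δ) (hδ1 : δ ≤ 1) (hn : 2000 / δ ^ 2 ≤ n)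
    (hc : 1 / 2 ≤ c) (hc2 : c ≤ 2) {P : ℕ → Prop}
    (hP : ∀ k : ℕ, P k → ¬((2 - 2 * δ) * (c * √n) ≤ k ∧ (k : ℝ) ≤ (2 + 2 * δ) * (c * √n)))
    (h : (∀ a b, a ≤ b → P b → P a) ∧ c ^ 2 ≤ 1 - δ ∨
      (∀ a b, a ≤ b → P a → P b) ∧ 1 + δ ≤ c ^ 2) :
    frac n P ≤ 800000 / δ ^ 4 / √n := by
  rw [div_le_iff₀ (by positivity)] at hn
  have hδ2 : δ ^ 2 ≤ 1 := by nlinarith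
  have hn1 : (2000 : ℝ) ≤ n := by nlinarith [Nat.cast_nonneg (α := ℝ) n]
  have hn0 : (0 : ℝ) < n := by linarith
  have hnN : 1 ≤ n := by exact_mod_cast hn0
  have hs : √(n : ℝ) ^ 2 = n := Real.sq_sqrt hn0.le
  have hs0 : 0 < √(n : ℝ) := Real.sqrt_pos.2 hn0
  have hs2 : 2 ≤ √(n : ℝ) := by nlinarith
  have hc0 : 0 < c := by linarith
  have hc4 : c ^ 2 ≤ 4 := by nlinarith
  set t := c * √(n : ℝ) with ht
  have ht0 : 0 < t := by positivity
  have ht1 : 1 ≤ t := by nlinarith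
  have ht2 : t ^ 2 = c ^ 2 * n := by rw [ht, mul_pow, hs]
  have hN0 : (0 : ℝ) < ((n ^ 3 : ℕ) : ℝ) := by positivity
  have hNc : ((n ^ 3 : ℕ) : ℝ) = (n : ℝ) ^ 3 := by push_cast; rfl
  set x := t / ((n ^ 3 : ℕ) : ℝ) with hx
  have htx : t = ((n ^ 3 : ℕ) : ℝ) * x := by rw [hx]; field_simp
  have hx0 : 0 < x := by positivity
  have hxle : x ≤ δ ^ 2 / 1000 := by
    rw [hx, div_le_iff₀ hN0, hNc]
    have h0 : √(n : ℝ) ≤ n := by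
      have := mul_le_mul_of_nonneg_right hs2 hs0.le
      rw [← sq, hs] at this
      linarith
    have h1 : t ≤ 2 * n := mul_le_mul hc2 h0 hs0.le zero_le_two
    have h2 : (n : ℝ) ≤ n ^ 2 := le_self_pow₀ (by linarith) two_ne_zero
    have h3 : 2 * (n : ℝ) ^ 2 ≤ δ ^ 2 / 1000 * n ^ 3 := by
      have := mul_le_mul_of_nonneg_right hn (by positivity : 0 ≤ (n : ℝ) ^ 2 / 1000)
      calc 2 * (n : ℝ) ^ 2 = 2000 * (n ^ 2 / 1000) := by ring
        _ ≤ n * δ ^ 2 * (n ^ 2 / 1000) := this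
        _ = _ := by ring
    linarith
  have hx1 : x ^ 2 ≤ 1 := by
    have : x ≤ 1 := by linarith
    nlinarith
  have hL := lattice_bound hδ hδ1 hx0 hxle htx ht1
  have hF := frac_le_lattice (n := n) (N := n ^ 3) (P := P) (Nat.le_self_pow (by norm_num) n)
    (by positivity) hx1 htx (by
      rw [ht2]
      have := mul_pos hδ hn0
      rcases h with ⟨hm, hh⟩ | ⟨hm, hh⟩
      · exact Or.inl ⟨hm, by linarith [mul_le_mul_of_nonneg_right hh hn0.le]⟩
      · exact Or.inr ⟨hm, by linarith [mul_le_mul_of_nonneg_right hh hn0.le]⟩)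
  have hW := isW_bulk (sq_nonneg x) hx1 (n ^ 3)
  have hE := Ex_mono hW fun ω => ind_mono (hP (lpp ω))
  have hB : 2 * t ^ 4 / ((n ^ 3 : ℕ) : ℝ) + t ^ 2 / (n - t ^ 2) ^ 2 ≤ 1 / 2 := by
    rw [hNc]
    refine error_le hn hn1 hc4 ht2 (sq_le_sq.2 ?_)
    rw [abs_of_pos hδ]
    rcases h with ⟨-, hh⟩ | ⟨-, hh⟩
    · exact le_trans (by linarith) (le_abs_self _)
    · exact le_trans (by linarith) (neg_le_abs _)
  have hf0 := frac_nonneg n P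
  have h1 : frac n P * (1 / 2) ≤ 200000 / (δ ^ 4 * t) :=
    le_trans (mul_le_mul_of_nonneg_left (by linarith) hf0) (hF.trans (hE.trans hL))
  have h2 : 200000 / (δ ^ 4 * t) ≤ 400000 / δ ^ 4 / √n := by
    rw [div_div, div_le_div_iff₀ (by positivity) (by positivity), ht]
    have h4 : 0 ≤ δ ^ 4 * √(n : ℝ) := by positivity
    have := mul_le_mul_of_nonneg_left hc h4
    linarith
  have h3 : 800000 / δ ^ 4 / √(n : ℝ) = 2 * (400000 / δ ^ 4 / √n) := by ring
  linarith

lemma frac_eq (n : ℕ) (P : ℕ → Prop) :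
    frac n P = (Set.ncard {π : Equiv.Perm (Fin n) | P (permLIS n π)} : ℝ) / n.factorial := by
  classical
  rw [frac, Set.ncard_eq_toFinset_card']
  congr 1
  simp [ind]

lemma frac_le_one (n : ℕ) (P : ℕ → Prop) : frac n P ≤ 1 := by
  have : (0 : ℝ) < n.factorial := by exact_mod_cast n.factorial_pos
  rw [frac, div_le_one this]
  calc _ ≤ ∑ π : Equiv.Perm (Fin n), (1 : ℝ) :=
        Finset.sum_le_sum fun _ _ => ind_le zero_le_one fun _ => le_rfl
    _ = n.factorial := by simp [Fintype.card_perm]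

/-- Union bound for the complement of `P`. -/
lemma one_sub_le_frac (n : ℕ) {P Q R : ℕ → Prop} (h : ∀ k, ¬Q k → ¬R k → P k) :
    1 - (frac n Q + frac n R) ≤ frac n P := by
  have hf : (0 : ℝ) < n.factorial := by exact_mod_cast n.factorial_pos
  have key : (n.factorial : ℝ) ≤ ∑ π : Equiv.Perm (Fin n), (ind (P (permLIS n π)) +
      (ind (Q (permLIS n π)) + ind (R (permLIS n π)))) := by
    calc (n.factorial : ℝ) = ∑ π : Equiv.Perm (Fin n), (1 : ℝ) := by simp [Fintype.card_perm]
      _ ≤ _ := Finset.sum_le_sum fun π _ => by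
        have := h (permLIS n π)
        unfold ind
        split_ifs <;> first
          | exact absurd (this ‹¬Q _› ‹¬R _›) ‹¬P _›
          | norm_num
  rw [Finset.sum_add_distrib, Finset.sum_add_distrib] at key
  rw [frac, frac, frac, ← add_div, sub_le_iff_le_add, ← add_div, le_div_iff₀ hf]
  linarith

end Ulam

/-- Vershik–Kerov–Logan–Shepp: under uniform measure on `S_n`, `L(π)/(2√n) → 1` in
probability as `n → ∞`. -/
theorem stmt10 (ε : ℝ) (hε : 0 < ε) :
    Filter.Tendsto
      (fun n : ℕ =>
        (Set.ncard {π : Equiv.Perm (Fin n) |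
            |(permLIS n π : ℝ) / (2 * Real.sqrt n) - 1| < ε} : ℝ) / (n.factorial : ℝ))
      Filter.atTop (nhds 1) := by
  -- The value of `δ` makes both `(1 - δ) ^ 2` and `(1 + δ) ^ 2` lie within `ε` of `1`.
  obtain ⟨δ, hδ0, hδ1, hδε⟩ : ∃ δ : ℝ, 0 < δ ∧ δ ≤ 1 / 3 ∧ 3 * δ ≤ ε :=
    ⟨min ε 1 / 3, by positivity, by linarith [min_le_right ε 1], by linarith [min_le_left ε 1]⟩
  have hlow : Filter.Tendsto
      (fun n : ℕ => 1 - (800000 / δ ^ 4 / √(n : ℝ) + 800000 / δ ^ 4 / √(n : ℝ)))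
      Filter.atTop (nhds 1) := by
    have h1 : Filter.Tendsto (fun n : ℕ => 800000 / δ ^ 4 / √(n : ℝ)) Filter.atTop (nhds 0) :=
      tendsto_const_nhds.div_atTop (Real.tendsto_sqrt_atTop.comp tendsto_natCast_atTop_atTop)
    simpa using (h1.add h1).const_sub 1
  have hfr : ∀ n : ℕ, (Set.ncard {π : Equiv.Perm (Fin n) |
      |(permLIS n π : ℝ) / (2 * Real.sqrt n) - 1| < ε} : ℝ) / (n.factorial : ℝ) =
        Ulam.frac n fun k => |(k : ℝ) / (2 * Real.sqrt n) - 1| < ε := fun n =>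
    (Ulam.frac_eq n fun k => |(k : ℝ) / (2 * Real.sqrt n) - 1| < ε).symm
  simp only [hfr]
  refine tendsto_of_tendsto_of_tendsto_of_le_of_le' hlow tendsto_const_nhds ?_
    (Filter.Eventually.of_forall fun n => Ulam.frac_le_one n _)
  filter_upwards [Filter.eventually_ge_atTop ⌈2000 / δ ^ 2⌉₊, Filter.eventually_ge_atTop 1]
    with n hn hn1
  have hn' : 2000 / δ ^ 2 ≤ n := Nat.ceil_le.1 hn
  have hs0 : 0 < √(n : ℝ) := Real.sqrt_pos.2 (by exact_mod_cast hn1)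
  -- Short longest increasing subsequences: a lattice with fewer than `n` points is a lower bound.
  have h1 := Ulam.frac_le (c := 1 - δ) hδ0 (by linarith) hn' (by linarith) (by linarith)
    (P := fun k => (k : ℝ) < (2 - 2 * δ) * ((1 - δ) * √n))
    (fun k hk hk' => absurd hk'.1 (not_le.2 hk))
    (Or.inl ⟨fun a b hab hb => lt_of_le_of_lt (by exact_mod_cast hab) hb, by nlinarith⟩)
  -- Long longest increasing subsequences: a lattice with more than `n` points is an upper bound.
  have h2 := Ulam.frac_le (c := 1 + δ) hδ0 (by linarith) hn' (by linarith) (by linarith)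
    (P := fun k => (2 + 2 * δ) * ((1 + δ) * √n) < (k : ℝ))
    (fun k hk hk' => absurd hk'.2 (not_le.2 hk))
    (Or.inr ⟨fun a b hab ha => lt_of_lt_of_le ha (by exact_mod_cast hab), by nlinarith⟩)
  refine le_trans (by linarith) (Ulam.one_sub_le_frac n
    (Q := fun k => (k : ℝ) < (2 - 2 * δ) * ((1 - δ) * √n))
    (R := fun k => (2 + 2 * δ) * ((1 + δ) * √n) < (k : ℝ)) fun k hQ hR => ?_)
  have hQ := not_lt.1 hQ
  have hR := not_lt.1 hR
  rw [abs_lt]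
  constructor
  · rw [lt_sub_iff_add_lt, lt_div_iff₀ (by positivity)]
    nlinarith [mul_pos hδ0 hs0, mul_pos (mul_pos hδ0 hδ0) hs0, mul_le_mul_of_nonneg_right hδε hs0.le]
  · rw [sub_lt_iff_lt_add, div_lt_iff₀ (by positivity)]
    nlinarith [mul_pos hδ0 hs0, mul_le_mul_of_nonneg_right hδ1 (mul_pos hδ0 hs0).le,
      mul_le_mul_of_nonneg_right hδε hs0.le]
end

section
/- Let (F_k)_{k≥0} be a sequence of real numbers with 1 ≥ F₀ ≥ F₁ ≥ F₂ ≥ … ≥ 0, and define F(ξ) := e^{−ξ} Σ_{k≥0} ξ^k F_k / k! for ξ ≥ 0. Then there exist C > 0 and k₀ ∈ ℕ such that for all k > k₀: F(k + 4√(k log k)) − C/k² ≤ F_k ≤ F(k − 4√(k log k)) + C/k². -/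
/-!
`Fp ξ` is the expectation of `F X` for a Poisson variable `X` of mean `ξ`. Since `F` is
nonincreasing with values in `[0, 1]`, for every `t ≥ 0`
`F X ≤ F k + exp (-t * (X - k))` and `F k ≤ F X + exp (t * (X - k))`,
as the exponential is at least `1` in the range where monotonicity does not suffice. Taking
expectations, `E exp (s * X) = exp (ξ * (exp s - 1))` turns the error terms into Chernoff bounds
(`poisson_le`, `le_poisson`). With `δ = 4 √(k log k)`, so `δ² = 16 k log k`, and
`exp s - 1 ≤ s + s²` for `|s| ≤ 1`, the choices `t = δ / (4k)` at `ξ = k + δ ≤ 2k` and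
`t = δ / (2k)` at `ξ = k - δ` bound the errors by `k⁻²` and `k⁻⁴` respectively, as soon as `δ ≤ k`.
-/

theorem hasSum_exp_series (x : ℝ) :
    HasSum (fun j : ℕ => x ^ j / (j.factorial : ℝ)) (Real.exp x) := by
  rw [Real.exp_eq_exp_ℝ]
  exact NormedSpace.expSeries_div_hasSum_exp x

theorem summable_poisson {F : ℕ → ℝ} (hF0 : F 0 ≤ 1) (hFnonneg : ∀ k, 0 ≤ F k)
    (hF : Antitone F) {ξ : ℝ} (hξ : 0 ≤ ξ) :
    Summable fun j : ℕ => ξ ^ j * F j / (j.factorial : ℝ) := by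
  refine Summable.of_nonneg_of_le (fun j => ?_) (fun j => ?_) (hasSum_exp_series ξ).summable
  · have := hFnonneg j
    positivity
  · have : F j ≤ 1 := (hF (Nat.zero_le j)).trans hF0
    gcongr
    exact mul_le_of_le_one_right (by positivity) this

/-- Chernoff form of `E F(X) ≤ F k + P(X < k)` for `X` Poisson of mean `ξ`. -/
theorem poisson_le {F : ℕ → ℝ} (hF0 : F 0 ≤ 1) (hFnonneg : ∀ k, 0 ≤ F k)
    (hF : Antitone F) {ξ t : ℝ} (hξ : 0 ≤ ξ) (ht : 0 ≤ t) (k : ℕ) :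
    Real.exp (-ξ) * ∑' j : ℕ, ξ ^ j * F j / (j.factorial : ℝ) ≤
      F k + Real.exp (t * k + ξ * (Real.exp (-t) - 1)) := by
  have hs := ((hasSum_exp_series ξ).mul_left (F k)).add
    ((hasSum_exp_series (ξ * Real.exp (-t))).mul_left (Real.exp (t * k)))
  have hle := hasSum_le (fun j => ?_) (summable_poisson hF0 hFnonneg hF hξ).hasSum hs
  · calc _ ≤ Real.exp (-ξ) * (F k * Real.exp ξ +
          Real.exp (t * k) * Real.exp (ξ * Real.exp (-t))) := by gcongr
      _ = F k * (Real.exp (-ξ) * Real.exp ξ) +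
          Real.exp (-ξ) * (Real.exp (t * k) * Real.exp (ξ * Real.exp (-t))) := by ring
      _ = _ := by
        rw [← Real.exp_add, ← Real.exp_add, ← Real.exp_add, neg_add_cancel, Real.exp_zero, mul_one]
        congr 2
        ring
  · have key : F j ≤ F k + Real.exp (t * k) * Real.exp (-t) ^ j := by
      rw [← Real.exp_nat_mul, ← Real.exp_add]
      rcases le_total k j with h | h
      · exact (hF h).trans (le_add_of_nonneg_right (Real.exp_pos _).le)
      · have h1 : F j ≤ 1 := (hF (Nat.zero_le j)).trans hF0
        have hc : (j : ℝ) ≤ k := by exact_mod_cast h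
        have h2 : 1 ≤ Real.exp (t * k + j * -t) := Real.one_le_exp (by nlinarith)
        linarith [hFnonneg k]
    calc ξ ^ j * F j / (j.factorial : ℝ)
        ≤ ξ ^ j * (F k + Real.exp (t * k) * Real.exp (-t) ^ j) / (j.factorial : ℝ) := by gcongr
      _ = _ := by rw [mul_pow]; ring

/-- Chernoff form of `F k ≤ E F(X) + P(X > k)` for `X` Poisson of mean `ξ`. -/
theorem le_poisson {F : ℕ → ℝ} (hF0 : F 0 ≤ 1) (hFnonneg : ∀ k, 0 ≤ F k)
    (hF : Antitone F) {ξ t : ℝ} (hξ : 0 ≤ ξ) (ht : 0 ≤ t) (k : ℕ) :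
    F k ≤ Real.exp (-ξ) * ∑' j : ℕ, ξ ^ j * F j / (j.factorial : ℝ) +
      Real.exp (-(t * k) + ξ * (Real.exp t - 1)) := by
  have hs := (summable_poisson hF0 hFnonneg hF hξ).hasSum.add
    ((hasSum_exp_series (ξ * Real.exp t)).mul_left (Real.exp (-(t * k))))
  have hle := hasSum_le (fun j => ?_) ((hasSum_exp_series ξ).mul_left (F k)) hs
  · calc F k = Real.exp (-ξ) * (F k * Real.exp ξ) := by
          rw [mul_left_comm, ← Real.exp_add, neg_add_cancel, Real.exp_zero, mul_one]
      _ ≤ Real.exp (-ξ) * ((∑' j : ℕ, ξ ^ j * F j / (j.factorial : ℝ)) +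
          Real.exp (-(t * k)) * Real.exp (ξ * Real.exp t)) := by gcongr
      _ = _ := by
        rw [mul_add, ← Real.exp_add, ← Real.exp_add]
        congr 2
        ring
  · have key : F k ≤ F j + Real.exp (-(t * k)) * Real.exp t ^ j := by
      rw [← Real.exp_nat_mul, ← Real.exp_add]
      rcases le_total j k with h | h
      · exact (hF h).trans (le_add_of_nonneg_right (Real.exp_pos _).le)
      · have h1 : F k ≤ 1 := (hF (Nat.zero_le k)).trans hF0
        have hc : (k : ℝ) ≤ j := by exact_mod_cast h
        have h2 : 1 ≤ Real.exp (-(t * k) + j * t) := Real.one_le_exp (by nlinarith)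
        linarith [hFnonneg j]
    calc F k * (ξ ^ j / (j.factorial : ℝ))
        = ξ ^ j * F k / (j.factorial : ℝ) := by ring
      _ ≤ ξ ^ j * (F j + Real.exp (-(t * k)) * Real.exp t ^ j) / (j.factorial : ℝ) := by gcongr
      _ = _ := by rw [mul_pow]; ring

theorem exp_sub_one_le {s : ℝ} (hs : |s| ≤ 1) : Real.exp s - 1 ≤ s + s ^ 2 := by
  have := (abs_le.1 (Real.abs_exp_sub_one_sub_id_le hs)).2
  linarith

/-- Johansson's de-Poissonization lemma. -/
theorem stmt11 (F : ℕ → ℝ) (hF0 : F 0 ≤ 1) (hFnonneg : ∀ k, 0 ≤ F k)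
    (hFmono : ∀ k, F (k + 1) ≤ F k) :
    let Fp : ℝ → ℝ := fun ξ => Real.exp (-ξ) * ∑' k : ℕ, ξ ^ k * F k / (k.factorial : ℝ)
    ∃ C > (0 : ℝ), ∃ k₀ : ℕ, ∀ k : ℕ, k₀ < k →
      Fp ((k : ℝ) + 4 * Real.sqrt (k * Real.log k)) - C / (k : ℝ) ^ 2 ≤ F k ∧
      F k ≤ Fp ((k : ℝ) - 4 * Real.sqrt (k * Real.log k)) + C / (k : ℝ) ^ 2 := by
  intro Fp
  have hF : Antitone F := antitone_nat_of_succ_le hFmono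
  -- `16 log k ≤ k` is equivalent to `δ ≤ k`, which makes `k - δ` nonnegative and `t ≤ 1`.
  have hlog : ∀ᶠ k : ℕ in Filter.atTop, 16 * Real.log k ≤ k := by
    have h := (Real.isLittleO_log_id_atTop.bound (show (0 : ℝ) < 1 / 16 by norm_num))
    filter_upwards [tendsto_natCast_atTop_atTop.eventually h] with k hk
    have h1 := (le_abs_self (Real.log k)).trans hk
    simp only [id, Real.norm_eq_abs, Nat.abs_cast] at h1
    linarith
  obtain ⟨k₀, hk₀⟩ := Filter.eventually_atTop.1 hlog
  refine ⟨1, one_pos, k₀, fun k hk => ?_⟩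
  have hkN : 1 ≤ k := by omega
  have hk1 : (1 : ℝ) ≤ k := by exact_mod_cast hkN
  have hkpos : (0 : ℝ) < k := by linarith
  have hL : 0 ≤ Real.log k := Real.log_nonneg hk1
  have h16 := hk₀ k hk.le
  have herr : 1 / (k : ℝ) ^ 2 = Real.exp (-(2 * Real.log k)) := by
    rw [Real.exp_neg, two_mul, Real.exp_add, Real.exp_log hkpos]
    field_simp
  set L := Real.log k with hLdef
  set δ := 4 * Real.sqrt (k * L) with hδ
  have hδ0 : 0 ≤ δ := by positivity
  have hδ2 : δ ^ 2 = 16 * k * L := by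
    rw [hδ, mul_pow, Real.sq_sqrt (by positivity)]
    ring
  have hδk : δ ≤ k := by
    refine abs_le_of_sq_le_sq' ?_ hkpos.le |>.2
    rw [hδ2]
    nlinarith
  rw [herr]
  constructor
  · obtain ⟨t, ht⟩ : ∃ t, t = δ / (4 * k) := ⟨_, rfl⟩
    have hδt : δ = 4 * k * t := by rw [ht]; field_simp
    have ht0 : 0 ≤ t := by rw [ht]; positivity
    have ht1 : t ≤ 1 := by nlinarith
    have hkt : k * t ^ 2 = L := by
      have : (k : ℝ) * (k * t ^ 2) = k * L := by rw [hδt] at hδ2; linarith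
      exact mul_left_cancel₀ hkpos.ne' this
    have hmain := poisson_le hF0 hFnonneg hF (ξ := k + δ) (by linarith) ht0 k
    have he := exp_sub_one_le (s := -t) (by rwa [abs_neg, abs_of_nonneg ht0])
    have hexp : t * k + (k + δ) * (Real.exp (-t) - 1) ≤ -(2 * L) := by
      have h1 := mul_le_mul_of_nonneg_left he (show 0 ≤ k + δ by linarith)
      have h2 := mul_le_mul_of_nonneg_right hδk (sq_nonneg t)
      have h3 : δ * t = 4 * L := by rw [hδt, ← hkt]; ring
      linarith
    have := Real.exp_le_exp.2 hexp
    simp only [Fp]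
    linarith
  · obtain ⟨t, ht⟩ : ∃ t, t = δ / (2 * k) := ⟨_, rfl⟩
    have hδt : δ = 2 * k * t := by rw [ht]; field_simp
    have ht0 : 0 ≤ t := by rw [ht]; positivity
    have ht1 : t ≤ 1 := by nlinarith
    have hkt : k * t ^ 2 = 4 * L := by
      have : (k : ℝ) * (k * t ^ 2) = k * (4 * L) := by rw [hδt] at hδ2; linarith
      exact mul_left_cancel₀ hkpos.ne' this
    have hmain := le_poisson hF0 hFnonneg hF (ξ := k - δ) (by linarith) ht0 k
    have he := exp_sub_one_le (s := t) (by rwa [abs_of_nonneg ht0])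
    have hexp : -(t * k) + (k - δ) * (Real.exp t - 1) ≤ -(2 * L) := by
      have h1 := mul_le_mul_of_nonneg_left he (show 0 ≤ k - δ by linarith)
      have h2 := mul_nonneg hδ0 (sq_nonneg t)
      have h3 : δ * t = 8 * L := by
        have : δ * t = 2 * (k * t ^ 2) := by rw [hδt]; ring
        linarith
      linarith
    have := Real.exp_le_exp.2 hexp
    simp only [Fp]
    linarith
end

section
/- Let n ≥ 1, let E ⊂ ℝ be compact with positive Lebesgue measure, and let ρ : ℝ → ℝ be continuous with ρ > 0 on E. Define τ(t₁,t₂,t₃) := ∫_{E^n} Δ_n(z)² ∏_{k=1}^n ρ(z_k) exp(t₁ z_k + t₂ z_k² + t₃ z_k³) dz₁…dz_n. Then τ is smooth and strictly positive on ℝ³, and F := log τ satisfies the Kadomtsev–Petviashvili (KP) equation (∂/∂t₁)⁴ F + 3 (∂/∂t₂)² F − 4 ∂²F/∂t₁∂t₃ + 6 ((∂/∂t₁)² F)² = 0 at every point of ℝ³. -/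
/-!
By differentiation under the integral sign, the derivatives of `τ` are the moments `L f` of products
of power sums `p_k = ∑ᵢ zᵢ ^ k` against the density `Δ_n(z)² ∏ ρ(zᵢ) exp(t₁ zᵢ + t₂ zᵢ² + t₃ zᵢ³)`.
Multiplied by `τ²`, the KP equation for `log τ` becomes the Hirota bilinear equation
`L 1 L(p₁⁴) - 4 L p₁ L(p₁³) + 3 L(p₁²)² + 3 L 1 L(p₂²) - 3 (L p₂)² - 4 L 1 L(p₁ p₃) + 4 L p₁ L p₃ = 0`
(`iteratedDeriv_four_log`, `hirota_bilinear`).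

Let `q_i` be the coefficients of `∏ (1 - zᵢ X)`. By Newton's identities the left-hand side is
`12 (π₀₁ π₂₃ - π₀₂ π₁₃ + π₀₃ π₁₂)`, where `π_ij = L(q_i q_{j-1}) - L(q_{i-1} q_j)` (with `q_{-1} = 0`)
are the coefficients of the antisymmetric kernel `(y - x) L(∏ (1 - zᵢ x) ∏ (1 - zᵢ y))`
(`hirota_of_plucker`). So it is enough that this kernel has the form
`T (PB(x) PA(y) - PA(x) PB(y))`: the expression is then a three-term Plücker relation
(`plucker_of_rank_two`).

For the rank-two property (`rank_two`), `(y - x) ∏ (1 - zᵢ x) ∏ (1 - zᵢ y) Δ_n(z)` is a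
homogeneous Vandermonde determinant in `n + 2` points, two rows of which depend on `x` and `y`
(`bordered_vandermonde`). Integrating it against the remaining factor `Δ_n(z)` with Andréief's
identity (`andreief`) gives `n!` times the determinant of the moment matrix `H` bordered by those two
rows. Since `n! det H = τ > 0` (`tau_pos`), the Schur complement of `H` reduces this to a `2 × 2`
determinant with rows `(PB, PA)` at `x` and at `y` (`bordered_det_rank_two`).
-/

open scoped BigOperators
open MeasureTheory

/-- Vandermonde product `Δ_n(x) = ∏_{i<j} (x_i − x_j)`. -/
def Vdm (n : ℕ) (x : Fin n → ℝ) : ℝ :=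
  ∏ p ∈ Finset.univ.filter (fun p : Fin n × Fin n => p.1 < p.2), (x p.1 - x p.2)

/-! ### Newton's identities and the Plücker relation -/

section
open Polynomial

/-- Newton's identities for the first three power sums of `a`, in terms of the coefficients of
`∏ (1 - aᵢ X)`, that is, of the signed elementary symmetric functions. -/
theorem newton_coeff {R ι : Type*} [CommRing R] (a : ι → R) (s : Finset ι) :
    (∏ i ∈ s, (1 - C (a i) * X)).coeff 0 = 1 ∧
    ∑ i ∈ s, a i = -(∏ i ∈ s, (1 - C (a i) * X)).coeff 1 ∧
    ∑ i ∈ s, a i ^ 2 = (∏ i ∈ s, (1 - C (a i) * X)).coeff 1 ^ 2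
      - 2 * (∏ i ∈ s, (1 - C (a i) * X)).coeff 2 ∧
    ∑ i ∈ s, a i ^ 3 = -(∏ i ∈ s, (1 - C (a i) * X)).coeff 1 ^ 3
      + 3 * (∏ i ∈ s, (1 - C (a i) * X)).coeff 1 * (∏ i ∈ s, (1 - C (a i) * X)).coeff 2
      - 3 * (∏ i ∈ s, (1 - C (a i) * X)).coeff 3 := by
  classical
  induction s using Finset.induction_on with
  | empty => simp [Polynomial.coeff_one]
  | insert i s hi ih =>
    obtain ⟨h0, h1, h2, h3⟩ := ih
    rw [Finset.prod_insert hi, Finset.sum_insert hi, Finset.sum_insert hi, Finset.sum_insert hi,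
      h1, h2, h3]
    generalize (∏ i ∈ s, (1 - C (a i) * X)) = P at *
    have hs : ∀ k, ((1 - C (a i) * X) * P).coeff (k + 1) = P.coeff (k + 1) - a i * P.coeff k := by
      intro k
      rw [sub_mul, one_mul, coeff_sub, mul_assoc, coeff_C_mul, coeff_X_mul]
    have hz : ((1 - C (a i) * X) * P).coeff 0 = P.coeff 0 := by
      rw [sub_mul, one_mul, coeff_sub, mul_assoc, coeff_C_mul, coeff_X_mul_zero]; simp
    have e1 := hs 0
    have e2 := hs 1
    have e3 := hs 2
    norm_num at e1 e2 e3
    rw [hz, e1, e2, e3, h0]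
    refine ⟨rfl, ?_, ?_, ?_⟩ <;> ring

theorem natDegree_prod_lt {R ι : Type*} [CommRing R] (a : ι → R) (s : Finset ι) :
    (∏ i ∈ s, (1 - C (a i) * X)).natDegree < s.card + 4 := by
  refine lt_of_le_of_lt (natDegree_prod_le _ _) ?_
  refine lt_of_le_of_lt (Finset.sum_le_card_nsmul _ _ 1 ?_) (by simp)
  intro i _
  compute_degree

/-- Write `q_i` for the coefficients of `Q`. The hypothesis says that the antisymmetric kernel
`(y - x) L(Q(x) Q(y))` has rank at most two, so its coefficients
`π_ij = L(q_i q_{j-1}) - L(q_{i-1} q_j)`, with `q_{-1} = 0`, are the `2 × 2` minors of a matrix with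
two rows (up to the common factor `T`). The conclusion is the three-term Plücker relation
`π₀₁ π₂₃ - π₀₂ π₁₃ + π₀₃ π₁₂ = 0`. The bound `4 ≤ N` only ensures that the truncation at degree `N`
retains the coefficients involved. -/
theorem plucker_of_rank_two {R : Type*} [CommRing R] [Algebra ℝ R] (L : R →ₗ[ℝ] ℝ) (Q : R[X])
    (N : ℕ) (hN : 4 ≤ N) (hQ : Q.natDegree < N) (PA PB : ℝ[X]) (T : ℝ)
    (h : ∀ x y : ℝ, (y - x) * L (Q.eval (algebraMap ℝ R x) * Q.eval (algebraMap ℝ R y)) =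
      T * (PB.eval x * PA.eval y - PA.eval x * PB.eval y)) :
    L (Q.coeff 0 * Q.coeff 0) * (L (Q.coeff 2 * Q.coeff 2) - L (Q.coeff 1 * Q.coeff 3))
    - L (Q.coeff 0 * Q.coeff 1) * (L (Q.coeff 1 * Q.coeff 2) - L (Q.coeff 0 * Q.coeff 3))
    + L (Q.coeff 0 * Q.coeff 2) * (L (Q.coeff 1 * Q.coeff 1) - L (Q.coeff 0 * Q.coeff 2)) = 0 := by
  set g : ℕ → ℕ → ℝ := fun i j => L (Q.coeff i * Q.coeff j) with hg
  -- `U i` is the generating polynomial of the `i`-th row of the array `L(q_i q_j)`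
  let U : ℕ → ℝ[X] := fun i => ∑ j ∈ Finset.range N, C (g i j) * X ^ j
  have hUc : ∀ i j, j < 4 → (U i).coeff j = g i j := by
    intro i j hj
    have : j < N := by omega
    simp [U, coeff_X_pow, this]
  have hev : ∀ x y : ℝ, L (Q.eval (algebraMap ℝ R x) * Q.eval (algebraMap ℝ R y)) =
      ∑ i ∈ Finset.range N, (U i).eval y * x ^ i := by
    intro x y
    rw [eval_eq_sum_range' hQ, eval_eq_sum_range' hQ, Finset.sum_mul_sum, map_sum]
    refine Finset.sum_congr rfl fun i _ => ?_
    rw [map_sum, eval_finsetSum, Finset.sum_mul]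
    refine Finset.sum_congr rfl fun j _ => ?_
    have : Q.coeff i * algebraMap ℝ R x ^ i * (Q.coeff j * algebraMap ℝ R y ^ j) =
        (x ^ i * y ^ j) • (Q.coeff i * Q.coeff j) := by
      rw [Algebra.smul_def, map_mul, map_pow, map_pow]; ring
    rw [this, map_smul, smul_eq_mul]
    simp [hg]; ring
  -- comparing coefficients of `x ^ i` for fixed `y`
  have hx : ∀ y : ℝ, (C y - X) * ∑ i ∈ Finset.range N, C ((U i).eval y) * X ^ i =
      C T * (C (PA.eval y) * PB - C (PB.eval y) * PA) := by
    intro y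
    refine Polynomial.funext fun x => ?_
    have := h x y
    rw [hev] at this
    simp only [eval_mul, eval_sub, eval_C, eval_X, eval_finsetSum, eval_pow]
    rw [this]; ring
  have hxU : ∀ i, i < 4 → ∀ y : ℝ,
      (∑ i ∈ Finset.range N, C ((U i).eval y) * X ^ i).coeff i = (U i).eval y := by
    intro i hi y
    have : i < N := by omega
    simp [coeff_X_pow, this]
  have hX0 : C T * (C (PB.coeff 0) * PA - C (PA.coeff 0) * PB) = X * U 0 := by
    refine Polynomial.funext fun y => ?_
    have := congrArg (fun p => p.coeff 0) (hx y)
    simp only [sub_mul, coeff_sub, coeff_C_mul, coeff_X_mul_zero] at this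
    rw [hxU 0 (by norm_num)] at this
    simp only [eval_mul, eval_sub, eval_C, eval_X]
    linarith
  have hXs : ∀ k, k + 1 < 4 → C T * (C (PB.coeff (k + 1)) * PA - C (PA.coeff (k + 1)) * PB) =
      X * U (k + 1) - U k := by
    intro k hk
    refine Polynomial.funext fun y => ?_
    have := congrArg (fun p => p.coeff (k + 1)) (hx y)
    simp only [sub_mul, coeff_sub, coeff_C_mul, coeff_X_mul] at this
    rw [hxU _ hk, hxU k (by omega)] at this
    simp only [eval_mul, eval_sub, eval_C, eval_X]
    linarith
  -- comparing coefficients of `y ^ (j + 1)` as well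
  have c0 : ∀ j, j + 1 < 4 →
      T * (PB.coeff 0 * PA.coeff (j + 1) - PA.coeff 0 * PB.coeff (j + 1)) = g 0 j := by
    intro j hj
    have := congrArg (fun p => p.coeff (j + 1)) hX0
    simp only [coeff_sub, coeff_C_mul, coeff_X_mul] at this
    rw [this, hUc _ _ (by omega)]
  have cs : ∀ k j, k + 1 < 4 → j + 1 < 4 →
      T * (PB.coeff (k + 1) * PA.coeff (j + 1) - PA.coeff (k + 1) * PB.coeff (j + 1)) =
        g (k + 1) j - g k (j + 1) := by
    intro k j hk hj
    have := congrArg (fun p => p.coeff (j + 1)) (hXs k hk)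
    simp only [coeff_sub, coeff_C_mul, coeff_X_mul] at this
    rw [this, hUc _ _ (by omega), hUc _ _ (by omega)]
  have c01 := c0 0 (by norm_num)
  have c02 := c0 1 (by norm_num)
  have c03 := c0 2 (by norm_num)
  have c12 := cs 0 1 (by norm_num) (by norm_num)
  have c13 := cs 0 2 (by norm_num) (by norm_num)
  have c23 := cs 1 2 (by norm_num) (by norm_num)
  norm_num at c01 c02 c03 c12 c13 c23
  change g 0 0 * (g 2 2 - g 1 3) - g 0 1 * (g 1 2 - g 0 3) + g 0 2 * (g 1 1 - g 0 2) = 0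
  rw [← c12, ← c13, ← c23, ← c01, ← c02, ← c03]
  ring

/-- The Hirota form of KP in terms of the power sums of `a` is the Plücker relation for the
coefficients of `∏ (1 - aᵢ X)`, up to the factor `12`: this is the translation by Newton's
identities. -/
theorem hirota_of_plucker {R ι : Type*} [CommRing R] [Algebra ℝ R] (L : R →ₗ[ℝ] ℝ)
    (a : ι → R) (s : Finset ι) (p1 p2 p3 : R)
    (hp1 : p1 = ∑ i ∈ s, a i) (hp2 : p2 = ∑ i ∈ s, a i ^ 2) (hp3 : p3 = ∑ i ∈ s, a i ^ 3)
    (PA PB : ℝ[X]) (T : ℝ)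
    (h : ∀ x y : ℝ, (y - x) * L ((∏ i ∈ s, (1 - a i * algebraMap ℝ R x)) *
        ∏ i ∈ s, (1 - a i * algebraMap ℝ R y)) =
      T * (PB.eval x * PA.eval y - PA.eval x * PB.eval y)) :
    L 1 * L (p1 ^ 4) - 4 * L p1 * L (p1 ^ 3) + 3 * L (p1 ^ 2) ^ 2 + 3 * L 1 * L (p2 ^ 2)
      - 3 * L p2 ^ 2 - 4 * L 1 * L (p1 * p3) + 4 * L p1 * L p3 = 0 := by
  obtain ⟨h0, h1, h2, h3⟩ := newton_coeff a s
  have key := plucker_of_rank_two L (∏ i ∈ s, (1 - C (a i) * X)) (s.card + 4) (by omega)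
    (natDegree_prod_lt a s) PA PB T (by
      intro x y
      rw [← h x y]
      simp [eval_prod])
  rw [← hp1] at h1
  rw [← hp2] at h2
  rw [← hp3] at h3
  generalize (∏ i ∈ s, (1 - C (a i) * X)) = Q at *
  rw [h0] at key
  simp only [one_mul] at key
  generalize Q.coeff 1 = q1 at *
  generalize Q.coeff 2 = q2 at *
  generalize Q.coeff 3 = q3 at *
  have e1 : L p1 = - L q1 := by rw [h1, map_neg]
  have e2 : L (p1 ^ 2) = L (q1 * q1) := by rw [h1]; congr 1; ring
  have e3 : L p2 = L (q1 * q1) - 2 * L q2 := by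
    rw [show p2 = q1 * q1 - (2 : ℝ) • q2 by rw [h2, Algebra.smul_def, map_ofNat]; ring]
    simp only [map_sub, map_smul, smul_eq_mul]
  have e4 : L (p1 ^ 3) - L p3 = 3 * L q3 - 3 * L (q1 * q2) := by
    rw [← map_sub, show p1 ^ 3 - p3 = (3 : ℝ) • q3 - (3 : ℝ) • (q1 * q2) by
      rw [h1, h3, Algebra.smul_def, Algebra.smul_def, map_ofNat]; ring]
    simp only [map_sub, map_smul, smul_eq_mul]
  have e5 : L (p1 ^ 4) + 3 * L (p2 ^ 2) - 4 * L (p1 * p3) = 12 * (L (q2 * q2) - L (q1 * q3)) := by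
    have : p1 ^ 4 + (3 : ℝ) • p2 ^ 2 - (4 : ℝ) • (p1 * p3) = (12 : ℝ) • (q2 * q2 - q1 * q3) := by
      rw [h1, h2, h3, Algebra.smul_def, Algebra.smul_def, Algebra.smul_def, map_ofNat, map_ofNat,
        map_ofNat]
      ring
    simpa only [map_sub, map_add, map_smul, smul_eq_mul] using congrArg L this
  linear_combination L 1 * e5 - 4 * L p1 * e4 + 12 * key
    - 12 * (L q3 - L (q1 * q2)) * e1 + 3 * (L (p1 ^ 2) + L (q1 * q1)) * e2
    - 3 * (L p2 + (L (q1 * q1) - 2 * L q2)) * e3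
end


/-! ### Differentiation under the integral sign -/

section
variable {n : ℕ}

/-- The integral over `K` of `g` against `exp (t₁ P₁ + t₂ P₂ + t₃ P₃)`. The family of these
functions of `t`, for varying `g`, is closed under differentiation. -/
noncomputable def expInt (K : Set (Fin n → ℝ)) (P₁ P₂ P₃ g : C(Fin n → ℝ, ℝ))
    (t : ℝ × ℝ × ℝ) : ℝ :=
  ∫ z in K, g z * Real.exp (t.1 * P₁ z + t.2.1 * P₂ z + t.2.2 * P₃ z)

variable {K : Set (Fin n → ℝ)} (hK : IsCompact K) (P₁ P₂ P₃ g : C(Fin n → ℝ, ℝ))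

include hK in
theorem expInt_integrable (t : ℝ × ℝ × ℝ) : IntegrableOn
    (fun z => g z * Real.exp (t.1 * P₁ z + t.2.1 * P₂ z + t.2.2 * P₃ z)) K :=
  ContinuousOn.integrableOn_compact hK (by fun_prop)

open ContinuousLinearMap in
include hK in
/-- Differentiating in `t_k` multiplies the integrand by `P_k`. -/
theorem expInt_hasFDerivAt (t : ℝ × ℝ × ℝ) :
    HasFDerivAt (expInt K P₁ P₂ P₃ g)
      (expInt K P₁ P₂ P₃ (g * P₁) t • fst ℝ ℝ (ℝ × ℝ)
        + (expInt K P₁ P₂ P₃ (g * P₂) t • (fst ℝ ℝ ℝ).comp (snd ℝ ℝ (ℝ × ℝ))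
        + expInt K P₁ P₂ P₃ (g * P₃) t • (snd ℝ ℝ ℝ).comp (snd ℝ ℝ (ℝ × ℝ)))) t := by
  let e : ℝ × ℝ × ℝ → (Fin n → ℝ) → ℝ := fun t z =>
    Real.exp (t.1 * P₁ z + t.2.1 * P₂ z + t.2.2 * P₃ z)
  let F' : ℝ × ℝ × ℝ → (Fin n → ℝ) → (ℝ × ℝ × ℝ →L[ℝ] ℝ) := fun t z =>
    ((g * P₁) z * e t z) • fst ℝ ℝ (ℝ × ℝ)
    + (((g * P₂) z * e t z) • (fst ℝ ℝ ℝ).comp (snd ℝ ℝ (ℝ × ℝ))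
    + ((g * P₃) z * e t z) • (snd ℝ ℝ ℝ).comp (snd ℝ ℝ (ℝ × ℝ)))
  have hF'c : Continuous (fun p : (ℝ × ℝ × ℝ) × (Fin n → ℝ) => F' p.1 p.2) := by
    simp only [F', e]; fun_prop
  obtain ⟨M, hM⟩ := ((isCompact_closedBall t 1).prod hK).exists_bound_of_continuousOn
    hF'c.continuousOn
  have main := hasFDerivAt_integral_of_dominated_of_fderiv_le (𝕜 := ℝ)
    (μ := volume.restrict K) (F := fun t z => g z * e t z)
    (F' := F') (x₀ := t) (bound := fun _ => M) (Metric.closedBall_mem_nhds t one_pos)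
    (Filter.Eventually.of_forall fun s => (expInt_integrable hK P₁ P₂ P₃ g s).aestronglyMeasurable)
    (expInt_integrable hK P₁ P₂ P₃ g t)
    (Continuous.aestronglyMeasurable (by simp only [F', e]; fun_prop))
    ((ae_restrict_iff' hK.measurableSet).2 <| Filter.Eventually.of_forall fun z hz s hs =>
      hM (s, z) ⟨hs, hz⟩)
    (by
      have : IsFiniteMeasure (volume.restrict K) := isFiniteMeasure_restrict.2 hK.measure_lt_top.ne
      exact integrable_const _)
    (Filter.Eventually.of_forall fun z s _ => by
      have h1 : HasFDerivAt (fun t : ℝ × ℝ × ℝ => t.1 * P₁ z + t.2.1 * P₂ z + t.2.2 * P₃ z)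
          (P₁ z • fst ℝ ℝ (ℝ × ℝ) + P₂ z • (fst ℝ ℝ ℝ).comp (snd ℝ ℝ (ℝ × ℝ))
            + P₃ z • (snd ℝ ℝ ℝ).comp (snd ℝ ℝ (ℝ × ℝ))) s := by
        refine (HasFDerivAt.add (HasFDerivAt.add ?_ ?_) ?_)
        · exact (fst ℝ ℝ (ℝ × ℝ)).hasFDerivAt.mul_const (P₁ z)
        · exact ((fst ℝ ℝ ℝ).comp (snd ℝ ℝ (ℝ × ℝ))).hasFDerivAt.mul_const (P₂ z)
        · exact ((snd ℝ ℝ ℝ).comp (snd ℝ ℝ (ℝ × ℝ))).hasFDerivAt.mul_const (P₃ z)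
      have h2 := (h1.exp).const_mul (g z)
      refine h2.congr_fderiv ?_
      simp only [F', e, ContinuousMap.mul_apply]
      module)
  refine main.congr_fderiv ?_
  have hi : ∀ (f : C(Fin n → ℝ, ℝ)) (l : ℝ × ℝ × ℝ →L[ℝ] ℝ),
      Integrable (fun z => (f z * e t z) • l) (volume.restrict K) := fun f l =>
    (expInt_integrable hK P₁ P₂ P₃ f t).smul_const l
  simp only [F']
  have h23 : Integrable (fun z => ((g * P₂) z * e t z) • (fst ℝ ℝ ℝ).comp (snd ℝ ℝ (ℝ × ℝ))
      + ((g * P₃) z * e t z) • (snd ℝ ℝ ℝ).comp (snd ℝ ℝ (ℝ × ℝ))) (volume.restrict K) :=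
    ContinuousOn.integrableOn_compact hK (by simp only [e]; fun_prop)
  refine (integral_add (hi (g * P₁) (fst ℝ ℝ (ℝ × ℝ))) h23).trans ?_
  refine (congrArg _ (integral_add (hi _ _) (hi _ _))).trans ?_
  simp only [integral_smul_const]
  rfl

include hK in
theorem expInt_contDiff : ContDiff ℝ (⊤ : ℕ∞) (expInt K P₁ P₂ P₃ g) := by
  rw [contDiff_infty]
  intro m
  induction m generalizing g with
  | zero =>
    exact contDiff_zero.2 (continuous_iff_continuousAt.2 fun t =>
      (expInt_hasFDerivAt hK P₁ P₂ P₃ g t).continuousAt)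
  | succ m ih =>
    push_cast
    refine contDiff_succ_iff_hasFDerivAt.2 ⟨_, ?_, fun t => expInt_hasFDerivAt hK P₁ P₂ P₃ g t⟩
    have h1 := ih (g * P₁)
    have h2 := ih (g * P₂)
    have h3 := ih (g * P₃)
    fun_prop

include hK in
theorem expInt_hasDerivAt₁ (a b c : ℝ) : HasDerivAt (fun x => expInt K P₁ P₂ P₃ g (x, b, c))
    (expInt K P₁ P₂ P₃ (g * P₁) (a, b, c)) a := by
  have h := (expInt_hasFDerivAt hK P₁ P₂ P₃ g (a, b, c)).comp_hasDerivAt a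
    ((hasDerivAt_id a).prodMk ((hasDerivAt_const a b).prodMk (hasDerivAt_const a c)))
  simpa [Function.comp_def] using h

include hK in
theorem expInt_hasDerivAt₂ (a b c : ℝ) : HasDerivAt (fun y => expInt K P₁ P₂ P₃ g (a, y, c))
    (expInt K P₁ P₂ P₃ (g * P₂) (a, b, c)) b := by
  have h := (expInt_hasFDerivAt hK P₁ P₂ P₃ g (a, b, c)).comp_hasDerivAt b
    ((hasDerivAt_const b a).prodMk ((hasDerivAt_id b).prodMk (hasDerivAt_const b c)))
  simpa [Function.comp_def] using h

include hK in
theorem expInt_hasDerivAt₃ (a b c : ℝ) : HasDerivAt (fun w => expInt K P₁ P₂ P₃ g (a, b, w))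
    (expInt K P₁ P₂ P₃ (g * P₃) (a, b, c)) c := by
  have h := (expInt_hasFDerivAt hK P₁ P₂ P₃ g (a, b, c)).comp_hasDerivAt c
    ((hasDerivAt_const c a).prodMk ((hasDerivAt_const c b).prodMk (hasDerivAt_id c)))
  simpa [Function.comp_def] using h

end

/-! ### Derivatives of a logarithm -/

theorem iteratedDeriv_two_log (f f1 f2 : ℝ → ℝ) (hf : ∀ x, 0 < f x)
    (h0 : ∀ x, HasDerivAt f (f1 x) x) (h1 : ∀ x, HasDerivAt f1 (f2 x) x) :
    iteratedDeriv 2 (fun x => Real.log (f x)) = fun x => (f2 x * f x - f1 x ^ 2) / f x ^ 2 := by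
  have d1 : deriv (fun x => Real.log (f x)) = fun x => f1 x / f x :=
    funext fun x => ((h0 x).log (hf x).ne').deriv
  rw [iteratedDeriv_succ, iteratedDeriv_one, d1]
  refine funext fun x => (((h1 x).div (h0 x) (hf x).ne').congr_deriv ?_).deriv
  ring

/-- In `∂⁴ log f + 6 (∂² log f)²` all terms with `f ^ 3` or `f ^ 4` in the denominator cancel,
which leaves a bilinear expression in the derivatives of `f`, divided by `f ^ 2`. -/
theorem iteratedDeriv_four_log (f f1 f2 f3 f4 : ℝ → ℝ) (hf : ∀ x, 0 < f x)
    (h0 : ∀ x, HasDerivAt f (f1 x) x) (h1 : ∀ x, HasDerivAt f1 (f2 x) x)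
    (h2 : ∀ x, HasDerivAt f2 (f3 x) x) (h3 : ∀ x, HasDerivAt f3 (f4 x) x) (x : ℝ) :
    iteratedDeriv 4 (fun x => Real.log (f x)) x
      + 6 * (iteratedDeriv 2 (fun x => Real.log (f x)) x) ^ 2 =
    (f x * f4 x - 4 * f1 x * f3 x + 3 * f2 x ^ 2) / f x ^ 2 := by
  have d2 := iteratedDeriv_two_log f f1 f2 hf h0 h1
  have d3 : deriv (fun x => (f2 x * f x - f1 x ^ 2) / f x ^ 2) = fun x =>
      (f3 x * f x ^ 2 - 3 * f1 x * f2 x * f x + 2 * f1 x ^ 3) / f x ^ 3 := by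
    refine funext fun x => (((((h2 x).mul (h0 x)).sub ((h1 x).pow 2)).div ((h0 x).pow 2)
      (pow_pos (hf x) 2).ne').congr_deriv ?_).deriv
    have := (hf x).ne'
    simp only [Pi.mul_apply, Pi.sub_apply, Pi.pow_apply]
    field_simp
    push_cast
    ring
  rw [iteratedDeriv_succ, iteratedDeriv_succ, d2, d3]
  have d4 : HasDerivAt (fun x => (f3 x * f x ^ 2 - 3 * f1 x * f2 x * f x + 2 * f1 x ^ 3) / f x ^ 3)
      _ x := (((((h3 x).mul ((h0 x).pow 2)).sub ((((h1 x).const_mul 3).mul (h2 x)).mul (h0 x))).add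
    (((h1 x).pow 3).const_mul 2)).div ((h0 x).pow 3) (pow_pos (hf x) 3).ne')
  rw [d4.deriv]
  have := (hf x).ne'
  simp only [Pi.mul_apply, Pi.sub_apply, Pi.pow_apply, Pi.add_apply]
  field_simp
  push_cast
  ring

/-! ### Bordered Vandermonde determinants and Andréief's identity -/

section
open Matrix Polynomial

theorem vdm_eq_det (n : ℕ) (z : Fin n → ℝ) :
    Vdm n z = (Matrix.of fun i j : Fin n => z i ^ (j.rev : ℕ)).det := by
  have h := det_projVandermonde (1 : Fin n → ℝ) z
  have h2 : projVandermonde (1 : Fin n → ℝ) z = Matrix.of fun i j : Fin n => z i ^ (j.rev : ℕ) := by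
    ext i j; simp [projVandermonde_apply]
  rw [← h2, h, Vdm, Finset.prod_filter, ← Finset.univ_product_univ, Finset.prod_product]
  refine Finset.prod_congr rfl fun i _ => ?_
  rw [← Finset.prod_filter]
  refine Finset.prod_congr (by ext; simp) fun j _ => by simp

/-- The homogeneous Vandermonde determinant of the points `[1 : x], [1 : y], [z₁ : 1], …, [zₙ : 1]`
of the projective line, with columns `1, x, x ^ 2, …` in the affine coordinate of the first two
points. The homogeneous form accommodates the points `1 / x` and `1 / y` at `x = 0` or `y = 0`. -/
theorem bordered_vandermonde (n : ℕ) (x y : ℝ) (z : Fin n → ℝ) :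
    (fromBlocks !![(1 : ℝ), x; 1, y] (Matrix.of fun k (j : Fin n) => ![x, y] k ^ ((j : ℕ) + 2))
      (Matrix.of fun (i : Fin n) (k : Fin 2) => z i ^ (n + 1 - (k : ℕ)))
      (Matrix.of fun i j : Fin n => z i ^ (j.rev : ℕ))).det =
    (y - x) * ((∏ i, (1 - z i * x)) * ∏ i, (1 - z i * y)) * Vdm n z := by
  let v : Fin (n + 2) → ℝ := Fin.cons x (Fin.cons y 1)
  let w : Fin (n + 2) → ℝ := Fin.cons 1 (Fin.cons 1 z)
  let e : Fin 2 ⊕ Fin n ≃ Fin (n + 2) := finSumFinEquiv.trans (finCongr (add_comm 2 n))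
  have e0 : e (Sum.inl 0) = 0 := by ext; simp [e]
  have e1 : e (Sum.inl 1) = 1 := by ext; simp [e]
  have er : ∀ i, e (Sum.inr i) = i.succ.succ := fun i => by ext; simp [e]
  have h := det_projVandermonde v w
  rw [← det_submatrix_equiv_self e] at h
  have h2 : (projVandermonde v w).submatrix e e = fromBlocks !![(1 : ℝ), x; 1, y]
      (Matrix.of fun k (j : Fin n) => ![x, y] k ^ ((j : ℕ) + 2))
      (Matrix.of fun (i : Fin n) (k : Fin 2) => z i ^ (n + 1 - (k : ℕ)))
      (Matrix.of fun i j : Fin n => z i ^ (j.rev : ℕ)) := by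
    ext i j
    rcases i with i | i <;> rcases j with j | j
    · fin_cases i <;> fin_cases j <;> simp [projVandermonde_apply, e0, e1, v, w]
    · fin_cases i <;> simp [projVandermonde_apply, e0, e1, er, v, w]
    · fin_cases j <;> simp [projVandermonde_apply, e0, e1, er, v, w]
    · simp [projVandermonde_apply, er, v, w]
  rw [← h2, h, Fin.prod_univ_succ, Fin.prod_univ_succ, Fin.prod_Ioi_zero, Fin.prod_univ_succ]
  have h3 := det_projVandermonde (1 : Fin n → ℝ) z
  have h4 : projVandermonde (1 : Fin n → ℝ) z = Matrix.of fun i j : Fin n => z i ^ (j.rev : ℕ) := by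
    ext i j; simp [projVandermonde_apply]
  rw [vdm_eq_det, ← h4, h3]
  simp only [Fin.prod_Ioi_succ, Fin.prod_Ioi_zero]
  simp [v, w]
  simp only [mul_comm x, mul_comm y]
  ring

/-- Andréief's identity with a border: the second determinant carries extra constant rows `A, B`,
and integration replaces the rows evaluated at the `zᵢ` by rows of moments against the `ψ i`. -/
theorem andreief {n : ℕ} {κ : Type*} [Fintype κ] [DecidableEq κ] {E : Set ℝ} (hE : IsCompact E)
    (r : ℝ → ℝ) (hr : Continuous r)
    (ψ : Fin n → ℝ → ℝ) (hψ : ∀ i, Continuous (ψ i))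
    (φ : κ ⊕ Fin n → ℝ → ℝ) (hφ : ∀ i, Continuous (φ i)) (A : Matrix κ κ ℝ)
    (B : Matrix κ (Fin n) ℝ) :
    ∫ z : Fin n → ℝ in Set.univ.pi (fun _ => E),
      (Matrix.of fun i j : Fin n => ψ j (z i)).det *
      (fromBlocks A B (Matrix.of fun i k => φ (Sum.inl k) (z i))
        (Matrix.of fun i j => φ (Sum.inr j) (z i))).det * ∏ k, r (z k) =
    n.factorial * (fromBlocks A B (Matrix.of fun i k => ∫ s in E, ψ i s * φ (Sum.inl k) s * r s)
        (Matrix.of fun i j => ∫ s in E, ψ i s * φ (Sum.inr j) s * r s)).det := by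
  have hK : IsCompact (Set.univ.pi (fun _ : Fin n => E)) := isCompact_univ_pi fun _ => hE
  let lo : κ → κ ⊕ Fin n → ℝ := fun k => Sum.elim (A k) (B k)
  -- the block determinants as sums over permutations of the columns
  have hdet : ∀ C : Fin n → κ ⊕ Fin n → ℝ,
      (fromBlocks A B (Matrix.of fun i k => C i (Sum.inl k))
        (Matrix.of fun i j => C i (Sum.inr j))).det =
      ∑ π : Equiv.Perm (κ ⊕ Fin n), ((Equiv.Perm.sign π : ℤ) : ℝ) *
        ((∏ k, lo k (π (Sum.inl k))) * ∏ i, C i (π (Sum.inr i))) := by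
    intro C
    rw [← det_transpose, det_apply']
    refine Finset.sum_congr rfl fun π _ => ?_
    rw [Fintype.prod_sum_type]
    congr 2
    refine Finset.prod_congr rfl fun i _ => ?_
    rcases h : π (Sum.inr i) with j | j <;> simp
  have hdet' : ∀ z : Fin n → ℝ, (Matrix.of fun i j : Fin n => ψ j (z i)).det =
      ∑ σ : Equiv.Perm (Fin n), ((Equiv.Perm.sign σ : ℤ) : ℝ) * ∏ i, ψ (σ i) (z i) := by
    intro z
    rw [← det_transpose, det_apply']
    rfl
  have hfub : ∀ f : Fin n → ℝ → ℝ, ∫ z : Fin n → ℝ in Set.univ.pi (fun _ => E), ∏ i, f i (z i) =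
      ∏ i, ∫ s in E, f i s := by
    intro f
    rw [volume_pi, Measure.restrict_pi_pi]
    exact integral_fintype_prod_eq_prod f
  let G : Fin n → κ ⊕ Fin n → ℝ := fun i c => ∫ s in E, ψ i s * φ c s * r s
  calc _ = ∫ z : Fin n → ℝ in Set.univ.pi (fun _ => E),
        ∑ σ : Equiv.Perm (Fin n), ∑ π : Equiv.Perm (κ ⊕ Fin n),
          (((Equiv.Perm.sign σ : ℤ) : ℝ) * (((Equiv.Perm.sign π : ℤ) : ℝ) *
            ∏ k, lo k (π (Sum.inl k)))) *
          ∏ i, (ψ (σ i) (z i) * φ (π (Sum.inr i)) (z i) * r (z i)) := by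
        congr 1; ext z
        rw [hdet', hdet (fun i c => φ c (z i)), Finset.sum_mul_sum, Finset.sum_mul]
        refine Finset.sum_congr rfl fun σ _ => ?_
        rw [Finset.sum_mul]
        refine Finset.sum_congr rfl fun π _ => ?_
        rw [Finset.prod_mul_distrib, Finset.prod_mul_distrib]
        ring
    _ = ∑ σ : Equiv.Perm (Fin n), ∑ π : Equiv.Perm (κ ⊕ Fin n),
          (((Equiv.Perm.sign σ : ℤ) : ℝ) * (((Equiv.Perm.sign π : ℤ) : ℝ) *
            ∏ k, lo k (π (Sum.inl k)))) * ∏ i, G (σ i) (π (Sum.inr i)) := by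
        have hint : ∀ (σ : Equiv.Perm (Fin n)) (π : Equiv.Perm (κ ⊕ Fin n)),
            Integrable (fun z : Fin n → ℝ => (((Equiv.Perm.sign σ : ℤ) : ℝ) *
              (((Equiv.Perm.sign π : ℤ) : ℝ) * ∏ k, lo k (π (Sum.inl k)))) *
              ∏ i, (ψ (σ i) (z i) * φ (π (Sum.inr i)) (z i) * r (z i)))
              (volume.restrict (Set.univ.pi (fun _ => E))) := fun σ π =>
          ContinuousOn.integrableOn_compact hK (by fun_prop)
        rw [integral_finsetSum _ fun σ _ => integrable_finsetSum _ fun π _ => hint σ π]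
        refine Finset.sum_congr rfl fun σ _ => ?_
        rw [integral_finsetSum _ fun π _ => hint σ π]
        refine Finset.sum_congr rfl fun π _ => ?_
        rw [integral_const_mul, hfub fun i s => ψ (σ i) s * φ (π (Sum.inr i)) s * r s]
    _ = ∑ σ : Equiv.Perm (Fin n), (fromBlocks A B (Matrix.of fun i k => G i (Sum.inl k))
        (Matrix.of fun i j => G i (Sum.inr j))).det := by
        refine Finset.sum_congr rfl fun σ _ => ?_
        have hp := det_permute (Equiv.sumCongr (Equiv.refl κ) σ)
          (fromBlocks A B (Matrix.of fun i k => G i (Sum.inl k))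
            (Matrix.of fun i j => G i (Sum.inr j)))
        have hs : (fromBlocks A B (Matrix.of fun i k => G i (Sum.inl k))
            (Matrix.of fun i j => G i (Sum.inr j))).submatrix
              (Equiv.sumCongr (Equiv.refl κ) σ) id =
            fromBlocks A B (Matrix.of fun i k => G (σ i) (Sum.inl k))
              (Matrix.of fun i j => G (σ i) (Sum.inr j)) := by
          ext i j
          rcases i with i | i <;> rcases j with j | j <;> rfl
        rw [hs, hdet (fun i => G (σ i))] at hp
        have hsg : Equiv.Perm.sign (Equiv.sumCongr (Equiv.refl κ) σ) = Equiv.Perm.sign σ := by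
          have := Equiv.Perm.sign_sumCongr (Equiv.refl κ) σ
          rw [Equiv.Perm.sign_refl, one_mul] at this
          exact this
        rw [hsg] at hp
        have hsq : ((Equiv.Perm.sign σ : ℤ) : ℝ) * ((Equiv.Perm.sign σ : ℤ) : ℝ) = 1 := by
          rcases Int.units_eq_one_or (Equiv.Perm.sign σ) with h | h <;> simp [h]
        rw [← one_mul (det _), ← hsq, mul_assoc, ← hp, Finset.mul_sum]
        refine Finset.sum_congr rfl fun π _ => ?_
        ring
    _ = _ := by
        rw [Finset.sum_const, Finset.card_univ, Fintype.card_perm, Fintype.card_fin, nsmul_eq_mul]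

/-- The Schur complement of `H` is a `2 × 2` matrix whose rows are the values at `x` and at `y` of
the same two polynomials. -/
theorem bordered_det_rank_two {n : ℕ} (H : Matrix (Fin n) (Fin n) ℝ) (hH : H.det ≠ 0)
    (D : Matrix (Fin n) (Fin 2) ℝ) : ∃ PA PB : ℝ[X], ∀ x y : ℝ,
      (fromBlocks !![(1 : ℝ), x; 1, y]
        (Matrix.of fun k (j : Fin n) => ![x, y] k ^ ((j : ℕ) + 2)) D H).det =
      H.det * (PB.eval x * PA.eval y - PA.eval x * PB.eval y) := by
  have : Invertible H := H.invertibleOfIsUnitDet (isUnit_iff_ne_zero.2 hH)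
  refine ⟨X - ∑ j : Fin n, X ^ ((j : ℕ) + 2) * C ((⅟H * D) j 1),
    1 - ∑ j : Fin n, X ^ ((j : ℕ) + 2) * C ((⅟H * D) j 0), fun x y => ?_⟩
  rw [det_fromBlocks₂₂, Matrix.mul_assoc, det_fin_two]
  generalize ⅟H * D = c
  simp only [Matrix.sub_apply, Matrix.mul_apply, Matrix.of_apply, Matrix.cons_val', Matrix.cons_val,
    eval_sub, eval_X, eval_one, eval_finsetSum, eval_mul, eval_pow, eval_C]

/-- The kernel `(y - x) ⟨∏ (1 - zᵢ x) ∏ (1 - zᵢ y)⟩` has rank at most two. The nonvanishing of the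
total mass gives the invertibility of the moment matrix `H`, since the mass is `n! det H`. -/
theorem rank_two {n : ℕ} {E : Set ℝ} (hE : IsCompact E) (r : ℝ → ℝ) (hr : Continuous r)
    (hτ : ∫ z : Fin n → ℝ in Set.univ.pi (fun _ => E), Vdm n z ^ 2 * ∏ k, r (z k) ≠ 0) :
    ∃ (PA PB : ℝ[X]) (T : ℝ), ∀ x y : ℝ,
      (y - x) * ∫ z : Fin n → ℝ in Set.univ.pi (fun _ => E),
        ((∏ i, (1 - z i * x)) * ∏ i, (1 - z i * y)) * (Vdm n z ^ 2 * ∏ k, r (z k)) =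
      T * (PB.eval x * PA.eval y - PA.eval x * PB.eval y) := by
  -- Andréief with an empty border evaluates the total mass
  have hH : (Matrix.of fun i j : Fin n =>
      ∫ s in E, s ^ (i.rev : ℕ) * s ^ (j.rev : ℕ) * r s).det ≠ 0 := by
    have h := andreief (n := n) (κ := Fin 0) hE r hr (fun i s => s ^ (i.rev : ℕ))
      (fun i => by fun_prop)
      (Sum.elim (fun _ _ => 0) fun j s => s ^ (j.rev : ℕ))
      (by rintro (i | i)
          · exact i.elim0
          · simp only [Sum.elim_inr]; fun_prop) 0 0
    simp only [Sum.elim_inr, det_fromBlocks_zero₁₂, det_isEmpty, one_mul, ← vdm_eq_det] at h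
    intro h0
    apply hτ
    simp only [pow_two]
    rw [h]
    exact mul_eq_zero_of_right _ h0
  obtain ⟨PA, PB, hP⟩ := bordered_det_rank_two _ hH (Matrix.of fun i k =>
    ∫ s in E, s ^ (i.rev : ℕ) * s ^ (n + 1 - (k : ℕ)) * r s)
  refine ⟨PA, PB, n.factorial * (Matrix.of fun i j : Fin n =>
      ∫ s in E, s ^ (i.rev : ℕ) * s ^ (j.rev : ℕ) * r s).det, fun x y => ?_⟩
  have h := andreief (n := n) (κ := Fin 2) hE r hr (fun i s => s ^ (i.rev : ℕ))
      (fun i => by fun_prop)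
      (Sum.elim (fun k s => s ^ (n + 1 - (k : ℕ))) fun j s => s ^ (j.rev : ℕ))
      (by rintro (i | i)
          · simp only [Sum.elim_inl]; fun_prop
          · simp only [Sum.elim_inr]; fun_prop) !![(1 : ℝ), x; 1, y]
      (Matrix.of fun k (j : Fin n) => ![x, y] k ^ ((j : ℕ) + 2))
  simp only [Sum.elim_inr, Sum.elim_inl, bordered_vandermonde, ← vdm_eq_det] at h
  rw [hP, ← mul_assoc] at h
  rw [← h, ← integral_const_mul]
  congr 1
  ext z
  ring
end

/-! ### Positivity -/

section
/-- The zero set of `Δ_n` is a finite union of hyperplanes. -/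
theorem vdm_ne_zero_ae (n : ℕ) : ∀ᵐ z : Fin n → ℝ, Vdm n z ≠ 0 := by
  have h : ∀ p : Fin n × Fin n, p.1 < p.2 → ∀ᵐ z : Fin n → ℝ, z p.1 - z p.2 ≠ 0 := by
    intro p hp
    let l : (Fin n → ℝ) →ₗ[ℝ] ℝ := LinearMap.proj (R := ℝ) (φ := fun _ => ℝ) p.1 - LinearMap.proj p.2
    have h := Measure.addHaar_submodule (volume : Measure (Fin n → ℝ)) (LinearMap.ker l) (by
      intro htop
      have : l (Pi.single p.1 1) = 0 := by
        rw [← LinearMap.mem_ker, htop]; trivial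
      simp [l, Pi.single_eq_of_ne hp.ne'] at this)
    rw [ae_iff]
    convert h using 2
    ext z; simp [l]
  have h2 : ∀ᵐ z : Fin n → ℝ, ∀ p : Fin n × Fin n, p.1 < p.2 → z p.1 - z p.2 ≠ 0 := by
    rw [ae_all_iff]
    intro p
    by_cases hp : p.1 < p.2
    · filter_upwards [h p hp] with z hz _ using hz
    · exact Filter.Eventually.of_forall fun z h => (hp h).elim
  filter_upwards [h2] with z hz
  exact Finset.prod_ne_zero_iff.2 fun p hp => hz p (Finset.mem_filter.1 hp).2

theorem vdm_continuous (n : ℕ) : Continuous (Vdm n) := by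
  unfold Vdm; fun_prop

theorem tau_pos {n : ℕ} {E : Set ℝ} (hE : IsCompact E) (hEm : 0 < volume E)
    (r : ℝ → ℝ) (hr : Continuous r) (hpos : ∀ z ∈ E, 0 < r z) :
    0 < ∫ z : Fin n → ℝ in Set.univ.pi (fun _ => E), Vdm n z ^ 2 * ∏ k, r (z k) := by
  have hK : IsCompact (Set.univ.pi (fun _ : Fin n => E)) := isCompact_univ_pi fun _ => hE
  have hprod : ∀ z ∈ Set.univ.pi (fun _ : Fin n => E), 0 < ∏ k, r (z k) := fun z hz =>
    Finset.prod_pos fun k _ => hpos _ (hz k trivial)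
  have hV := vdm_continuous n
  rw [setIntegral_pos_iff_support_of_nonneg_ae]
  · have : volume (Set.univ.pi (fun _ : Fin n => E)) ≤
        volume ((Function.support fun z : Fin n → ℝ => Vdm n z ^ 2 * ∏ k, r (z k)) ∩
          Set.univ.pi (fun _ : Fin n => E)) := by
      refine measure_mono_ae ?_
      filter_upwards [vdm_ne_zero_ae n] with z hz hzE
      exact ⟨mul_ne_zero (pow_ne_zero 2 hz) (hprod z hzE).ne', hzE⟩
    refine lt_of_lt_of_le ?_ this
    rw [volume_pi_pi]
    exact pos_iff_ne_zero.2 (Finset.prod_ne_zero_iff.2 fun _ _ => hEm.ne')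
  · refine (ae_restrict_iff' hK.measurableSet).2 (Filter.Eventually.of_forall fun z hz => ?_)
    exact mul_nonneg (sq_nonneg _) (hprod z hz).le
  · exact ContinuousOn.integrableOn_compact hK (by fun_prop)
end

/-! ### The KP equation -/

/-- The `i`-th coordinate, as an element of the ring of continuous functions on `ℝⁿ`. -/
def coordMap (n : ℕ) (i : Fin n) : C(Fin n → ℝ, ℝ) := ⟨fun z => z i, by fun_prop⟩

/-- The power sum `∑ᵢ zᵢ ^ k`, as a continuous function on `ℝⁿ`. -/
def powerSum (n k : ℕ) : C(Fin n → ℝ, ℝ) := ∑ i, coordMap n i ^ k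

theorem powerSum_apply (n k : ℕ) (z : Fin n → ℝ) : powerSum n k z = ∑ i, z i ^ k := by
  simp [powerSum, coordMap]

/-- The undeformed density `Δ_n(z)² ∏ₖ ρ(zₖ)`. -/
noncomputable def weight (n : ℕ) (ρ : ℝ → ℝ) (hρ : Continuous ρ) : C(Fin n → ℝ, ℝ) :=
  ⟨fun z => Vdm n z ^ 2 * ∏ k, ρ (z k), by have := vdm_continuous n; fun_prop⟩

theorem weight_mul_exp (n : ℕ) (ρ : ℝ → ℝ) (hρ : Continuous ρ) (t : ℝ × ℝ × ℝ) (z : Fin n → ℝ) :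
    weight n ρ hρ z *
      Real.exp (t.1 * powerSum n 1 z + t.2.1 * powerSum n 2 z + t.2.2 * powerSum n 3 z) =
    Vdm n z ^ 2 *
      ∏ k, (ρ (z k) * Real.exp (t.1 * z k + t.2.1 * z k ^ 2 + t.2.2 * z k ^ 3)) := by
  simp only [powerSum_apply, Finset.mul_sum, ← Finset.sum_add_distrib, pow_one]
  rw [Real.exp_sum, Finset.prod_mul_distrib, ← mul_assoc]
  rfl

/-- Integration over `K` against the deformed density at the times `t`, as a linear functional. -/
noncomputable def bracket {n : ℕ} {K : Set (Fin n → ℝ)} (hK : IsCompact K)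
    (P₁ P₂ P₃ w : C(Fin n → ℝ, ℝ)) (t : ℝ × ℝ × ℝ) : C(Fin n → ℝ, ℝ) →ₗ[ℝ] ℝ where
  toFun f := expInt K P₁ P₂ P₃ (w * f) t
  map_add' f g := by
    rw [expInt, expInt, expInt, ← integral_add (expInt_integrable hK P₁ P₂ P₃ (w * f) t)
      (expInt_integrable hK P₁ P₂ P₃ (w * g) t)]
    congr 1
    ext z
    simp only [ContinuousMap.mul_apply, ContinuousMap.add_apply]
    ring
  map_smul' c f := by
    rw [expInt, expInt, RingHom.id_apply, smul_eq_mul, ← integral_const_mul]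
    congr 1
    ext z
    simp only [ContinuousMap.mul_apply, ContinuousMap.smul_apply, smul_eq_mul]
    ring

/-- The Hirota bilinear form of the KP equation, in terms of the moments that arise as derivatives
of the tau-function. -/
theorem hirota_bilinear {n : ℕ} {E : Set ℝ} (hE : IsCompact E) (hEm : 0 < volume E)
    (ρ : ℝ → ℝ) (hρ : Continuous ρ) (hρpos : ∀ z ∈ E, 0 < ρ z)
    (L : C(Fin n → ℝ, ℝ) →ₗ[ℝ] ℝ) (t : ℝ × ℝ × ℝ)
    (hL : ∀ f, L f = expInt (Set.univ.pi fun _ => E) (powerSum n 1) (powerSum n 2) (powerSum n 3)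
      (weight n ρ hρ * f) t) :
    L 1 * L (powerSum n 1 ^ 4) - 4 * L (powerSum n 1) * L (powerSum n 1 ^ 3)
      + 3 * L (powerSum n 1 ^ 2) ^ 2 + 3 * L 1 * L (powerSum n 2 ^ 2) - 3 * L (powerSum n 2) ^ 2
      - 4 * L 1 * L (powerSum n 1 * powerSum n 3) + 4 * L (powerSum n 1) * L (powerSum n 3) = 0 := by
  let r : ℝ → ℝ := fun s => ρ s * Real.exp (t.1 * s + t.2.1 * s ^ 2 + t.2.2 * s ^ 3)
  have hr : Continuous r := by fun_prop
  have hpos := tau_pos (n := n) hE hEm r hr fun z hz => mul_pos (hρpos z hz) (Real.exp_pos _)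
  obtain ⟨PA, PB, T, h⟩ := rank_two hE r hr hpos.ne'
  refine hirota_of_plucker L (coordMap n) Finset.univ _ _ _ (by simp [powerSum]) rfl rfl
    PA PB T fun x y => ?_
  rw [← h x y, hL]
  congr 1
  rw [expInt]
  congr 1
  ext z
  rw [← weight_mul_exp n ρ hρ t z]
  have halg : ∀ s : ℝ, algebraMap ℝ C(Fin n → ℝ, ℝ) s z = s := fun _ => rfl
  simp only [ContinuousMap.mul_apply, ContinuousMap.prod_apply, ContinuousMap.sub_apply,
    ContinuousMap.one_apply, halg, coordMap, ContinuousMap.coe_mk]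
  ring

/-- The log of the time-deformed matrix-integral tau-function satisfies the KP equation. -/
theorem stmt13 (n : ℕ) (hn : 1 ≤ n) (E : Set ℝ) (hEc : IsCompact E)
    (hEm : 0 < volume E) (ρ : ℝ → ℝ) (hρ : Continuous ρ) (hρpos : ∀ z ∈ E, 0 < ρ z) :
    let τ : ℝ → ℝ → ℝ → ℝ := fun a b c =>
      ∫ z : Fin n → ℝ in Set.univ.pi (fun _ => E),
        (Vdm n z) ^ 2 *
          ∏ k, (ρ (z k) * Real.exp (a * z k + b * (z k) ^ 2 + c * (z k) ^ 3))
    let F : ℝ → ℝ → ℝ → ℝ := fun a b c => Real.log (τ a b c)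
    (∀ a b c, 0 < τ a b c) ∧
    ContDiff ℝ (⊤ : ℕ∞) (fun t : ℝ × ℝ × ℝ => τ t.1 t.2.1 t.2.2) ∧
    (∀ a b c,
      iteratedDeriv 4 (fun x => F x b c) a
        + 3 * iteratedDeriv 2 (fun y => F a y c) b
        - 4 * deriv (fun x => deriv (fun w => F x b w) c) a
        + 6 * (iteratedDeriv 2 (fun x => F x b c) a) ^ 2 = 0) := by
  intro τ F
  have hK : IsCompact (Set.univ.pi (fun _ : Fin n => E)) := isCompact_univ_pi fun _ => hEc
  let p₁ := powerSum n 1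
  let p₂ := powerSum n 2
  let p₃ := powerSum n 3
  let w := weight n ρ hρ
  let I : C(Fin n → ℝ, ℝ) → ℝ × ℝ × ℝ → ℝ := expInt (Set.univ.pi fun _ => E) p₁ p₂ p₃
  have hτ : ∀ a b c, τ a b c = I w (a, b, c) := fun a b c =>
    integral_congr_ae (Filter.Eventually.of_forall fun z =>
      (weight_mul_exp n ρ hρ (a, b, c) z).symm)
  have hpos : ∀ a b c, 0 < τ a b c := fun a b c =>
    tau_pos hEc hEm (fun s => ρ s * Real.exp (a * s + b * s ^ 2 + c * s ^ 3)) (by fun_prop)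
      fun z hz => mul_pos (hρpos z hz) (Real.exp_pos _)
  have hIpos : ∀ a b c, 0 < I w (a, b, c) := fun a b c => hτ a b c ▸ hpos a b c
  refine ⟨hpos, ?_, fun a b c => ?_⟩
  · simp only [hτ]
    exact expInt_contDiff hK p₁ p₂ p₃ w
  · have d1 := fun g x => expInt_hasDerivAt₁ hK p₁ p₂ p₃ g x b c
    have d2 := fun g y => expInt_hasDerivAt₂ hK p₁ p₂ p₃ g a y c
    have e4 := iteratedDeriv_four_log (fun x => I w (x, b, c)) (fun x => I (w * p₁) (x, b, c))
      (fun x => I (w * p₁ * p₁) (x, b, c)) (fun x => I (w * p₁ * p₁ * p₁) (x, b, c))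
      (fun x => I (w * p₁ * p₁ * p₁ * p₁) (x, b, c)) (fun x => hIpos x b c)
      (d1 _) (d1 _) (d1 _) (d1 _) a
    have e2 := congrFun (iteratedDeriv_two_log (fun y => I w (a, y, c))
      (fun y => I (w * p₂) (a, y, c)) (fun y => I (w * p₂ * p₂) (a, y, c))
      (fun y => hIpos a y c) (d2 _) (d2 _)) b
    have e3 : ∀ x, deriv (fun s => Real.log (I w (x, b, s))) c =
        I (w * p₃) (x, b, c) / I w (x, b, c) := fun x =>
      ((expInt_hasDerivAt₃ hK p₁ p₂ p₃ w x b c).log (hIpos x b c).ne').deriv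
    have e13 : deriv (fun x => I (w * p₃) (x, b, c) / I w (x, b, c)) a = _ :=
      ((d1 (w * p₃) a).div (d1 w a) (hIpos a b c).ne').deriv
    have hir := hirota_bilinear hEc hEm ρ hρ hρpos (bracket hK p₁ p₂ p₃ w (a, b, c)) (a, b, c)
      fun f => rfl
    have hb : ∀ f, bracket hK p₁ p₂ p₃ w (a, b, c) f = I (w * f) (a, b, c) := fun f => rfl
    simp only [hb, mul_one] at hir
    simp only [F, hτ, e3, e13]
    rw [e2]
    have hne := (hIpos a b c).ne'
    have m2 : w * p₁ * p₁ = w * p₁ ^ 2 := by ring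
    have m3 : w * p₁ ^ 2 * p₁ = w * p₁ ^ 3 := by ring
    have m4 : w * p₁ ^ 3 * p₁ = w * p₁ ^ 4 := by ring
    have m22 : w * p₂ * p₂ = w * p₂ ^ 2 := by ring
    have m13 : w * p₃ * p₁ = w * (p₁ * p₃) := by ring
    simp only [m2, m3, m4] at e4
    rw [m22]
    change _ + _ - 4 * ((I (w * p₃ * p₁) (a, b, c) * I w (a, b, c) -
      I (w * p₃) (a, b, c) * I (w * p₁) (a, b, c)) / I w (a, b, c) ^ 2) + _ = 0
    rw [m13]
    change I w (a, b, c) * I (w * p₁ ^ 4) (a, b, c) - 4 * I (w * p₁) (a, b, c) *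
      I (w * p₁ ^ 3) (a, b, c) + 3 * I (w * p₁ ^ 2) (a, b, c) ^ 2 +
      3 * I w (a, b, c) * I (w * p₂ ^ 2) (a, b, c) - 3 * I (w * p₂) (a, b, c) ^ 2 -
      4 * I w (a, b, c) * I (w * (p₁ * p₃)) (a, b, c) +
      4 * I (w * p₁) (a, b, c) * I (w * p₃) (a, b, c) = 0 at hir
    generalize iteratedDeriv 4 (fun x => Real.log (I w (x, b, c))) a = D4 at *
    generalize iteratedDeriv 2 (fun x => Real.log (I w (x, b, c))) a = D2 at *
    -- only the combination `D4 + 6 * D2 ^ 2` has a bilinear numerator over `τ ^ 2`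
    rw [show ∀ u v : ℝ, D4 + u - v + 6 * D2 ^ 2 = (D4 + 6 * D2 ^ 2) + u - v by intros; ring, e4]
    field_simp
    linear_combination hir
end

section
/- Let n ≥ 1, N ≥ 2, r ≥ 1 be integers. For t = (t₁,…,t_N) ∈ ℝ^N and real numbers c₁ < c₂ < … < c_{2r}, set E(c) := ⋃_{i=1}^r [c_{2i−1}, c_{2i}] and I(t, c) := ∫_{E(c)^n} Δ_n(z)² ∏_{k=1}^n exp(−z_k² + Σ_{i=1}^N t_i z_k^i) dz₁…dz_n. Then I satisfies the two Virasoro constraints: (a) Σ_{j=1}^{2r} ∂I/∂c_j + 2 ∂I/∂t₁ − Σ_{i=2}^N i t_i ∂I/∂t_{i−1} − n t₁ I = 0, and (b) Σ_{j=1}^{2r} c_j ∂I/∂c_j + 2 ∂I/∂t₂ − Σ_{i=1}^N i t_i ∂I/∂t_i − n² I = 0. -/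
/-!
The integral is a linear functional of the polynomial `Δ_n²` in front of the product weight
(`polyInt`), and on monomials it factors into one-variable moments (`polyInt_prod`). All calculus
therefore takes place in one variable: differentiation under the integral sign gives `∂/∂t_i` of a
moment (`hasDerivAt_mom_time`), and the fundamental theorem of calculus on each interval gives both
the endpoint derivatives of a moment (`hasDerivAt_mom_endpoint`) and the identity equating boundary
terms with the integral of a total derivative (`sum_endpoint`). By the product rule and linearity
this yields, for every polynomial `P`,

* `∂/∂t_i` inserts the power sum `p_i` (`hasDerivAt_polyInt_time`);
* `∑_j c_j^κ ∂/∂c_j` inserts the divergence of the vector field `(z_l^κ)_l` acting on `P` times the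
  weight (`exists_endpoint_deriv`). By `polyInt_variation` this divergence is
  `∑_l ∂_l (z_l^κ P) - 2 p_{κ+1} P + ∑_i i t_i p_{κ+i-1} P`.

For `P = Δ_n²`, the first sum vanishes when `κ = 0` by translation invariance (`sum_pderiv_vdmSq`)
and equals `n² Δ_n²` when `κ = 1` by Euler's identity (`sum_pderiv_X_mul_vdmSq`). Replacing each
inserted power sum by the corresponding time derivative gives the two constraints.
-/

open scoped BigOperators
open MeasureTheory

/-- The union of intervals `⋃_{i=1}^r [c_{2i-1}, c_{2i}]` determined by the endpoints `c`. -/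
def Ecup (r : ℕ) (c : Fin (2 * r) → ℝ) : Set ℝ :=
  ⋃ i : Fin r,
    Set.Icc (c ⟨2 * (i : ℕ), by have := i.isLt; omega⟩)
      (c ⟨2 * (i : ℕ) + 1, by have := i.isLt; omega⟩)

open MvPolynomial

/-! ### One-variable moments -/

/-- The one-variable weight `exp (-x² + ∑_{i=1}^N t_i x^i)`. -/
noncomputable def wt (N : ℕ) (t : ℕ → ℝ) (x : ℝ) : ℝ :=
  Real.exp (-x ^ 2 + ∑ i ∈ Finset.Icc 1 N, t i * x ^ i)

/-- The logarithmic derivative `-2x + ∑_{i=1}^N i t_i x^{i-1}` of the weight. -/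
noncomputable def dV (N : ℕ) (t : ℕ → ℝ) (x : ℝ) : ℝ :=
  -2 * x + ∑ i ∈ Finset.Icc 1 N, (i : ℝ) * t i * x ^ (i - 1)

/-- The one-variable integral of `f` against the weight over the union of intervals. -/
noncomputable def mom (N r : ℕ) (t : ℕ → ℝ) (c : Fin (2 * r) → ℝ) (f : ℝ → ℝ) : ℝ :=
  ∫ x in Ecup r c, f x * wt N t x

@[fun_prop]
lemma continuous_wt (N : ℕ) (t : ℕ → ℝ) : Continuous (wt N t) := by
  unfold wt; fun_prop

@[fun_prop]
lemma continuous_dV (N : ℕ) (t : ℕ → ℝ) : Continuous (dV N t) := by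
  unfold dV; fun_prop

lemma isCompact_Ecup (r : ℕ) (c : Fin (2 * r) → ℝ) : IsCompact (Ecup r c) :=
  isCompact_iUnion fun _ => isCompact_Icc

lemma hasDerivAt_pow_mul_wt (N : ℕ) (t : ℕ → ℝ) (m : ℕ) (x : ℝ) :
    HasDerivAt (fun x => x ^ m * wt N t x)
      (((m : ℝ) * x ^ (m - 1) + x ^ m * dV N t x) * wt N t x) x := by
  have h1 : HasDerivAt (fun x : ℝ => -x ^ 2 + ∑ i ∈ Finset.Icc 1 N, t i * x ^ i)
      (dV N t x) x := by
    unfold dV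
    refine HasDerivAt.add ?_ (HasDerivAt.fun_sum fun i _ => ?_)
    · exact (hasDerivAt_pow 2 x).fun_neg.congr_deriv (by simp)
    · exact ((hasDerivAt_pow i x).const_mul (t i)).congr_deriv (by ring)
  refine ((hasDerivAt_pow m x).mul h1.exp).congr_deriv ?_
  simp only [wt]
  ring

lemma wt_update {N i : ℕ} (hi : i ∈ Finset.Icc 1 N) (t : ℕ → ℝ) (s x : ℝ) :
    wt N (Function.update t i s) x = wt N t x * Real.exp ((s - t i) * x ^ i) := by
  unfold wt
  rw [← Real.exp_add]
  congr 1
  rw [← Finset.add_sum_erase _ _ hi, ← Finset.add_sum_erase _ (fun j => t j * x ^ j) hi,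
    Function.update_self, Finset.sum_congr rfl (g := fun j => t j * x ^ j)]
  · ring
  · intro j hj
    rw [Function.update_of_ne (Finset.ne_of_mem_erase hj)]

/-- Differentiation under the integral sign: `∂/∂t_i` multiplies the integrand by `x^i`. -/
lemma hasDerivAt_mom_time {N i : ℕ} (hi : i ∈ Finset.Icc 1 N) (r : ℕ) (t : ℕ → ℝ)
    (c : Fin (2 * r) → ℝ) {f : ℝ → ℝ} (hf : Continuous f) :
    HasDerivAt (fun s => mom N r (Function.update t i s) c f)
      (mom N r t c fun x => f x * x ^ i) (t i) := by
  unfold mom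
  simp_rw [wt_update hi]
  have hc := isCompact_Ecup r c
  have key := hasDerivAt_integral_of_dominated_loc_of_deriv_le
    (μ := volume.restrict (Ecup r c)) (x₀ := t i) (s := Metric.ball (t i) 1)
    (F := fun s x => f x * (wt N t x * Real.exp ((s - t i) * x ^ i)))
    (F' := fun s x => f x * (wt N t x * (Real.exp ((s - t i) * x ^ i) * x ^ i)))
    (bound := fun x => |f x| * (wt N t x * (Real.exp (|x ^ i|) * |x ^ i|)))
    (Metric.ball_mem_nhds _ one_pos)
    (Filter.Eventually.of_forall fun s => by
      apply Continuous.aestronglyMeasurable; fun_prop)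
    (by apply (Continuous.continuousOn _).integrableOn_compact hc; fun_prop)
    (by apply Continuous.aestronglyMeasurable; fun_prop)
    (Filter.Eventually.of_forall fun x s hs => by
      have hw : 0 ≤ wt N t x := (Real.exp_pos _).le
      rw [norm_mul, norm_mul, norm_mul, Real.norm_eq_abs, Real.norm_eq_abs, Real.norm_eq_abs,
        Real.norm_eq_abs, Real.abs_exp, abs_of_nonneg hw]
      gcongr
      refine (le_abs_self _).trans ?_
      rw [abs_mul]
      have : |s - t i| ≤ 1 := by
        rw [Metric.mem_ball, Real.dist_eq] at hs
        exact hs.le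
      exact mul_le_of_le_one_left (abs_nonneg _) this)
    (by apply (Continuous.continuousOn _).integrableOn_compact hc; fun_prop)
    (Filter.Eventually.of_forall fun x s _ => by
      have : HasDerivAt (fun s => (s - t i) * x ^ i) (x ^ i) s := by
        simpa using ((hasDerivAt_id s).sub_const (t i)).mul_const (x ^ i)
      exact (this.exp.const_mul _).const_mul _)
  refine key.2.congr_deriv ?_
  apply integral_congr_ae
  filter_upwards with x
  simp
  ring

lemma sum_fin_two_mul (r : ℕ) (g : Fin (2 * r) → ℝ) :
    ∑ j, g j = ∑ i : Fin r, (g ⟨2 * (i : ℕ), by have := i.isLt; omega⟩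
      + g ⟨2 * (i : ℕ) + 1, by have := i.isLt; omega⟩) := by
  induction r with
  | zero => simp
  | succ r ih =>
    rw [Fin.sum_univ_castSucc (n := r)]
    change ∑ j : Fin (2 * r + 1 + 1), g j = _
    rw [Fin.sum_univ_castSucc, Fin.sum_univ_castSucc, add_assoc]
    exact congrArg₂ (· + ·) (ih fun j => g j.castSucc.castSucc) rfl

/-- The fundamental theorem of calculus on the union of intervals: if `Ψ` is a primitive of
`f * wt`, the integral is the alternating sum of the values of `Ψ` at the endpoints. -/
lemma mom_eq_sum {N r : ℕ} {t : ℕ → ℝ} {c : Fin (2 * r) → ℝ} (hc : StrictMono c)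
    {f Ψ : ℝ → ℝ} (hf : Continuous f) (hΨ : ∀ x, HasDerivAt Ψ (f x * wt N t x) x) :
    mom N r t c f = ∑ j : Fin (2 * r), (-1) ^ ((j : ℕ) + 1) * Ψ (c j) := by
  unfold mom Ecup
  rw [integral_iUnion_fintype (fun _ => measurableSet_Icc), sum_fin_two_mul]
  · refine Finset.sum_congr rfl fun i _ => ?_
    have hle : c ⟨2 * (i : ℕ), by have := i.isLt; omega⟩
        ≤ c ⟨2 * (i : ℕ) + 1, by have := i.isLt; omega⟩ :=
      hc.monotone (by simp)
    rw [integral_Icc_eq_integral_Ioc, ← intervalIntegral.integral_of_le hle,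
      intervalIntegral.integral_eq_sub_of_hasDerivAt (fun x _ => hΨ x)]
    · simp [pow_succ, pow_mul]
      ring
    · apply Continuous.intervalIntegrable; fun_prop
  · intro i j hij
    rw [Function.onFun, Set.disjoint_left]
    rintro x ⟨h1, h2⟩ ⟨h3, h4⟩
    rcases lt_or_gt_of_ne hij with h | h
    · have := hc.le_iff_le.1 (h3.trans h2)
      simp only [Fin.mk_le_mk] at this
      omega
    · have := hc.le_iff_le.1 (h1.trans h4)
      simp only [Fin.mk_le_mk] at this
      omega
  · intro i
    apply (Continuous.continuousOn _).integrableOn_compact isCompact_Icc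
    fun_prop

lemma eventually_strictMono_update {m : ℕ} {c : Fin m → ℝ} (hc : StrictMono c) (j : Fin m) :
    ∀ᶠ s in nhds (c j), StrictMono (Function.update c j s) := by
  have hcont : ∀ k, Continuous fun s => Function.update c j s k := fun k =>
    (continuous_apply (A := fun _ => ℝ) k).comp
      ((continuous_const (y := c)).update j continuous_id)
  have : ∀ᶠ s in nhds (c j), ∀ a b : Fin m, a < b →
      Function.update c j s a < Function.update c j s b := by
    refine Filter.eventually_all.2 fun a => Filter.eventually_all.2 fun b => ?_
    by_cases hab : a < b
    · have := ((hcont a).tendsto (c j)).eventually_lt ((hcont b).tendsto (c j))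
        (by simpa using hc hab)
      filter_upwards [this] with s hs _ using hs
    · exact Filter.Eventually.of_forall fun s h => absurd h hab
  filter_upwards [this] with s hs a b hab using hs a b hab

/-- The strict ordering of the endpoints persists near `c`, so `mom_eq_sum` applies there and only
the `j`-th boundary value varies. -/
lemma hasDerivAt_mom_endpoint {N r : ℕ} {t : ℕ → ℝ} {c : Fin (2 * r) → ℝ} (hc : StrictMono c)
    (j : Fin (2 * r)) {f : ℝ → ℝ} (hf : Continuous f) :
    HasDerivAt (fun s => mom N r t (Function.update c j s) f)
      ((-1) ^ ((j : ℕ) + 1) * (f (c j) * wt N t (c j))) (c j) := by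
  set Ψ : ℝ → ℝ := fun y => ∫ x in (0 : ℝ)..y, f x * wt N t x
  have hΨ : ∀ x, HasDerivAt Ψ (f x * wt N t x) x := fun x =>
    (show Continuous fun x => f x * wt N t x by fun_prop).integral_hasStrictDerivAt 0 x
      |>.hasDerivAt
  have hsum : HasDerivAt (fun s => ∑ k : Fin (2 * r),
      (-1) ^ ((k : ℕ) + 1) * Ψ (Function.update c j s k))
      (∑ k : Fin (2 * r), if k = j then (-1) ^ ((k : ℕ) + 1) * (f (c k) * wt N t (c k)) else 0)
      (c j) := by
    refine HasDerivAt.fun_sum fun k _ => ?_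
    by_cases hk : k = j
    · subst hk
      simpa using (hΨ (c k)).const_mul ((-1) ^ ((k : ℕ) + 1))
    · simpa [hk] using hasDerivAt_const (c j) _
  rw [Finset.sum_ite_eq' Finset.univ j, if_pos (Finset.mem_univ j)] at hsum
  refine hsum.congr_of_eventuallyEq ?_
  filter_upwards [eventually_strictMono_update hc j] with s hs
  exact mom_eq_sum hs hf hΨ

/-- Integrating `d/dx (x^m wt)` over the union of intervals yields the boundary terms. -/
lemma sum_endpoint {N r : ℕ} {t : ℕ → ℝ} {c : Fin (2 * r) → ℝ} (hc : StrictMono c) (m : ℕ) :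
    ∑ j : Fin (2 * r), (-1) ^ ((j : ℕ) + 1) * (c j ^ m * wt N t (c j))
      = mom N r t c fun x => (m : ℝ) * x ^ (m - 1) + x ^ m * dV N t x :=
  (mom_eq_sum hc (by fun_prop) (hasDerivAt_pow_mul_wt N t m)).symm

/-! ### The integral as a functional on polynomials -/

lemma integrable_eval (n N r : ℕ) (t : ℕ → ℝ) (c : Fin (2 * r) → ℝ)
    (P : MvPolynomial (Fin n) ℝ) :
    Integrable (fun z : Fin n → ℝ => eval z P * ∏ k, wt N t (z k))
      (volume.restrict (Set.univ.pi fun _ => Ecup r c)) := by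
  apply (Continuous.continuousOn _).integrableOn_compact
    (isCompact_univ_pi fun _ => isCompact_Ecup r c)
  exact (MvPolynomial.continuous_eval P).mul (by fun_prop)

/-- The linear functional sending a polynomial `P` in `n` variables to its integral over
`E(c)^n` against the product weight. -/
noncomputable def polyInt (n N r : ℕ) (t : ℕ → ℝ) (c : Fin (2 * r) → ℝ) :
    MvPolynomial (Fin n) ℝ →ₗ[ℝ] ℝ where
  toFun P := ∫ z in Set.univ.pi fun _ => Ecup r c, eval z P * ∏ k, wt N t (z k)
  map_add' P Q := by
    simp_rw [map_add, add_mul]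
    exact integral_add (integrable_eval n N r t c P) (integrable_eval n N r t c Q)
  map_smul' a P := by
    simp_rw [smul_eval, mul_assoc]
    exact integral_const_mul a _

/-- Fubini: a product integrand factors into one-variable moments. No integrability is needed. -/
lemma polyInt_prod {n N r : ℕ} {t : ℕ → ℝ} {c : Fin (2 * r) → ℝ}
    {P : MvPolynomial (Fin n) ℝ} {a : ℝ} {f : Fin n → ℝ → ℝ}
    (h : ∀ z, eval z P = a * ∏ k, f k (z k)) :
    polyInt n N r t c P = a * ∏ k, mom N r t c (f k) := by
  change ∫ z in Set.univ.pi fun _ => Ecup r c, eval z P * ∏ k, wt N t (z k) = _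
  simp_rw [h, mul_assoc, ← Finset.prod_mul_distrib]
  rw [integral_const_mul, volume_pi, Measure.restrict_pi_pi]
  congr 1
  exact integral_fintype_prod_eq_prod fun k x => f k x * wt N t x

/-- Fubini for a product integrand whose `l`-th factor plays a special role. -/
lemma polyInt_split {n N r : ℕ} {t : ℕ → ℝ} {c : Fin (2 * r) → ℝ}
    {P : MvPolynomial (Fin n) ℝ} {a : ℝ} {f : Fin n → ℝ → ℝ} {g : ℝ → ℝ} {l : Fin n}
    (h : ∀ z, eval z P = a * ((∏ k ∈ Finset.univ.erase l, f k (z k)) * g (z l))) :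
    polyInt n N r t c P
      = a * ((∏ k ∈ Finset.univ.erase l, mom N r t c (f k)) * mom N r t c g) := by
  rw [polyInt_prod (a := a) (f := Function.update f l g),
    ← Finset.prod_erase_mul _ _ (Finset.mem_univ l), Function.update_self]
  · congr 2
    exact Finset.prod_congr rfl fun k hk => by
      rw [Function.update_of_ne (Finset.ne_of_mem_erase hk)]
  · intro z
    rw [h, ← Finset.prod_erase_mul _ _ (Finset.mem_univ l), Function.update_self]
    congr 2
    exact Finset.prod_congr rfl fun k hk => by
      rw [Function.update_of_ne (Finset.ne_of_mem_erase hk)]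

lemma eval_monomial_fin {n : ℕ} (u : Fin n →₀ ℕ) (a : ℝ) (z : Fin n → ℝ) :
    eval z (monomial u a) = a * ∏ k, z k ^ u k := by
  rw [eval_monomial, Finsupp.prod_fintype _ _ fun _ => pow_zero _]

/-- `∂/∂t_i` inserts the power sum `p_i` into the integrand. -/
lemma hasDerivAt_polyInt_time {n N i : ℕ} (hi : i ∈ Finset.Icc 1 N) (r : ℕ) (t : ℕ → ℝ)
    (c : Fin (2 * r) → ℝ) (P : MvPolynomial (Fin n) ℝ) :
    HasDerivAt (fun s => polyInt n N r (Function.update t i s) c P)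
      (polyInt n N r t c (psum (Fin n) ℝ i * P)) (t i) := by
  induction P using MvPolynomial.induction_on' with
  | monomial u a =>
    simp_rw [polyInt_prod (f := fun k x => x ^ u k) (eval_monomial_fin u a)]
    have := (HasDerivAt.fun_finsetProd (u := Finset.univ) fun k _ =>
      hasDerivAt_mom_time hi r t c (f := fun x => x ^ u k) (by fun_prop)).const_mul a
    refine this.congr_deriv ?_
    rw [psum, Finset.sum_mul, map_sum, Finset.mul_sum]
    refine Finset.sum_congr rfl fun l _ => ?_
    rw [polyInt_split (a := a) (f := fun k x => x ^ u k) (g := fun x => x ^ u l * x ^ i)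
      (l := l), Function.update_eq_self, smul_eq_mul]
    intro z
    rw [map_mul, eval_monomial_fin, ← Finset.prod_erase_mul _ _ (Finset.mem_univ l)]
    simp only [map_pow, eval_X]
    ring
  | add P Q hP hQ =>
    simp_rw [mul_add, map_add]
    exact hP.add hQ

/-- The polynomial `-2 X_l + ∑_{i=1}^N i t_i X_l^{i-1}`. -/
noncomputable def dVPoly {n : ℕ} (N : ℕ) (t : ℕ → ℝ) (l : Fin n) : MvPolynomial (Fin n) ℝ :=
  C (-2) * X l + ∑ i ∈ Finset.Icc 1 N, C ((i : ℝ) * t i) * X l ^ (i - 1)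

/-- The integrand produced by the variation `z ↦ z + ε z^κ`: the divergence of the vector field
`(z_l^κ)_l` times `P` and the product weight, divided by the weight. -/
noncomputable def variation {n : ℕ} (N : ℕ) (t : ℕ → ℝ) (κ : ℕ) (P : MvPolynomial (Fin n) ℝ) :
    MvPolynomial (Fin n) ℝ :=
  ∑ l, (pderiv l (X l ^ κ * P) + X l ^ κ * dVPoly N t l * P)

/-- On a monomial, the `l`-th summand of the variation differentiates only the factor in `z_l`. -/
lemma eval_variation_summand {n : ℕ} (N : ℕ) (t : ℕ → ℝ) (κ : ℕ) (u : Fin n →₀ ℕ) (a : ℝ)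
    (l : Fin n) (z : Fin n → ℝ) :
    eval z (pderiv l (X l ^ κ * monomial u a) + X l ^ κ * dVPoly N t l * monomial u a)
      = a * ((∏ k ∈ Finset.univ.erase l, z k ^ u k) *
        (((κ + u l : ℕ) : ℝ) * z l ^ (κ + u l - 1) + z l ^ (κ + u l) * dV N t (z l))) := by
  have h1 : (X l ^ κ * monomial u a : MvPolynomial (Fin n) ℝ)
      = monomial (Finsupp.single l κ + u) a := by
    rw [X_pow_eq_monomial, monomial_mul, one_mul]
  have h2 : ∏ k ∈ Finset.univ.erase l, z k ^ (Finsupp.single l κ + u - Finsupp.single l 1 : Fin n →₀ ℕ) k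
      = ∏ k ∈ Finset.univ.erase l, z k ^ u k := by
    refine Finset.prod_congr rfl fun k hk => ?_
    have hk' := Finset.ne_of_mem_erase hk
    simp [hk'.symm]
  have h3 : eval z (dVPoly N t l) = dV N t (z l) := by
    simp [dVPoly, dV]
  rw [map_add, h1, pderiv_monomial, eval_monomial_fin, map_mul, map_mul, eval_monomial_fin, h3,
    ← Finset.prod_erase_mul _ _ (Finset.mem_univ l), h2,
    ← Finset.prod_erase_mul _ (fun k => z k ^ u k) (Finset.mem_univ l)]
  simp
  ring

/-- The endpoint derivatives of the integral of `P` exist, and their combination with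
coefficients `c_j^κ` is the integral of the variation of `P`. -/
lemma exists_endpoint_deriv {n : ℕ} (N : ℕ) {r : ℕ} (t : ℕ → ℝ) {c : Fin (2 * r) → ℝ}
    (hc : StrictMono c) (P : MvPolynomial (Fin n) ℝ) :
    ∃ B : Fin (2 * r) → ℝ,
      (∀ j, HasDerivAt (fun s => polyInt n N r t (Function.update c j s) P) (B j) (c j)) ∧
      ∀ κ : ℕ, ∑ j, c j ^ κ * B j = polyInt n N r t c (variation N t κ P) := by
  induction P using MvPolynomial.induction_on' with
  | monomial u a =>
    refine ⟨fun j => a * ∑ l, (∏ k ∈ Finset.univ.erase l, mom N r t c fun x => x ^ u k) *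
      ((-1) ^ ((j : ℕ) + 1) * (c j ^ u l * wt N t (c j))), fun j => ?_, fun κ => ?_⟩
    · simp_rw [polyInt_prod (f := fun k x => x ^ u k) (eval_monomial_fin u a)]
      have := (HasDerivAt.fun_finsetProd (u := Finset.univ) fun k _ =>
        hasDerivAt_mom_endpoint (N := N) (t := t) hc j (f := fun x => x ^ u k)
          (by fun_prop)).const_mul a
      refine this.congr_deriv ?_
      simp only [Function.update_eq_self, smul_eq_mul]
    · simp_rw [Finset.mul_sum]
      rw [Finset.sum_comm, variation, map_sum]
      refine Finset.sum_congr rfl fun l _ => ?_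
      rw [polyInt_split (f := fun k x => x ^ u k)
        (g := fun x => ((κ + u l : ℕ) : ℝ) * x ^ (κ + u l - 1) + x ^ (κ + u l) * dV N t x)
        (eval_variation_summand N t κ u a l), ← sum_endpoint hc, Finset.mul_sum, Finset.mul_sum]
      refine Finset.sum_congr rfl fun j _ => ?_
      ring
  | add P Q hP hQ =>
    obtain ⟨A, hA, hA'⟩ := hP
    obtain ⟨B, hB, hB'⟩ := hQ
    refine ⟨A + B, fun j => ?_, fun κ => ?_⟩
    · simp_rw [map_add]
      exact (hA j).add (hB j)
    · have : variation N t κ (P + Q) = variation N t κ P + variation N t κ Q := by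
        simp only [variation, ← Finset.sum_add_distrib, mul_add, map_add]
        exact Finset.sum_congr rfl fun l _ => by ring
      rw [this, map_add, ← hA', ← hB', ← Finset.sum_add_distrib]
      exact Finset.sum_congr rfl fun j _ => by simp [mul_add]

/-- The integral of the variation, with the logarithmic derivative of the weight expanded in power
sums. -/
lemma polyInt_variation {n : ℕ} (N r : ℕ) (t : ℕ → ℝ) (c : Fin (2 * r) → ℝ) (κ : ℕ)
    (P : MvPolynomial (Fin n) ℝ) :
    polyInt n N r t c (variation N t κ P)
      = polyInt n N r t c (∑ l, pderiv l (X l ^ κ * P))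
        - 2 * polyInt n N r t c (psum (Fin n) ℝ (κ + 1) * P)
        + ∑ i ∈ Finset.Icc 1 N,
          (i : ℝ) * t i * polyInt n N r t c (psum (Fin n) ℝ (κ + (i - 1)) * P) := by
  have : variation N t κ P = ∑ l, pderiv l (X l ^ κ * P)
      + (-2 : ℝ) • (psum (Fin n) ℝ (κ + 1) * P)
      + ∑ i ∈ Finset.Icc 1 N, ((i : ℝ) * t i) • (psum (Fin n) ℝ (κ + (i - 1)) * P) := by
    simp only [variation, dVPoly, psum, smul_eq_C_mul, Finset.sum_add_distrib, mul_add, add_mul,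
      Finset.mul_sum, Finset.sum_mul]
    rw [Finset.sum_comm (s := Finset.univ) (t := Finset.Icc 1 N), ← add_assoc]
    congr 1
    · congr 1
      exact Finset.sum_congr rfl fun l _ => by ring
    · exact Finset.sum_congr rfl fun i _ => Finset.sum_congr rfl fun l _ => by ring
  rw [this]
  simp only [map_add, map_sum, map_smul, smul_eq_mul]
  ring

/-! ### The Vandermonde determinant and the Virasoro constraints -/

/-- The squared Vandermonde determinant as a polynomial. -/
noncomputable def vdmSq (n : ℕ) : MvPolynomial (Fin n) ℝ :=
  (∏ p ∈ Finset.univ.filter (fun p : Fin n × Fin n => p.1 < p.2), (X p.1 - X p.2)) ^ 2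

lemma eval_vdmSq (n : ℕ) (z : Fin n → ℝ) : eval z (vdmSq n) = Vdm n z ^ 2 := by
  simp [vdmSq, Vdm, map_prod]

/-- Translation invariance of the Vandermonde determinant. -/
lemma sum_pderiv_vdmSq (n : ℕ) : ∑ l, pderiv l (vdmSq n) = 0 := by
  set D : Derivation ℝ (MvPolynomial (Fin n) ℝ) (MvPolynomial (Fin n) ℝ) := ∑ l, pderiv l
  have hD : ∀ P, D P = ∑ l, pderiv l P := fun P => by
    have := congrFun (map_sum (Derivation.coeFnAddMonoidHom (R := ℝ)
      (A := MvPolynomial (Fin n) ℝ) (M := MvPolynomial (Fin n) ℝ)) pderiv Finset.univ) P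
    rw [Finset.sum_apply] at this
    exact this
  rw [← hD, vdmSq, sq, Derivation.leibniz]
  suffices h : D (∏ p ∈ Finset.univ.filter (fun p : Fin n × Fin n => p.1 < p.2),
      (X p.1 - X p.2)) = 0 by simp [h]
  refine Finset.prod_induction _ (fun P => D P = 0) (fun P Q hP hQ => ?_) ?_ fun p _ => ?_
  · simp [Derivation.leibniz, hP, hQ]
  · simp
  · simp [hD, pderiv_X, Finset.sum_sub_distrib, Pi.single_apply]

/-- Counting the diagonal and the two halves of the off-diagonal of an `n × n` grid. -/
lemma two_mul_card_lt (n : ℕ) :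
    n + (Finset.univ.filter (fun p : Fin n × Fin n => p.1 < p.2)).card * 2 = n * n := by
  have h1 : (Finset.univ.filter (fun p : Fin n × Fin n => p.1 < p.2)).card
      = (Finset.univ.filter (fun p : Fin n × Fin n => p.2 < p.1)).card :=
    Finset.card_bij (fun p _ => p.swap) (by simp) (by simp)
      (fun p hp => ⟨p.swap, by simpa using hp, by simp⟩)
  have h2 : (Finset.univ.filter (fun p : Fin n × Fin n => p.1 = p.2)).card = n := by
    refine Eq.trans (Finset.card_bij (t := (Finset.univ : Finset (Fin n))) (fun p _ => p.1)
      (by simp) (fun p hp q hq h => ?_) (fun i _ => ⟨(i, i), by simp, rfl⟩)) (Finset.card_fin n)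
    exact Prod.ext h (by rw [← (Finset.mem_filter.1 hp).2, h, (Finset.mem_filter.1 hq).2])
  have h3 : (Finset.univ : Finset (Fin n × Fin n)).card = n * n := by simp
  have h4 : (Finset.univ : Finset (Fin n × Fin n))
      = (Finset.univ.filter (fun p => p.1 = p.2)) ∪
        ((Finset.univ.filter (fun p => p.1 < p.2)) ∪
          (Finset.univ.filter (fun p => p.2 < p.1))) := by
    ext p
    simp only [Finset.mem_univ, Finset.mem_union, Finset.mem_filter, true_and, true_iff]
    rcases lt_trichotomy p.1 p.2 with h | h | h
    · exact Or.inr (Or.inl h)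
    · exact Or.inl h
    · exact Or.inr (Or.inr h)
  rw [h4, Finset.card_union_of_disjoint, Finset.card_union_of_disjoint, h2, ← h1] at h3
  · omega
  · exact Finset.disjoint_filter.2 fun p _ h h' => lt_asymm h h'
  · rw [Finset.disjoint_union_right]
    exact ⟨Finset.disjoint_filter.2 fun p _ h h' => h'.ne h,
      Finset.disjoint_filter.2 fun p _ h h' => h'.ne h.symm⟩

/-- Homogeneity of the Vandermonde determinant: its square has degree `n (n - 1)`, so Euler's
identity gives the eigenvalue `n + n (n - 1) = n²`. -/
lemma sum_pderiv_X_mul_vdmSq (n : ℕ) :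
    ∑ l, pderiv l (X l ^ 1 * vdmSq n) = ((n : ℝ) ^ 2) • vdmSq n := by
  have hom : (vdmSq n).IsHomogeneous
      ((Finset.univ.filter (fun p : Fin n × Fin n => p.1 < p.2)).card * 2) := by
    rw [Finset.card_eq_sum_ones]
    exact (IsHomogeneous.prod _ _ _ fun p _ =>
      (isHomogeneous_X ℝ p.1).sub (isHomogeneous_X ℝ p.2)).pow 2
  have euler := hom.sum_X_mul_pderiv
  simp only [pow_one, pderiv_mul, pderiv_X_self, one_mul, Finset.sum_add_distrib]
  rw [euler]
  rw [Finset.sum_const, Finset.card_univ, Fintype.card_fin, ← add_nsmul, two_mul_card_lt,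
    ← Nat.cast_smul_eq_nsmul ℝ]
  push_cast
  rw [sq]

/-- Virasoro constraints (`k = -1` and `k = 0`) for the time-deformed Gaussian matrix
integral over a disjoint union of intervals. -/
theorem stmt14 (n N r : ℕ) (hn : 1 ≤ n) (hN : 2 ≤ N) (hr : 1 ≤ r)
    (t : ℕ → ℝ) (c : Fin (2 * r) → ℝ) (hc : StrictMono c) :
    let I : (ℕ → ℝ) → (Fin (2 * r) → ℝ) → ℝ := fun tt cc =>
      ∫ z : Fin n → ℝ in Set.univ.pi (fun _ => Ecup r cc),
        (Vdm n z) ^ 2 *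
          ∏ k, Real.exp (-(z k) ^ 2 + ∑ i ∈ Finset.Icc 1 N, tt i * (z k) ^ i)
    let dC : Fin (2 * r) → ℝ := fun j => deriv (fun s => I t (Function.update c j s)) (c j)
    let dT : ℕ → ℝ := fun i => deriv (fun s => I (Function.update t i s) c) (t i)
    ((∑ j, dC j) + 2 * dT 1
        - (∑ i ∈ Finset.Icc 2 N, (i : ℝ) * t i * dT (i - 1)) - (n : ℝ) * t 1 * I t c = 0)
    ∧ ((∑ j, c j * dC j) + 2 * dT 2
        - (∑ i ∈ Finset.Icc 1 N, (i : ℝ) * t i * dT i) - (n : ℝ) ^ 2 * I t c = 0) := by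
  intro I dC dT
  have hI : ∀ tt cc, I tt cc = polyInt n N r tt cc (vdmSq n) := by
    intro tt cc
    change _ = ∫ z in Set.univ.pi fun _ => Ecup r cc, eval z (vdmSq n) * ∏ k, wt N tt (z k)
    simp_rw [eval_vdmSq]
    rfl
  obtain ⟨B, hB, hsum⟩ := exists_endpoint_deriv N t hc (vdmSq n)
  have hdC : ∀ j, dC j = B j := fun j => by
    simp only [dC, hI]
    exact (hB j).deriv
  have hdT : ∀ i ∈ Finset.Icc 1 N, dT i = polyInt n N r t c (psum (Fin n) ℝ i * vdmSq n) := by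
    intro i hi
    simp only [dT, hI]
    exact (hasDerivAt_polyInt_time hi r t c _).deriv
  have hsplit : Finset.Icc 1 N = insert 1 (Finset.Icc 2 N) := by
    ext i; simp; omega
  constructor
  · have h0 := hsum 0
    rw [polyInt_variation] at h0
    simp only [pow_zero, one_mul, sum_pderiv_vdmSq, map_zero, zero_add] at h0
    rw [hsplit, Finset.sum_insert (by simp), ← hdT 1 (by simp; omega)] at h0
    have hpow : polyInt n N r t c (psum (Fin n) ℝ (1 - 1) * vdmSq n) = n * I t c := by
      rw [hI, Nat.sub_self, psum_zero, Fintype.card_fin, ← nsmul_eq_mul, map_nsmul, nsmul_eq_mul]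
    have hT : ∑ i ∈ Finset.Icc 2 N, (i : ℝ) * t i * dT (i - 1) = ∑ i ∈ Finset.Icc 2 N,
        (i : ℝ) * t i * polyInt n N r t c (psum (Fin n) ℝ (i - 1) * vdmSq n) :=
      Finset.sum_congr rfl fun i hi => by
        rw [Finset.mem_Icc] at hi
        rw [hdT (i - 1) (by rw [Finset.mem_Icc]; omega)]
    rw [hpow] at h0
    simp_rw [hdC]
    rw [hT, h0]
    push_cast
    ring
  · have h1 := hsum 1
    rw [polyInt_variation, sum_pderiv_X_mul_vdmSq, map_smul, smul_eq_mul, ← hI,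
      ← hdT 2 (by simp; omega)] at h1
    have hT : ∑ i ∈ Finset.Icc 1 N, (i : ℝ) * t i * dT i = ∑ i ∈ Finset.Icc 1 N,
        (i : ℝ) * t i * polyInt n N r t c (psum (Fin n) ℝ (1 + (i - 1)) * vdmSq n) :=
      Finset.sum_congr rfl fun i hi => by
        rw [hdT i hi, Nat.add_sub_cancel' (Finset.mem_Icc.1 hi).1]
    simp only [pow_one] at h1
    simp_rw [hdC]
    rw [hT, h1]
    ring
end

section
/- Let μ be a measure on ℝ and let K : ℝ×ℝ → ℝ be measurable and symmetric (K(x,y) = K(y,x)) such that: (i) for all x, z the function y ↦ K(x,y)K(y,z) is μ-integrable and ∫ K(x,y)K(y,z) dμ(y) = K(x,z) (the reproducing property), and (ii) z ↦ K(z,z) is μ-integrable. Then for every n ≥ 2 and all z₁,…,z_{n−1} ∈ ℝ: ∫ det(K(z_i,z_j))_{1≤i,j≤n} dμ(z_n) = (∫ K(z,z) dμ(z) − n + 1) · det(K(z_i,z_j))_{1≤i,j≤n−1}, where in the n×n determinant the last index corresponds to the integration variable z_n. -/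
/-!
Expanding the `(m + 1) × (m + 1)` determinant along its last row and column gives
`K(w,w) det A - ∑ i j, adj(A) i j * K(z j, w) * K(w, z i)` with `A i j = K(z i, z j)`.
Integrating in `w`, the reproducing property turns the double sum into
`∑ i j, adj(A) i j * A j i = tr (adj(A) A) = m det A`.

The determinant expansion is `det_bordered`. It holds for singular `A` as well: block elimination
proves it after multiplication by `det A` (`det_mul_det_bordered`), and that factor is cancelled
for the generic matrix `X + A` over `R[X]`, whose determinant is a monic polynomial in `X`.
-/

open MeasureTheory

open Matrix Polynomial in
/-- Multiplying the bordered matrix on the right by `[[1, -adj(A) b], [0, det A]]` clears its upper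
right block and leaves `d det A - c · adj(A) b` in the corner. -/
theorem det_mul_det_bordered {R : Type*} [CommRing R] {n : Type*} [Fintype n] [DecidableEq n]
    (A : Matrix n n R) (b c : n → R) (d : R) :
    (fromBlocks A (replicateCol (Fin 1) b) (replicateRow (Fin 1) c) (of fun _ _ => d)).det * A.det
      = (d * A.det - c ⬝ᵥ (A.adjugate *ᵥ b)) * A.det := by
  have h : fromBlocks A (replicateCol (Fin 1) b) (replicateRow (Fin 1) c) (of fun _ _ => d) *
      fromBlocks 1 (replicateCol (Fin 1) (-(A.adjugate *ᵥ b))) 0 (of fun _ _ => A.det)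
      = fromBlocks A 0 (replicateRow (Fin 1) c)
        (of fun _ _ => d * A.det - c ⬝ᵥ (A.adjugate *ᵥ b)) := by
    rw [fromBlocks_multiply]
    congr 1
    · simp
    · ext i j
      have : (A *ᵥ (A.adjugate *ᵥ b)) i = A.det * b i := by
        rw [mulVec_mulVec, mul_adjugate]; simp [smul_mulVec]
      have h2 : (A * replicateCol (Fin 1) (-(A.adjugate *ᵥ b))) i j
          = -(A *ᵥ (A.adjugate *ᵥ b)) i := by
        rw [← replicateCol_mulVec, mulVec_neg]; simp
      rw [Matrix.add_apply, h2, this]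
      simp [Matrix.mul_apply]
      ring
    · simp
    · ext i j
      simp [Matrix.mul_apply, dotProduct]
      ring
  have h' := congrArg det h
  rw [det_mul, det_fromBlocks_zero₂₁, det_fromBlocks_zero₁₂] at h'
  simp only [det_one, one_mul, det_unique, of_apply] at h'
  rw [h', mul_comm]

open Matrix Polynomial in
/-- Expansion of a bordered determinant in terms of the adjugate, for arbitrary `A`. -/
theorem det_bordered {R : Type*} [CommRing R] {n : Type*} [Fintype n] [DecidableEq n]
    (A : Matrix n n R) (b c : n → R) (d : R) :
    (fromBlocks A (replicateCol (Fin 1) b) (replicateRow (Fin 1) c) (of fun _ _ => d)).det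
      = d * A.det - c ⬝ᵥ (A.adjugate *ᵥ b) := by
  -- The generic matrix `X + A` is the characteristic matrix of `-A`; `X = 0` recovers `A`.
  have key := det_mul_det_bordered (charmatrix (-A)) (fun i => C (b i)) (fun i => C (c i)) (C d)
  have hreg : IsRegular (charmatrix (-A)).det := (charpoly_monic (-A)).isRegular
  have key' := congrArg (evalRingHom (0 : R)) (hreg.right key)
  have hA : (evalRingHom (0 : R)).mapMatrix (charmatrix (-A)) = A := by
    ext i j
    by_cases hij : i = j <;> simp [hij]
  have hadj : ∀ i j, eval 0 ((charmatrix (-A)).adjugate i j) = A.adjugate i j := fun i j => by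
    have := (evalRingHom (0 : R)).map_adjugate (charmatrix (-A))
    rw [hA] at this
    exact congrFun (congrFun this i) j
  rw [RingHom.map_det, map_sub, map_mul, RingHom.map_det, hA] at key'
  convert key' using 2
  · ext (i | i) (j | j)
    · exact (congrFun (congrFun hA i) j).symm
    all_goals simp
  · simp
  · simp [dotProduct, mulVec, eval_finsetSum, hadj]

/-- Verbaarschot's reproducing-kernel integration lemma: integrating out the last variable
of the `(m+1)×(m+1)` kernel determinant produces `(∫K(z,z)dμ − m)` times the `m×m` one.
(Here `m + 1` plays the role of `n ≥ 2` in the statement, so `∫K − m = ∫K − n + 1`.) -/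
theorem stmt16 (μ : Measure ℝ) (K : ℝ → ℝ → ℝ)
    (hKmeas : Measurable (Function.uncurry K))
    (hKsymm : ∀ x y, K x y = K y x)
    (hrepInt : ∀ x z, Integrable (fun y => K x y * K y z) μ)
    (hrep : ∀ x z, ∫ y, K x y * K y z ∂μ = K x z)
    (hdiag : Integrable (fun z => K z z) μ)
    (m : ℕ) (hm : 1 ≤ m) (z : Fin m → ℝ) :
    ∫ w, Matrix.det (Matrix.of fun i j : Fin (m + 1) =>
        K ((Fin.snoc z w : Fin (m + 1) → ℝ) i) ((Fin.snoc z w : Fin (m + 1) → ℝ) j)) ∂μ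
      = ((∫ x, K x x ∂μ) - m) *
          Matrix.det (Matrix.of fun i j : Fin m => K (z i) (z j)) := by
  set A : Matrix (Fin m) (Fin m) ℝ := Matrix.of fun i j : Fin m => K (z i) (z j) with hA
  have hdet : ∀ w, Matrix.det (Matrix.of fun i j : Fin (m + 1) =>
        K ((Fin.snoc z w : Fin (m + 1) → ℝ) i) ((Fin.snoc z w : Fin (m + 1) → ℝ) j))
      = K w w * A.det - ∑ i, ∑ j, A.adjugate i j * (K (z j) w * K w (z i)) := by
    intro w
    have hb := det_bordered A (fun i => K (z i) w) (fun i => K w (z i)) (K w w)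
    rw [← Matrix.det_submatrix_equiv_self (finSumFinEquiv (m := m) (n := 1))]
    refine Eq.trans ?_ (hb.trans ?_)
    · congr 1
      have hl : ∀ i : Fin m, (Fin.snoc z w : Fin (m + 1) → ℝ) (Fin.castAdd 1 i) = z i :=
        fun i => Fin.snoc_castSucc (α := fun _ => ℝ) w z i
      have hr : ∀ i : Fin 1, (Fin.snoc z w : Fin (m + 1) → ℝ) (Fin.natAdd m i) = w := by
        intro i
        rw [Subsingleton.elim i 0]
        exact Fin.snoc_last (α := fun _ => ℝ) w z
      ext (i | i) (j | j) <;>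
        simp only [Matrix.submatrix_apply, Matrix.of_apply, finSumFinEquiv_apply_left,
          finSumFinEquiv_apply_right, hl, hr, Matrix.fromBlocks_apply₁₁,
          Matrix.fromBlocks_apply₁₂, Matrix.fromBlocks_apply₂₁, Matrix.fromBlocks_apply₂₂,
          Matrix.replicateCol_apply, Matrix.replicateRow_apply, hA]
    · simp only [dotProduct, Matrix.mulVec, Finset.mul_sum]
      congr 1
      refine Finset.sum_congr rfl fun i _ => Finset.sum_congr rfl fun j _ => ?_
      ring
  have hint : ∀ i j, Integrable (fun w => A.adjugate i j * (K (z j) w * K w (z i))) μ :=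
    fun i j => (hrepInt _ _).const_mul _
  have htr : ∑ i, ∑ j, A.adjugate i j * K (z j) (z i) = m * A.det := by
    have h : (A.adjugate * A).trace = m * A.det := by
      rw [Matrix.adjugate_mul, Matrix.trace_smul, Matrix.trace_one]
      simp [mul_comm]
    rw [← h]
    simp [Matrix.trace, Matrix.mul_apply, hA]
  simp_rw [hdet]
  rw [integral_sub (hdiag.mul_const _)
    (integrable_finsetSum _ fun i _ => integrable_finsetSum _ fun j _ => hint i j),
    integral_mul_const, integral_finsetSum _ fun i _ => integrable_finsetSum _ fun j _ => hint i j]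
  simp_rw [fun i => integral_finsetSum (μ := μ) Finset.univ fun j _ => hint i j,
    integral_const_mul, hrep]
  rw [htr]
  ring
end
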